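/- Let 0 < α ≤ 1 and 0 < d < π/2, assume hypotheses (H_DE,α,d), and for each positive integer N let h = log(2dN/α)/N. Let u ∈ C([a,b]) satisfy u(t) = g(t) + ∫_a^t k(t,s)u(s) ds for all t ∈ [a,b]. Then there exists a positive integer N₀ such that for every N ≥ N₀ the coefficient matrix I_n − V_n^DE is invertible, and there exists a constant C independent of N such that for all N ≥ N₀, max_{t∈[a,b]} |u(t) − v_N^DE(t)| ≤ C·e^{−πdN/log(2dN/α)}, where v_N^DE is the DE-Sinc-collocation solution. -/

import Mathlib

/-!
The estimate rests on four facts.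

* **Analytic continuation of the solution** (`DESetup.exists_extension`). After the change of
  variables `t = ψ(x)` the equation becomes `U(x) = G(x) + ∫_{-∞}^x K(x,y) U(y) ψ'(y) dy`. Writing
  the integral as one over `(-∞,0]` plus a Volterra operator along the segment `[0,z]`, the equation
  makes sense on the strip `D_d`. The Volterra operator is a contraction there in the weighted
  supremum norm with weight `exp(λ(arctan|Re z| + |Im z|))`, for `λ` large, so a Neumann series
  gives a bounded analytic solution on `D_d` (`VolData.exists_fix`); uniqueness on the real line
  identifies it with `u ∘ ψ`. The Hölder bounds on the data, together with
  `|ψ(z) - a|, |b - ψ(z)|, |ψ'(z)| ≲ exp(-κ cosh(Re z))`, `κ = (π/2) cos d`, make `U` approach `u(a)`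
  and `u(b)` double exponentially.

* **Sinc interpolation and indefinite integration** (`DecayOn.interp`, `DecayOn.quad`). For a
  function that decays double exponentially on `D_d`, Cauchy's formula on the lines `Im w = ±c`
  reduces the interpolation error to that of the Cauchy kernel `1/(w - x)`, which the partial fraction
  expansion of `1/sin` evaluates as `sin(πx/h) / ((w - x) sin(πw/h)) = O(exp(-πc/h))`; then `c → d`.
  For indefinite integration, one integration by parts in `x` gains another factor `h`.

* **Stability** (`DESetup.stability`). Since `δ_m^{(-1)}` differs from the Heaviside step by
  `O(1/(1+|m|))`, the matrix `V_n` is a strictly lower triangular matrix with summable column bounds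
  plus a perturbation of maximum norm `O(h √N)`. A discrete Gronwall inequality therefore bounds
  `(I - V_n)⁻¹` uniformly once `h √N` is small. The nodal error of the Nyström solution is then at most
  a constant times the quadrature error, `O(h exp(-πd/h) + exp(-(κ/2) cosh(Nh)))`
  (`DESetup.nodal_error`).

* **Projection** (`DESetup.proj_error`). Applying `P_N` costs the interpolation error of `u` and
  multiplies the nodal error by the Lebesgue constant, for which Cauchy–Schwarz gives `O(√N)`. This
  crude factor is harmless because the nodal error carries an `h` and `h √N → 0`.

With `h = log(2dN/α)/N` one has `cosh(Nh) ≥ dN/α`, so every truncation term is `O(exp(-cN))` up to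
powers of `N`, hence negligible against `exp(-πd/h)` (`eventually_mesh`).
-/

namespace SincVolterra

noncomputable section

/-- The sine integral `Si(x) = ∫₀ˣ (sin τ)/τ dτ`. -/
def Si (x : ℝ) : ℝ := ∫ τ in (0:ℝ)..x, Real.sin τ / τ

/-- The Sinc function `S(j,h)(x)`. -/
def sincF (j : ℤ) (h x : ℝ) : ℝ :=
  if x = (j : ℝ) * h then 1
  else Real.sin (Real.pi * (x - (j : ℝ) * h) / h) / (Real.pi * (x - (j : ℝ) * h) / h)

/-- `J(j,h)(x) = h (1/2 + (1/π) Si(π(x - jh)/h))`. -/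
def Jfun (j : ℤ) (h x : ℝ) : ℝ :=
  h * (1/2 + (1/Real.pi) * Si (Real.pi * (x - (j : ℝ) * h) / h))

/-- The tanh (SE) transformation. -/
def psiSE (a b x : ℝ) : ℝ := (b - a)/2 * Real.tanh (x/2) + (b + a)/2

/-- The inverse of the SE transformation. -/
def phiSE (a b t : ℝ) : ℝ := Real.log ((t - a)/(b - t))

/-- The double-exponential (DE) transformation. -/
def psiDE (a b x : ℝ) : ℝ := (b - a)/2 * Real.tanh (Real.pi/2 * Real.sinh x) + (b + a)/2

/-- The inverse of the DE transformation. -/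
def phiDE (a b t : ℝ) : ℝ := Real.arsinh (1/Real.pi * Real.log ((t - a)/(b - t)))

/-- The SE transformation as a complex map. -/
def psiSEC (a b : ℝ) (z : ℂ) : ℂ :=
  (((b : ℂ) - (a : ℂ))/2) * Complex.tanh (z/2) + ((b : ℂ) + (a : ℂ))/2

/-- The DE transformation as a complex map. -/
def psiDEC (a b : ℝ) (z : ℂ) : ℂ :=
  (((b : ℂ) - (a : ℂ))/2) * Complex.tanh (((Real.pi : ℂ))/2 * Complex.sinh z) + ((b : ℂ) + (a : ℂ))/2

/-- The strip `D_d = {ζ : |Im ζ| < d}`. -/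
def Dstrip (d : ℝ) : Set ℂ := {z : ℂ | |z.im| < d}

/-- `D = ψ^SE(D_d)`. -/
def DSE (a b d : ℝ) : Set ℂ := psiSEC a b '' Dstrip d

def omA (a b t : ℝ) : ℝ := (b - t)/(b - a)

def omB (a b t : ℝ) : ℝ := (t - a)/(b - a)

/-- The SE collocation points `t_j^SE = ψ^SE(jh)`. -/
def tSE (a b h : ℝ) (j : ℤ) : ℝ := psiSE a b ((j : ℝ) * h)

/-- The DE collocation points `t_j^DE = ψ^DE(jh)`. -/
def tDE (a b h : ℝ) (j : ℤ) : ℝ := psiDE a b ((j : ℝ) * h)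

/-- `δ_m^{(-1)} = 1/2 + (1/π) Si(π m)`. -/
def deltaM (m : ℤ) : ℝ := 1/2 + (1/Real.pi) * Si (Real.pi * (m : ℝ))

/-- `J(j,h)(φ^SE(t))`, extended continuously to `t = a` (value 0) and `t = b` (value h). -/
def JSEext (a b h : ℝ) (j : ℤ) (t : ℝ) : ℝ :=
  if t ≤ a then 0 else if b ≤ t then h else Jfun j h (phiSE a b t)

/-- `J(j,h)(φ^DE(t))`, extended continuously to `t = a` (value 0) and `t = b` (value h). -/
def JDEext (a b h : ℝ) (j : ℤ) (t : ℝ) : ℝ :=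
  if t ≤ a then 0 else if b ≤ t then h else Jfun j h (phiDE a b t)

/-- The operator `V_N^SE`, with the continuous extension to `t = a, b` built in. -/
def VNSE (a b h : ℝ) (N : ℕ) (k : ℝ → ℝ → ℂ) (f : ℝ → ℂ) (t : ℝ) : ℂ :=
  ∑ j ∈ Finset.Icc (-(N:ℤ)) (N:ℤ),
    k t (tSE a b h j) * f (tSE a b h j) * ((deriv (psiSE a b) ((j : ℝ) * h) : ℝ) : ℂ)
      * ((JSEext a b h j t : ℝ) : ℂ)

/-- The operator `V_N^DE`, with the continuous extension to `t = a, b` built in. -/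
def VNDE (a b h : ℝ) (N : ℕ) (k : ℝ → ℝ → ℂ) (f : ℝ → ℂ) (t : ℝ) : ℂ :=
  ∑ j ∈ Finset.Icc (-(N:ℤ)) (N:ℤ),
    k t (tDE a b h j) * f (tDE a b h j) * ((deriv (psiDE a b) ((j : ℝ) * h) : ℝ) : ℂ)
      * ((JDEext a b h j t : ℝ) : ℂ)

/-- The generalized SE-Sinc approximation operator `P_N^SE`. -/
def PNSE (a b h : ℝ) (N : ℕ) (f : ℝ → ℂ) (t : ℝ) : ℂ :=
  if t ≤ a then f (tSE a b h (-(N:ℤ)))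
  else if b ≤ t then f (tSE a b h (N:ℤ))
  else f (tSE a b h (-(N:ℤ))) * ((omA a b t : ℝ) : ℂ) + f (tSE a b h (N:ℤ)) * ((omB a b t : ℝ) : ℂ)
    + ∑ j ∈ Finset.Icc (-(N:ℤ)) (N:ℤ),
        (f (tSE a b h j) - f (tSE a b h (-(N:ℤ))) * ((omA a b (tSE a b h j) : ℝ) : ℂ)
          - f (tSE a b h (N:ℤ)) * ((omB a b (tSE a b h j) : ℝ) : ℂ))
          * ((sincF j h (phiSE a b t) : ℝ) : ℂ)

/-- The generalized DE-Sinc approximation operator `P_N^DE`. -/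
def PNDE (a b h : ℝ) (N : ℕ) (f : ℝ → ℂ) (t : ℝ) : ℂ :=
  if t ≤ a then f (tDE a b h (-(N:ℤ)))
  else if b ≤ t then f (tDE a b h (N:ℤ))
  else f (tDE a b h (-(N:ℤ))) * ((omA a b t : ℝ) : ℂ) + f (tDE a b h (N:ℤ)) * ((omB a b t : ℝ) : ℂ)
    + ∑ j ∈ Finset.Icc (-(N:ℤ)) (N:ℤ),
        (f (tDE a b h j) - f (tDE a b h (-(N:ℤ))) * ((omA a b (tDE a b h j) : ℝ) : ℂ)
          - f (tDE a b h (N:ℤ)) * ((omB a b (tDE a b h j) : ℝ) : ℂ))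
          * ((sincF j h (phiDE a b t) : ℝ) : ℂ)

/-- `Δ_N = ω_a(t_{-N})ω_b(t_N) - ω_b(t_{-N})ω_a(t_N)`. -/
def DeltaN (a b h : ℝ) (N : ℕ) : ℝ :=
  omA a b (tSE a b h (-(N:ℤ))) * omB a b (tSE a b h (N:ℤ))
    - omB a b (tSE a b h (-(N:ℤ))) * omA a b (tSE a b h (N:ℤ))

def betaN (a b h : ℝ) (N : ℕ) (f : ℝ → ℂ) : ℂ :=
  (f (tSE a b h (-(N:ℤ))) * ((omB a b (tSE a b h (N:ℤ)) : ℝ) : ℂ)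
    - f (tSE a b h (N:ℤ)) * ((omB a b (tSE a b h (-(N:ℤ))) : ℝ) : ℂ)) / ((DeltaN a b h N : ℝ) : ℂ)

def gammaN (a b h : ℝ) (N : ℕ) (f : ℝ → ℂ) : ℂ :=
  (f (tSE a b h (N:ℤ)) * ((omA a b (tSE a b h (-(N:ℤ))) : ℝ) : ℂ)
    - f (tSE a b h (-(N:ℤ))) * ((omA a b (tSE a b h (N:ℤ)) : ℝ) : ℂ)) / ((DeltaN a b h N : ℝ) : ℂ)

/-- The Rashidinia–Zarebnia interpolation operator `P_N^RZ`. -/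
def PNRZ (a b h : ℝ) (N : ℕ) (f : ℝ → ℂ) (t : ℝ) : ℂ :=
  if t ≤ a then betaN a b h N f
  else if b ≤ t then gammaN a b h N f
  else betaN a b h N f * ((omA a b t : ℝ) : ℂ) + gammaN a b h N f * ((omB a b t : ℝ) : ℂ)
    + ∑ j ∈ Finset.Icc (-(N:ℤ)+1) ((N:ℤ)-1),
        (f (tSE a b h j) - betaN a b h N f * ((omA a b (tSE a b h j) : ℝ) : ℂ)
          - gammaN a b h N f * ((omB a b (tSE a b h j) : ℝ) : ℂ))
          * ((sincF j h (phiSE a b t) : ℝ) : ℂ)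

/-- Reindexing `Fin (2N+1)` as `{-N, …, N}`. -/
def zidx (N : ℕ) (i : Fin (2*N+1)) : ℤ := ((i : ℕ) : ℤ) - (N : ℤ)

/-- The matrix `V_n^SE`. -/
def VnSE (a b h : ℝ) (N : ℕ) (k : ℝ → ℝ → ℂ) : Matrix (Fin (2*N+1)) (Fin (2*N+1)) ℂ :=
  Matrix.of fun i j =>
    k (tSE a b h (zidx N i)) (tSE a b h (zidx N j))
      * ((deriv (psiSE a b) ((zidx N j : ℝ) * h) : ℝ) : ℂ) * ((h : ℝ) : ℂ)
      * ((deltaM (zidx N i - zidx N j) : ℝ) : ℂ)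

/-- The matrix `V_n^DE`. -/
def VnDE (a b h : ℝ) (N : ℕ) (k : ℝ → ℝ → ℂ) : Matrix (Fin (2*N+1)) (Fin (2*N+1)) ℂ :=
  Matrix.of fun i j =>
    k (tDE a b h (zidx N i)) (tDE a b h (zidx N j))
      * ((deriv (psiDE a b) ((zidx N j : ℝ) * h) : ℝ) : ℂ) * ((h : ℝ) : ℂ)
      * ((deltaM (zidx N i - zidx N j) : ℝ) : ℂ)

/-- The right-hand-side vector `g_n^SE`. -/
def gnSE (a b h : ℝ) (N : ℕ) (g : ℝ → ℂ) : Fin (2*N+1) → ℂ := fun i => g (tSE a b h (zidx N i))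

/-- The right-hand-side vector `g_n^DE`. -/
def gnDE (a b h : ℝ) (N : ℕ) (g : ℝ → ℂ) : Fin (2*N+1) → ℂ := fun i => g (tDE a b h (zidx N i))

/-- The matrix `E_n^RZ`. -/
def EnRZ (a b h : ℝ) (N : ℕ) : Matrix (Fin (2*N+1)) (Fin (2*N+1)) ℂ :=
  Matrix.of fun i j =>
    if (j : ℕ) = 0 then ((omA a b (tSE a b h (zidx N i)) : ℝ) : ℂ)
    else if (j : ℕ) = 2*N then ((omB a b (tSE a b h (zidx N i)) : ℝ) : ℂ)
    else if i = j then 1 else 0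

/-- The matrix `V_n^RZ`. -/
def VnRZ (a b h : ℝ) (N : ℕ) (k : ℝ → ℝ → ℂ) : Matrix (Fin (2*N+1)) (Fin (2*N+1)) ℂ :=
  Matrix.of fun i j =>
    if (j : ℕ) = 0 then VNSE a b h N k (fun t => ((omA a b t : ℝ) : ℂ)) (tSE a b h (zidx N i))
    else if (j : ℕ) = 2*N then VNSE a b h N k (fun t => ((omB a b t : ℝ) : ℂ)) (tSE a b h (zidx N i))
    else k (tSE a b h (zidx N i)) (tSE a b h (zidx N j))
      * ((deriv (psiSE a b) ((zidx N j : ℝ) * h) : ℝ) : ℂ) * ((h : ℝ) : ℂ)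
      * ((deltaM (zidx N i - zidx N j) : ℝ) : ℂ)

/-- The SE-Sinc-Nyström solution `u_N^SE` built from a solution vector `u` of the
linear system, with the continuous extension to the endpoints built in. -/
def uNSEf (a b h : ℝ) (N : ℕ) (k : ℝ → ℝ → ℂ) (g : ℝ → ℂ) (u : Fin (2*N+1) → ℂ) (t : ℝ) : ℂ :=
  g t + ∑ i : Fin (2*N+1),
    k t (tSE a b h (zidx N i)) * u i * ((deriv (psiSE a b) ((zidx N i : ℝ) * h) : ℝ) : ℂ)
      * ((JSEext a b h (zidx N i) t : ℝ) : ℂ)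

/-- The DE-Sinc-Nyström solution `u_N^DE` built from a solution vector `u` of the
linear system, with the continuous extension to the endpoints built in. -/
def uNDEf (a b h : ℝ) (N : ℕ) (k : ℝ → ℝ → ℂ) (g : ℝ → ℂ) (u : Fin (2*N+1) → ℂ) (t : ℝ) : ℂ :=
  g t + ∑ i : Fin (2*N+1),
    k t (tDE a b h (zidx N i)) * u i * ((deriv (psiDE a b) ((zidx N i : ℝ) * h) : ℝ) : ℂ)
      * ((JDEext a b h (zidx N i) t : ℝ) : ℂ)

/-- The Rashidinia–Zarebnia SE-Sinc-collocation solution `w_N^RZ` built from a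
coefficient vector `c`, with the continuous extension to the endpoints built in. -/
def wRZf (a b h : ℝ) (N : ℕ) (c : Fin (2*N+1) → ℂ) (t : ℝ) : ℂ :=
  if t ≤ a then c ⟨0, by omega⟩
  else if b ≤ t then c ⟨2*N, by omega⟩
  else c ⟨0, by omega⟩ * ((omA a b t : ℝ) : ℂ) + c ⟨2*N, by omega⟩ * ((omB a b t : ℝ) : ℂ)
    + ∑ j ∈ Finset.univ.filter (fun j : Fin (2*N+1) => (j : ℕ) ≠ 0 ∧ (j : ℕ) ≠ 2*N),
        c j * ((sincF (zidx N j) h (phiSE a b t) : ℝ) : ℂ)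

/-- The SE mesh size `h = √(πd/(αN))`. -/
def hstepSE (α d : ℝ) (N : ℕ) : ℝ := Real.sqrt (Real.pi * d / (α * N))

/-- The DE mesh size `h = log(2dN/α)/N`. -/
def hstepDE (α d : ℝ) (N : ℕ) : ℝ := Real.log (2*d*N/α) / N

open MeasureTheory Set Filter Topology

/-! ### The sine integral -/

lemma integral_exp_neg_mul_Ioi_zero {x : ℝ} (hx : 0 < x) :
    ∫ y in Ioi (0:ℝ), Real.exp (-(x * y)) = 1 / x := by
  have := integral_exp_mul_Ioi (a := -x) (by linarith) 0
  simp only [mul_zero, Real.exp_zero] at this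
  simp only [← neg_mul]
  rw [this]; field_simp

lemma integrableOn_exp_neg_mul_Ioi_zero {x : ℝ} (hx : 0 < x) :
    IntegrableOn (fun y => Real.exp (-(x * y))) (Ioi (0:ℝ)) := by
  have := integrableOn_exp_mul_Ioi (a := -x) (by linarith) 0
  simpa only [← neg_mul] using this

lemma integral_exp_neg_mul_sin (y T : ℝ) :
    ∫ x in (0:ℝ)..T, Real.exp (-(x * y)) * Real.sin x =
      1 / (1 + y ^ 2) - Real.exp (-(T * y)) * (Real.cos T + y * Real.sin T) / (1 + y ^ 2) := by
  have hy : (1 + y ^ 2) ≠ 0 := by positivity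
  have hder : ∀ x : ℝ, HasDerivAt
      (fun x => -(Real.exp (-(x * y)) * (Real.cos x + y * Real.sin x) / (1 + y ^ 2)))
      (Real.exp (-(x * y)) * Real.sin x) x := by
    intro x
    have h1 : HasDerivAt (fun x : ℝ => Real.exp (-(x * y))) (Real.exp (-(x * y)) * (-(1 * y))) x :=
      (((hasDerivAt_id x).mul_const y).neg).exp
    have h2 : HasDerivAt (fun x : ℝ => Real.cos x + y * Real.sin x)
        (-Real.sin x + y * Real.cos x) x :=
      (Real.hasDerivAt_cos x).add ((Real.hasDerivAt_sin x).const_mul y)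
    refine ((h1.mul h2).div_const (1 + y ^ 2)).neg.congr_deriv ?_
    field_simp
    ring
  rw [intervalIntegral.integral_eq_sub_of_hasDerivAt (fun x _ => hder x)]
  · simp
    ring
  · exact (Continuous.intervalIntegrable (by fun_prop) _ _)

/-- The Dirichlet integral with its rate of convergence, from writing `1/x` as a Laplace
transform and exchanging the order of integration. -/
lemma abs_Si_sub_le {T : ℝ} (hT : 0 < T) : |Si T - Real.pi / 2| ≤ 2 / T := by
  have hint : Integrable (Function.uncurry fun (x y : ℝ) => Real.exp (-(x * y)) * Real.sin x)
      ((volume.restrict (Ioc 0 T)).prod (volume.restrict (Ioi (0:ℝ)))) := by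
    rw [integrable_prod_iff (Continuous.aestronglyMeasurable (by fun_prop))]
    constructor
    · filter_upwards [ae_restrict_mem measurableSet_Ioc] with x hx
      exact (integrableOn_exp_neg_mul_Ioi_zero hx.1).mul_const (Real.sin x)
    · have : Integrable (fun _ : ℝ => (1:ℝ)) (volume.restrict (Ioc 0 T)) := by
        simp
      refine this.mono' ?_ ?_
      · exact (AEStronglyMeasurable.integral_prod_right'
          (f := fun p : ℝ × ℝ => ‖Real.exp (-(p.1 * p.2)) * Real.sin p.1‖)
          (Continuous.aestronglyMeasurable (by fun_prop)))
      · filter_upwards [ae_restrict_mem measurableSet_Ioc] with x hx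
        have hx0 : 0 < x := hx.1
        have : ∀ y, ‖Function.uncurry (fun (x y : ℝ) => Real.exp (-(x * y)) * Real.sin x) (x, y)‖
            = Real.exp (-(x * y)) * |Real.sin x| := by
          intro y; simp [Real.norm_eq_abs]
        simp_rw [this]
        rw [integral_mul_const, integral_exp_neg_mul_Ioi_zero hx0, Real.norm_eq_abs, abs_mul,
          abs_abs, abs_of_pos (by positivity : (0:ℝ) < 1 / x)]
        have := Real.abs_sin_le_abs (x := x)
        rw [abs_of_pos hx0] at this
        rw [one_div_mul_eq_div, div_le_one hx0]
        exact this
  have hswap := integral_integral_swap hint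
  have hL : ∫ x in Ioc 0 T, ∫ y in Ioi (0:ℝ), Real.exp (-(x * y)) * Real.sin x = Si T := by
    unfold Si
    rw [intervalIntegral.integral_of_le hT.le]
    refine setIntegral_congr_fun measurableSet_Ioc (fun x hx => ?_)
    rw [integral_mul_const, integral_exp_neg_mul_Ioi_zero hx.1]
    ring
  have hR : ∀ y : ℝ, ∫ x in Ioc 0 T, Real.exp (-(x * y)) * Real.sin x =
      1 / (1 + y ^ 2) - Real.exp (-(T * y)) * (Real.cos T + y * Real.sin T) / (1 + y ^ 2) := by
    intro y
    rw [← intervalIntegral.integral_of_le hT.le, integral_exp_neg_mul_sin]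
  rw [hL] at hswap
  simp_rw [hR] at hswap
  have hb : ∀ y ∈ Ioi (0:ℝ),
      ‖Real.exp (-(T * y)) * (Real.cos T + y * Real.sin T) / (1 + y ^ 2)‖
        ≤ 2 * Real.exp (-(T * y)) := by
    intro y hy
    have hy : 0 < y := hy
    rw [Real.norm_eq_abs, abs_div, abs_mul, abs_of_pos (Real.exp_pos _),
      abs_of_pos (by positivity : 0 < 1 + y ^ 2), div_le_iff₀ (by positivity)]
    have h1 : |Real.cos T + y * Real.sin T| ≤ 1 + y := by
      refine (abs_add_le _ _).trans ?_
      rw [abs_mul, abs_of_pos hy]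
      have := Real.abs_cos_le_one T
      have := Real.abs_sin_le_one T
      nlinarith
    have h2 : 1 + y ≤ 2 * (1 + y ^ 2) := by nlinarith [sq_nonneg (y - 1)]
    nlinarith [Real.exp_pos (-(T * y))]
  have hi1 : IntegrableOn (fun y : ℝ => 1 / (1 + y ^ 2)) (Ioi 0) := by
    simpa using integrable_inv_one_add_sq.integrableOn
  have hi2 : IntegrableOn (fun y : ℝ =>
      Real.exp (-(T * y)) * (Real.cos T + y * Real.sin T) / (1 + y ^ 2)) (Ioi 0) := by
    refine Integrable.mono' ((integrableOn_exp_neg_mul_Ioi_zero hT).const_mul 2) ?_ ?_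
    · exact Continuous.aestronglyMeasurable
        (Continuous.div (by fun_prop) (by fun_prop) (fun y => by positivity))
    · filter_upwards [ae_restrict_mem measurableSet_Ioi] with y hy using hb y hy
  rw [integral_sub hi1 hi2] at hswap
  have hpi : ∫ y in Ioi (0:ℝ), 1 / (1 + y ^ 2) = Real.pi / 2 := by
    simp
  rw [hswap, hpi, sub_sub_cancel_left, abs_neg]
  calc |∫ y in Ioi (0:ℝ), Real.exp (-(T * y)) * (Real.cos T + y * Real.sin T) / (1 + y ^ 2)|
      ≤ ∫ y in Ioi (0:ℝ), 2 * Real.exp (-(T * y)) := by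
        rw [← Real.norm_eq_abs]
        refine norm_integral_le_of_norm_le ((integrableOn_exp_neg_mul_Ioi_zero hT).const_mul 2) ?_
        filter_upwards [ae_restrict_mem measurableSet_Ioi] with y hy using hb y hy
    _ = 2 / T := by
        rw [integral_const_mul, integral_exp_neg_mul_Ioi_zero hT]; ring

lemma sin_div_eq_sinc_ae : (fun τ : ℝ => Real.sin τ / τ) =ᵐ[volume] Real.sinc := by
  have : ∀ᵐ τ : ℝ, τ ≠ 0 := by
    simp [ae_iff]
  filter_upwards [this] with τ hτ
  rw [Real.sinc_of_ne_zero hτ]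

lemma Si_eq_sinc (x : ℝ) : Si x = ∫ τ in (0:ℝ)..x, Real.sinc τ := by
  unfold Si
  refine intervalIntegral.integral_congr_ae ?_
  filter_upwards [sin_div_eq_sinc_ae] with τ hτ _ using hτ

lemma Si_neg (x : ℝ) : Si (-x) = - Si x := by
  rw [Si_eq_sinc, Si_eq_sinc]
  have := intervalIntegral.integral_comp_neg (a := 0) (b := x) (fun τ => Real.sinc τ)
  simp only [Real.sinc_neg, neg_zero] at this
  rw [this, intervalIntegral.integral_symm]

lemma hasDerivAt_Si (x : ℝ) : HasDerivAt Si (Real.sinc x) x := by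
  have : Si = fun x => ∫ τ in (0:ℝ)..x, Real.sinc τ := funext Si_eq_sinc
  rw [this]
  exact intervalIntegral.integral_hasDerivAt_right
    (Real.continuous_sinc.intervalIntegrable _ _)
    Real.continuous_sinc.aestronglyMeasurable.stronglyMeasurableAtFilter
    Real.continuous_sinc.continuousAt

lemma abs_Si_le (x : ℝ) : |Si x| ≤ 4 := by
  have key : ∀ x : ℝ, 0 ≤ x → |Si x| ≤ 4 := by
    intro x hx
    rcases le_total x 1 with h | h
    · rw [Si_eq_sinc, ← Real.norm_eq_abs]
      have := intervalIntegral.norm_integral_le_of_norm_le_const (a := 0) (b := x) (C := 1)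
        (f := Real.sinc) (fun τ _ => by rw [Real.norm_eq_abs]; exact Real.abs_sinc_le_one τ)
      rw [sub_zero, abs_of_nonneg hx] at this
      linarith
    · have h1 := abs_Si_sub_le (T := x) (by linarith)
      have h2 : 2 / x ≤ 2 := by rw [div_le_iff₀ (by linarith)]; linarith
      have := abs_le.1 (h1.trans h2)
      have := Real.pi_gt_three
      have := Real.pi_le_four
      rw [abs_le]; constructor <;> linarith
  rcases le_total 0 x with h | h
  · exact key x h
  · have := key (-x) (by linarith)
    rwa [Si_neg, abs_neg] at this

/-- `deltaM m` is the Heaviside step up to an error of order `1/|m|`. -/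
lemma abs_deltaM_sub_le (m : ℤ) :
    |deltaM m - (if 0 < m then 1 else 0)| ≤ 2 / (1 + |(m:ℝ)|) := by
  have hpi := Real.pi_gt_three
  have key : ∀ m : ℤ, 0 < m → |deltaM m - 1| ≤ 2 / (1 + |(m:ℝ)|) := by
    intro m hm
    have hm1 : (1:ℝ) ≤ m := by exact_mod_cast hm
    have h1 := abs_Si_sub_le (T := Real.pi * m) (by positivity)
    have : deltaM m - 1 = (1/Real.pi) * (Si (Real.pi * m) - Real.pi / 2) := by
      unfold deltaM; field_simp; ring
    rw [this, abs_mul, abs_of_pos (by positivity), abs_of_pos (by linarith : (0:ℝ) < m)]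
    calc 1 / Real.pi * |Si (Real.pi * m) - Real.pi / 2| ≤ 1 / Real.pi * (2 / (Real.pi * m)) := by
          gcongr
      _ ≤ 2 / (1 + m) := by
          rw [div_mul_div_comm, div_le_div_iff₀ (by positivity) (by positivity)]
          have : 9 ≤ Real.pi * Real.pi := by nlinarith
          nlinarith [mul_nonneg (by linarith : (0:ℝ) ≤ m) (sub_nonneg.2 this)]
  rcases lt_trichotomy m 0 with h | h | h
  · have h2 := key (-m) (by omega)
    rw [if_neg (by omega), sub_zero]
    have : deltaM m = - (deltaM (-m) - 1) := by
      unfold deltaM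
      push_cast
      rw [mul_neg, Si_neg]; ring
    rw [this, abs_neg]
    simpa using h2
  · subst h
    simp [deltaM, Si]
    norm_num
  · rw [if_pos h]; exact key m h

lemma abs_Jfun_le (j : ℤ) {h : ℝ} (hh : 0 < h) (x : ℝ) : |Jfun j h x| ≤ 2 * h := by
  unfold Jfun
  have h1 := abs_Si_le (Real.pi * (x - j * h) / h)
  have hpi := Real.pi_gt_three
  rw [abs_mul, abs_of_pos hh, mul_comm]
  gcongr
  refine (abs_add_le _ _).trans ?_
  rw [abs_mul, abs_of_pos (by positivity : 0 < 1 / Real.pi), abs_of_pos (by norm_num : (0:ℝ) < 1/2)]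
  have : 1 / Real.pi * |Si (Real.pi * (x - j * h) / h)| ≤ 1 / 3 * 4 := by gcongr
  linarith

lemma sincF_eq (j : ℤ) {h : ℝ} (hh : 0 < h) (x : ℝ) :
    sincF j h x = Real.sinc (Real.pi * (x - j * h) / h) := by
  unfold sincF
  split_ifs with hx
  · simp [hx]
  · rw [Real.sinc_of_ne_zero]
    have : x - j * h ≠ 0 := sub_ne_zero.2 hx
    have := Real.pi_ne_zero
    positivity

lemma hasDerivAt_Jfun (j : ℤ) {h : ℝ} (hh : 0 < h) (x : ℝ) :
    HasDerivAt (Jfun j h) (sincF j h x) x := by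
  unfold Jfun
  have h1 : HasDerivAt (fun x : ℝ => Real.pi * (x - j * h) / h) (Real.pi * 1 / h) x :=
    (((hasDerivAt_id x).sub_const (j * h)).const_mul Real.pi).div_const h
  have h2 := (((hasDerivAt_Si _).comp x h1).const_mul (1/Real.pi)).const_add (1/2) |>.const_mul h
  refine h2.congr_deriv ?_
  rw [sincF_eq j hh]
  have := Real.pi_ne_zero
  field_simp

lemma tendsto_Jfun_atBot (j : ℤ) {h : ℝ} (hh : 0 < h) :
    Tendsto (Jfun j h) atBot (𝓝 0) := by
  have hSi : Tendsto Si atTop (𝓝 (Real.pi / 2)) := by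
    rw [tendsto_iff_norm_sub_tendsto_zero]
    refine squeeze_zero' (Eventually.of_forall fun _ => norm_nonneg _) ?_
      (tendsto_const_nhds.div_atTop tendsto_id (a := (2:ℝ)))
    filter_upwards [eventually_gt_atTop 0] with T hT
    exact abs_Si_sub_le hT
  have hlin : Tendsto (fun x : ℝ => -(Real.pi * (x - j * h) / h)) atBot atTop := by
    have e : (fun x : ℝ => -(Real.pi * (x - j * h) / h)) =
        fun x : ℝ => (Real.pi / h) * (-x) + Real.pi * j := by
      ext x; field_simp; ring
    rw [e]
    exact tendsto_atTop_add_const_right _ _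
      (Tendsto.const_mul_atTop (by positivity) tendsto_neg_atBot_atTop)
  have h3 := hSi.comp hlin
  have h4 : Tendsto (fun x : ℝ => h * (1/2 - (1/Real.pi) * Si (-(Real.pi * (x - j * h) / h)))) atBot
      (𝓝 (h * (1/2 - (1/Real.pi) * (Real.pi/2)))) :=
    (((h3.const_mul (1/Real.pi)).const_sub (1/2)).const_mul h)
  have e0 : h * (1/2 - (1/Real.pi) * (Real.pi/2)) = 0 := by
    have := Real.pi_ne_zero
    field_simp; ring
  rw [e0] at h4
  refine h4.congr fun x => ?_
  unfold Jfun
  rw [Si_neg]; ring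

/-! ### The double exponential weight and bounds for sums -/

/-- The double exponentially decaying weight `exp(-ε cosh x)`. -/
def dew (ε x : ℝ) : ℝ := Real.exp (-(ε * Real.cosh x))

lemma dew_pos (ε x : ℝ) : 0 < dew ε x := Real.exp_pos _

lemma continuous_dew (ε : ℝ) : Continuous (dew ε) := by
  unfold dew; fun_prop

lemma dew_half_sq (ε x : ℝ) : dew (ε / 2) x * dew (ε / 2) x = dew ε x := by
  unfold dew; rw [← Real.exp_add]; ring_nf

lemma dew_anti {ε ε' : ℝ} (h : ε ≤ ε') (x : ℝ) : dew ε' x ≤ dew ε x := by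
  unfold dew
  have := Real.cosh_pos x
  gcongr

lemma dew_le_one {ε : ℝ} (hε : 0 ≤ ε) (x : ℝ) : dew ε x ≤ 1 := by
  unfold dew
  have := Real.cosh_pos x
  rw [Real.exp_le_one_iff]; nlinarith

lemma dew_le_of_abs_le {ε x y : ℝ} (hε : 0 ≤ ε) (h : |x| ≤ |y|) : dew ε y ≤ dew ε x := by
  unfold dew
  have := Real.cosh_le_cosh.2 h
  gcongr

lemma exp_neg_le_inv {y : ℝ} (hy : 0 < y) : Real.exp (-y) ≤ 1 / y := by
  rw [Real.exp_neg, one_div]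
  exact inv_anti₀ hy (by linarith [Real.add_one_le_exp y])

lemma dew_le_exp {ε : ℝ} (hε : 0 < ε) (x : ℝ) : dew ε x ≤ (2 / ε) * Real.exp (-|x|) := by
  have h1 : Real.exp |x| / 2 ≤ Real.cosh x := by
    rw [← Real.cosh_abs, Real.cosh_eq]
    have := Real.exp_pos (-|x|)
    linarith
  have h0 := Real.exp_pos |x|
  unfold dew
  calc Real.exp (-(ε * Real.cosh x)) ≤ Real.exp (-(ε * (Real.exp |x| / 2))) := by gcongr
    _ ≤ 1 / (ε * (Real.exp |x| / 2)) := exp_neg_le_inv (by positivity)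
    _ = _ := by rw [Real.exp_neg]; field_simp

lemma one_add_sq_le_cosh (x : ℝ) : (1 + x ^ 2) / 4 ≤ Real.cosh x := by
  have h := Real.quadratic_le_exp_of_nonneg (abs_nonneg x)
  rw [← Real.cosh_abs, Real.cosh_eq]
  have h2 : 1 - |x| ≤ Real.exp (-|x|) := by linarith [Real.add_one_le_exp (-|x|)]
  have : |x| ^ 2 = x ^ 2 := sq_abs x
  nlinarith

lemma dew_le_inv {ε : ℝ} (hε : 0 < ε) (x : ℝ) : dew ε x ≤ (4 / ε) * (1 + x ^ 2)⁻¹ := by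
  have h1 := one_add_sq_le_cosh x
  unfold dew
  calc Real.exp (-(ε * Real.cosh x)) ≤ Real.exp (-(ε * ((1 + x ^ 2) / 4))) := by gcongr
    _ ≤ 1 / (ε * ((1 + x ^ 2) / 4)) := exp_neg_le_inv (by positivity)
    _ = _ := by field_simp

lemma integrable_dew {ε : ℝ} (hε : 0 < ε) : Integrable (dew ε) := by
  refine (integrable_inv_one_add_sq.const_mul (4 / ε)).mono'
    (continuous_dew ε).aestronglyMeasurable (Eventually.of_forall fun x => ?_)
  rw [Real.norm_eq_abs, abs_of_pos (dew_pos _ _)]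
  exact dew_le_inv hε x

lemma sum_Icc_symm {E : Type*} [AddCommMonoid E] (g : ℤ → E) (M : ℕ) :
    ∑ j ∈ Finset.Icc (-(M:ℤ)) (M:ℤ), g j =
      g 0 + ∑ n ∈ Finset.range M, (g ((n:ℤ) + 1) + g (-((n:ℤ) + 1))) := by
  induction M with
  | zero => simp
  | succ M ih =>
    have e : Finset.Icc (-((M + 1 : ℕ):ℤ)) ((M + 1 : ℕ):ℤ) =
        insert ((M:ℤ) + 1) (insert (-((M:ℤ) + 1)) (Finset.Icc (-(M:ℤ)) (M:ℤ))) := by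
      ext j; simp only [Finset.mem_Icc, Finset.mem_insert]; push_cast; omega
    rw [e, Finset.sum_insert, Finset.sum_insert, ih, Finset.sum_range_succ]
    · rw [← add_assoc (g 0), add_comm (g 0 + _), ← add_assoc]
    · simp
    · simp only [Finset.mem_Icc, Finset.mem_insert]; omega

/-- Riemann sums of the weight `dew ε` with mesh `h` are bounded uniformly in `h`. -/
lemma sum_dew_le {ε h : ℝ} (hε : 0 < ε) (hh : 0 < h) (hh1 : h ≤ 1) (M : ℕ) :
    ∑ j ∈ Finset.Icc (-(M:ℤ)) (M:ℤ), dew ε (j * h) ≤ (8 / ε) / h := by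
  have hq1 : Real.exp (-h) < 1 := by rw [Real.exp_lt_one_iff]; linarith
  have hq0 := Real.exp_pos (-h)
  have hgap : h / 2 ≤ 1 - Real.exp (-h) := by
    have h1 : Real.exp (-h) ≤ 1 / (1 + h) := by
      rw [Real.exp_neg, one_div]
      exact inv_anti₀ (by linarith) (by linarith [Real.add_one_le_exp h])
    have h2 : 1 / (1 + h) ≤ 1 - h / 2 := by
      rw [div_le_iff₀ (by linarith)]; nlinarith
    linarith
  have hgeom : ∀ M : ℕ, ∑ n ∈ Finset.range M, Real.exp (-h) ^ n ≤ 2 / h := by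
    intro M
    have := (summable_geometric_of_lt_one hq0.le hq1).sum_le_tsum (Finset.range M)
      (fun n _ => by positivity)
    rw [tsum_geometric_of_lt_one hq0.le hq1] at this
    refine this.trans ?_
    rw [show 2 / h = (h / 2)⁻¹ by field_simp]
    exact inv_anti₀ (by positivity) hgap
  have hterm : ∀ j : ℤ, dew ε (j * h) ≤ (2 / ε) * Real.exp (-h) ^ j.natAbs := by
    intro j
    refine (dew_le_exp hε _).trans (le_of_eq ?_)
    rw [← Real.exp_nat_mul, abs_mul, abs_of_pos hh, Nat.cast_natAbs, Int.cast_abs]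
    ring_nf
  calc ∑ j ∈ Finset.Icc (-(M:ℤ)) (M:ℤ), dew ε (j * h)
      ≤ ∑ j ∈ Finset.Icc (-(M:ℤ)) (M:ℤ), (2 / ε) * Real.exp (-h) ^ j.natAbs :=
        Finset.sum_le_sum fun j _ => hterm j
    _ = (2 / ε) * (1 + ∑ n ∈ Finset.range M, (Real.exp (-h) ^ (n+1) + Real.exp (-h) ^ (n+1))) := by
        rw [← Finset.mul_sum, sum_Icc_symm]
        simp only [Int.natAbs_neg, Int.natAbs_zero, pow_zero]
        rfl
    _ ≤ (2 / ε) * (2 * ∑ n ∈ Finset.range (M+1), Real.exp (-h) ^ n) := by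
        rw [Finset.sum_range_succ', Finset.sum_add_distrib]
        gcongr
        simp only [pow_zero]
        linarith
    _ ≤ (2 / ε) * (2 * (2 / h)) := by gcongr; exact hgeom _
    _ = (8 / ε) / h := by field_simp; ring

lemma sum_dew_tail_le {ε h : ℝ} (hε : 0 < ε) (hh : 0 < h) (hh1 : h ≤ 1) (N M : ℕ) :
    ∑ j ∈ Finset.Icc (-(M:ℤ)) (M:ℤ) \ Finset.Icc (-(N:ℤ)) (N:ℤ), dew ε (j * h)
      ≤ (16 / ε) / h * dew (ε / 2) (N * h) := by
  calc ∑ j ∈ Finset.Icc (-(M:ℤ)) (M:ℤ) \ Finset.Icc (-(N:ℤ)) (N:ℤ), dew ε (j * h)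
      ≤ ∑ j ∈ Finset.Icc (-(M:ℤ)) (M:ℤ) \ Finset.Icc (-(N:ℤ)) (N:ℤ),
          dew (ε / 2) (j * h) * dew (ε / 2) (N * h) := by
        refine Finset.sum_le_sum fun j hj => ?_
        rw [← dew_half_sq]
        refine mul_le_mul_of_nonneg_left ?_ (dew_pos _ _).le
        refine dew_le_of_abs_le (by positivity) ?_
        rw [abs_mul, abs_mul]
        refine mul_le_mul_of_nonneg_right ?_ (abs_nonneg _)
        have : (N:ℤ) ≤ |j| := by
          simp only [Finset.mem_sdiff, Finset.mem_Icc] at hj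
          rcases abs_cases j with h | h <;> omega
        rw [abs_of_nonneg (by positivity : (0:ℝ) ≤ N)]
        exact_mod_cast this
    _ ≤ ∑ j ∈ Finset.Icc (-(M:ℤ)) (M:ℤ), dew (ε / 2) (j * h) * dew (ε / 2) (N * h) :=
        Finset.sum_le_sum_of_subset_of_nonneg Finset.sdiff_subset
          (fun _ _ _ => mul_nonneg (dew_pos _ _).le (dew_pos _ _).le)
    _ ≤ _ := by
        rw [← Finset.sum_mul]
        refine mul_le_mul_of_nonneg_right ?_ (dew_pos _ _).le
        refine (sum_dew_le (by positivity) hh hh1 M).trans (le_of_eq ?_)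
        field_simp; norm_num

/-- `∑_j 1/(1+(y-j)²)` is bounded uniformly in `y`. -/
lemma exists_sum_inv_le : ∃ C : ℝ, 0 < C ∧ ∀ (y : ℝ) (s : Finset ℤ),
    ∑ j ∈ s, (1 + (y - j) ^ 2)⁻¹ ≤ C := by
  have hsum : Summable fun m : ℤ => (1 + (m:ℝ) ^ 2)⁻¹ := by
    have h2 : Summable fun m : ℤ => 2 * (1 / (m:ℝ) ^ 2) :=
      ((Real.summable_one_div_int_pow (p := 2)).2 (by norm_num)).mul_left 2
    have h3 : Summable fun m : ℤ => (if m = 0 then (1:ℝ) else 0) :=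
      (hasSum_ite_eq (0:ℤ) (1:ℝ)).summable
    refine Summable.of_nonneg_of_le (fun m => by positivity) (fun m => ?_) (h2.add h3)
    by_cases hm : m = 0
    · simp [hm]
    · have : (m:ℝ) ≠ 0 := by exact_mod_cast hm
      have h4 : 0 < (m:ℝ) ^ 2 := by positivity
      rw [if_neg hm, add_zero, mul_one_div, inv_eq_one_div, div_le_div_iff₀ (by positivity) h4]
      linarith
  refine ⟨3 * ∑' m : ℤ, (1 + (m:ℝ) ^ 2)⁻¹, ?_, fun y s => ?_⟩
  · have := hsum.tsum_pos (fun m => by positivity) 0 (by norm_num)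
    positivity
  have hterm : ∀ j : ℤ, (1 + (y - j) ^ 2)⁻¹ ≤ 3 * (1 + ((⌊y⌋ - j : ℤ):ℝ) ^ 2)⁻¹ := by
    intro j
    have h1 := Int.floor_le y
    have h2 := Int.lt_floor_add_one y
    push_cast
    rw [inv_eq_one_div, ← div_eq_mul_inv, div_le_div_iff₀ (by positivity) (by positivity)]
    nlinarith [sq_nonneg ((y - j) + (y - ⌊y⌋))]
  calc _ ≤ ∑ j ∈ s, 3 * (1 + ((⌊y⌋ - j : ℤ):ℝ) ^ 2)⁻¹ := Finset.sum_le_sum fun j _ => hterm j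
    _ = 3 * ∑ j ∈ s, (1 + ((⌊y⌋ - j : ℤ):ℝ) ^ 2)⁻¹ := by rw [Finset.mul_sum]
    _ ≤ _ := by
      have h5 := ((Equiv.subLeft ⌊y⌋).summable_iff (f := fun m : ℤ => (1 + (m:ℝ) ^ 2)⁻¹)).2 hsum
      have h6 := h5.sum_le_tsum s (fun j _ => by simp only [Function.comp_apply]; positivity)
      rw [show ∑' b, ((fun m : ℤ => (1 + (m:ℝ) ^ 2)⁻¹) ∘ (Equiv.subLeft ⌊y⌋)) b =
        ∑' m : ℤ, (1 + (m:ℝ) ^ 2)⁻¹ from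
        (Equiv.subLeft ⌊y⌋).tsum_eq (fun m : ℤ => (1 + (m:ℝ) ^ 2)⁻¹)] at h6
      simp only [Function.comp_apply, Equiv.subLeft_apply] at h6
      gcongr

lemma sinc_pi_sq_le (y : ℝ) : Real.sinc (Real.pi * y) ^ 2 ≤ 2 * (1 + y ^ 2)⁻¹ := by
  have hpi := Real.pi_gt_three
  have h1 : Real.sinc (Real.pi * y) ^ 2 ≤ 1 := by
    rw [sq_le_one_iff_abs_le_one]; exact Real.abs_sinc_le_one _
  have h2 : Real.sinc (Real.pi * y) ^ 2 * y ^ 2 ≤ 1 := by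
    by_cases hy : y = 0
    · simp [hy]
    · rw [Real.sinc_of_ne_zero (by positivity), div_pow]
      have : Real.sin (Real.pi * y) ^ 2 ≤ 1 := Real.sin_sq_le_one _
      have hy2 : 0 < y ^ 2 := by positivity
      rw [div_mul_eq_mul_div, div_le_one (by positivity), mul_pow]
      have hpi2 : 1 ≤ Real.pi ^ 2 := by nlinarith
      exact mul_le_mul_of_nonneg_right (this.trans hpi2) hy2.le
  rw [← div_eq_mul_inv, le_div_iff₀ (by positivity)]
  linarith

lemma sincF_sq_le (j : ℤ) {h : ℝ} (hh : 0 < h) (x : ℝ) :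
    sincF j h x ^ 2 ≤ 2 * (1 + (x / h - j) ^ 2)⁻¹ := by
  rw [sincF_eq j hh, show Real.pi * (x - j * h) / h = Real.pi * (x / h - j) by field_simp]
  exact sinc_pi_sq_le _

lemma abs_sincF_le_one (j : ℤ) {h : ℝ} (hh : 0 < h) (x : ℝ) : |sincF j h x| ≤ 1 := by
  rw [sincF_eq j hh]; exact Real.abs_sinc_le_one _

lemma sum_le_sqrt (s : Finset ℤ) (c : ℤ → ℝ) {B : ℝ} (hB : ∑ j ∈ s, c j ^ 2 ≤ B) :
    ∑ j ∈ s, c j ≤ Real.sqrt (s.card * B) := by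
  refine Real.le_sqrt_of_sq_le ?_
  refine sq_sum_le_card_mul_sum_sq.trans ?_
  gcongr

lemma card_Icc_symm_le {N : ℕ} (hN : 1 ≤ N) :
    ((Finset.Icc (-(N:ℤ)) (N:ℤ)).card : ℝ) ≤ 3 * N := by
  have : (Finset.Icc (-(N:ℤ)) (N:ℤ)).card = 2 * N + 1 := by
    rw [Int.card_Icc]; omega
  rw [this]; push_cast
  have : (1:ℝ) ≤ N := by exact_mod_cast hN
  linarith

/-- The Lebesgue constant of truncated sinc interpolation is `O(√N)`, by Cauchy–Schwarz. -/
lemma exists_sum_abs_sincF_le : ∃ C : ℝ, 0 < C ∧ ∀ (N : ℕ), 1 ≤ N → ∀ (h : ℝ), 0 < h →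
    ∀ x : ℝ, ∑ j ∈ Finset.Icc (-(N:ℤ)) (N:ℤ), |sincF j h x| ≤ C * Real.sqrt N := by
  obtain ⟨C, hC, hS⟩ := exists_sum_inv_le
  refine ⟨Real.sqrt (3 * (2 * C)), by positivity, fun N hN h hh x => ?_⟩
  have hB : ∑ j ∈ Finset.Icc (-(N:ℤ)) (N:ℤ), |sincF j h x| ^ 2 ≤ 2 * C := by
    calc _ ≤ ∑ j ∈ Finset.Icc (-(N:ℤ)) (N:ℤ), 2 * (1 + (x / h - j) ^ 2)⁻¹ :=
          Finset.sum_le_sum fun j _ => by rw [sq_abs]; exact sincF_sq_le j hh x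
      _ ≤ _ := by rw [← Finset.mul_sum]; gcongr; exact hS _ _
  refine (sum_le_sqrt _ _ hB).trans ?_
  rw [← Real.sqrt_mul (by positivity)]
  refine Real.sqrt_le_sqrt ?_
  have := card_Icc_symm_le hN
  nlinarith

lemma exists_sum_inv_abs_le : ∃ C : ℝ, 0 < C ∧ ∀ (N : ℕ), 1 ≤ N → ∀ i : ℤ,
    ∑ j ∈ Finset.Icc (-(N:ℤ)) (N:ℤ), 2 / (1 + |((i - j : ℤ):ℝ)|) ≤ C * Real.sqrt N := by
  obtain ⟨C, hC, hS⟩ := exists_sum_inv_le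
  refine ⟨Real.sqrt (3 * (4 * C)), by positivity, fun N hN i => ?_⟩
  have hB : ∑ j ∈ Finset.Icc (-(N:ℤ)) (N:ℤ), (2 / (1 + |((i - j : ℤ):ℝ)|)) ^ 2 ≤ 4 * C := by
    calc _ ≤ ∑ j ∈ Finset.Icc (-(N:ℤ)) (N:ℤ), 4 * (1 + ((i:ℝ) - j) ^ 2)⁻¹ := by
          refine Finset.sum_le_sum fun j _ => ?_
          push_cast
          rw [← sq_abs ((i:ℝ) - j)]
          have := abs_nonneg ((i:ℝ) - j)
          rw [div_pow, ← div_eq_mul_inv, div_le_div_iff₀ (by positivity) (by positivity)]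
          nlinarith
      _ ≤ _ := by rw [← Finset.mul_sum]; gcongr; exact hS _ _
  refine (sum_le_sqrt _ _ hB).trans ?_
  rw [← Real.sqrt_mul (by positivity)]
  refine Real.sqrt_le_sqrt ?_
  have := card_Icc_symm_le hN
  nlinarith

/-! ### Sinc interpolation of the Cauchy kernel -/

lemma cotTerm_half (z : ℂ) (n : ℕ) : cotTerm (z / 2) n = 2 * cotTerm z (2 * n + 1) := by
  simp only [cotTerm]
  have e1 : z / 2 - ((n:ℂ) + 1) = (z - (((2 * n + 1 : ℕ) : ℂ) + 1)) / 2 := by push_cast; ring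
  have e2 : z / 2 + ((n:ℂ) + 1) = (z + (((2 * n + 1 : ℕ) : ℂ) + 1)) / 2 := by push_cast; ring
  rw [e1, e2, one_div_div, one_div_div]
  ring

lemma hasSum_cotTerm {z : ℂ} (hz : z ∈ Complex.integerComplement) :
    HasSum (cotTerm z) (Real.pi * Complex.cot (Real.pi * z) - 1 / z) := by
  have := (summable_cotTerm hz).hasSum
  rwa [show ∑' n, cotTerm z n = _ from (cot_series_rep' hz).symm] at this

lemma half_mem_integerComplement {z : ℂ} (hz : z ∈ Complex.integerComplement) :
    z / 2 ∈ Complex.integerComplement := by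
  rw [Complex.mem_integerComplement_iff] at *
  rintro ⟨n, hn⟩
  exact hz ⟨2 * n, by push_cast; rw [hn]; ring⟩

/-- The Mittag-Leffler expansion of `π / sin (π z)`, from that of the cotangent and
`1 / sin (2w) = cot w - cot (2w)`. -/
lemma tendsto_csc {z : ℂ} (hz : z ∈ Complex.integerComplement) :
    Tendsto (fun M : ℕ => ∑ j ∈ Finset.Icc (-(M:ℤ)) (M:ℤ), (-1:ℂ) ^ j * (1 / (z - j))) atTop
      (𝓝 (Real.pi / Complex.sin (Real.pi * z))) := by
  have h1 := hasSum_cotTerm hz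
  have h2 := hasSum_cotTerm (half_mem_integerComplement hz)
  have hinj : Function.Injective (fun n : ℕ => 2 * n + 1) := fun a b h => by
    simp only at h; omega
  have h3 : HasSum (fun m : ℕ => if Odd m then 2 * cotTerm z m else 0)
      (Real.pi * Complex.cot (Real.pi * (z / 2)) - 1 / (z / 2)) := by
    rw [← hinj.hasSum_iff]
    · convert h2 using 1
      ext n
      simp [cotTerm_half]
    · intro m hm
      rw [if_neg]
      rintro ⟨k, hk⟩
      exact hm ⟨k, hk.symm⟩
  have h4 := h3.sub h1
  have hs : Complex.sin (Real.pi * z) ≠ 0 := sin_pi_mul_ne_zero hz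
  have hs2 : Complex.sin (Real.pi * (z / 2)) ≠ 0 :=
    sin_pi_mul_ne_zero (half_mem_integerComplement hz)
  have hz0 : z ≠ 0 := Complex.integerComplement.ne_zero hz
  have hval : Real.pi * Complex.cot (Real.pi * (z / 2)) - 1 / (z / 2) -
      (Real.pi * Complex.cot (Real.pi * z) - 1 / z) = Real.pi / Complex.sin (Real.pi * z) - 1 / z := by
    have hd : (Real.pi:ℂ) * z = 2 * (Real.pi * (z / 2)) := by ring
    rw [Complex.cot, Complex.cot]
    rw [hd] at hs ⊢
    set w := (Real.pi:ℂ) * (z / 2)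
    have hc : Complex.cos w ≠ 0 := by
      intro h; apply hs; rw [Complex.sin_two_mul, h]; ring
    have key : Complex.cos w / Complex.sin w - Complex.cos (2 * w) / Complex.sin (2 * w) =
        1 / Complex.sin (2 * w) := by
      rw [Complex.sin_two_mul, Complex.cos_two_mul]
      field_simp
      ring
    have : (Real.pi : ℂ) / Complex.sin (2 * w) = Real.pi * (1 / Complex.sin (2 * w)) := by ring
    rw [this, ← key]
    field_simp
    ring
  rw [hval] at h4
  have h5 := (h4.tendsto_sum_nat).const_add (1 / z)
  rw [add_sub_cancel] at h5
  refine h5.congr fun M => ?_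
  rw [sum_Icc_symm]
  congr 1
  · simp
  · refine Finset.sum_congr rfl fun n _ => ?_
    simp only [cotTerm]
    have hp : (-1:ℂ) ^ (-((n:ℤ) + 1)) = (-1:ℂ) ^ ((n:ℤ) + 1) := by
      rw [zpow_neg, ← inv_zpow]; norm_num
    rw [hp]
    have hp2 : (-1:ℂ) ^ ((n:ℤ) + 1) = (-1) ^ (n + 1) := by
      exact_mod_cast zpow_natCast (-1:ℂ) (n + 1)
    rw [hp2]
    push_cast
    rcases Nat.even_or_odd n with hn | hn
    · rw [if_neg (by simpa using hn), (hn.add_one).neg_one_pow]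
      ring
    · rw [if_pos hn, (hn.add_one).neg_one_pow]
      ring

lemma sin_pi_sub_int (X : ℝ) (j : ℤ) :
    Real.sin (Real.pi * (X - j)) = (-1) ^ j * Real.sin (Real.pi * X) := by
  rw [mul_sub, mul_comm Real.pi (j:ℝ), Real.sin_sub_int_mul_pi]

/-- The sinc interpolation error of the Cauchy kernel `x ↦ 1/(w - x)`. -/
lemma tendsto_sinc_cauchy_kernel {h : ℝ} (hh : 0 < h) (x : ℝ) {w : ℂ} (hw : w.im ≠ 0) :
    Tendsto (fun M : ℕ => 1 / (w - x) -
        ∑ j ∈ Finset.Icc (-(M:ℤ)) (M:ℤ), (sincF j h x : ℂ) * (1 / (w - j * h))) atTop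
      (𝓝 (Complex.sin (Real.pi * x / h) / ((w - x) * Complex.sin (Real.pi * w / h)))) := by
  have hne : ∀ r : ℝ, w - r ≠ 0 := by
    intro r h0
    apply hw
    have := congrArg Complex.im h0
    simpa using this
  have hhC : (h:ℂ) ≠ 0 := by exact_mod_cast hh.ne'
  have hpi : (Real.pi:ℂ) ≠ 0 := by exact_mod_cast Real.pi_ne_zero
  by_cases hX : ∃ i : ℤ, x = i * h
  · obtain ⟨i, rfl⟩ := hX
    have hsin : Complex.sin (Real.pi * ((i * h : ℝ) : ℂ) / h) = 0 := by
      push_cast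
      rw [show (Real.pi:ℂ) * (i * h) / h = i * Real.pi by field_simp]
      exact Complex.sin_int_mul_pi i
    rw [hsin, zero_div]
    refine tendsto_const_nhds.congr' ?_
    filter_upwards [eventually_ge_atTop i.natAbs] with M hM
    rw [Finset.sum_eq_single i]
    · simp [sincF]
    · intro j _ hj
      have hji : (i:ℝ) * h ≠ j * h := by
        intro h'
        apply hj
        have := mul_right_cancel₀ hh.ne' h'
        exact_mod_cast this.symm
      have : sincF j h (i * h) = 0 := by
        unfold sincF
        rw [if_neg hji, show Real.pi * ((i:ℝ) * h - j * h) / h = ((i - j : ℤ):ℝ) * Real.pi by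
          push_cast; field_simp, Real.sin_int_mul_pi, zero_div]
      rw [this]; simp
    · intro hi
      exfalso; apply hi
      rw [Finset.mem_Icc]; omega
  · push Not at hX
    set X : ℝ := x / h with hXd
    have hxX : x = X * h := by rw [hXd]; field_simp
    set W : ℂ := w / h with hWd
    have hwW : w = W * h := by rw [hWd]; field_simp
    have hXc : (X:ℂ) ∈ Complex.integerComplement := by
      rw [Complex.mem_integerComplement_iff]
      rintro ⟨n, hn⟩
      apply hX n
      rw [hxX]
      have : (n:ℝ) = X := by exact_mod_cast hn
      rw [this]
    have hWc : W ∈ Complex.integerComplement := by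
      rw [Complex.mem_integerComplement_iff]
      rintro ⟨n, hn⟩
      apply hne (n * h)
      rw [hwW, ← hn]; push_cast; ring
    have hWX : W - X ≠ 0 := by
      intro h0
      apply hne x
      rw [hwW, hxX]; push_cast
      rw [← sub_mul, h0, zero_mul]
    have hXj : ∀ j : ℤ, (X:ℂ) - j ≠ 0 := fun j h0 =>
      (Complex.mem_integerComplement_iff.1 hXc) ⟨j, (sub_eq_zero.1 h0).symm⟩
    have hWj : ∀ j : ℤ, W - j ≠ 0 := fun j h0 =>
      (Complex.mem_integerComplement_iff.1 hWc) ⟨j, (sub_eq_zero.1 h0).symm⟩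
    have hlim := (((tendsto_csc hXc).sub (tendsto_csc hWc)).const_mul
      (Complex.sin (Real.pi * X) / (Real.pi * h * (W - X)))).const_sub (1 / (w - x))
    have hsX := sin_pi_mul_ne_zero hXc
    have hsW := sin_pi_mul_ne_zero hWc
    have hval : 1 / (w - x) - Complex.sin (Real.pi * X) / (Real.pi * h * (W - X)) *
        (Real.pi / Complex.sin (Real.pi * X) - Real.pi / Complex.sin (Real.pi * W)) =
        Complex.sin (Real.pi * x / h) / ((w - x) * Complex.sin (Real.pi * w / h)) := by
      rw [hwW, hxX]
      push_cast
      rw [show (Real.pi:ℂ) * (X * h) / h = Real.pi * X by field_simp,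
        show (Real.pi:ℂ) * (W * h) / h = Real.pi * W by field_simp,
        ← sub_mul]
      generalize Complex.sin (Real.pi * X) = A at *
      generalize Complex.sin (Real.pi * W) = B at *
      field_simp
      ring
    rw [hval] at hlim
    refine hlim.congr fun M => ?_
    rw [← Finset.sum_sub_distrib, Finset.mul_sum]
    congr 1
    refine Finset.sum_congr rfl fun j _ => ?_
    have hs : (sincF j h x : ℂ) =
        (-1) ^ j * Complex.sin (Real.pi * X) / (Real.pi * (X - j)) := by
      unfold sincF
      rw [if_neg (hX j), hxX, show Real.pi * (X * h - j * h) / h = Real.pi * (X - j) by field_simp,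
        sin_pi_sub_int]
      push_cast
      ring
    rw [hs, hwW, ← sub_mul]
    have := hXj j
    have := hWj j
    field_simp
    ring

/-- A bound for the truncated interpolation error of the Cauchy kernel, uniform in the
truncation and along horizontal lines. -/
lemma exists_norm_cauchy_kernel_le {h c : ℝ} (hh : 0 < h) (hc : c ≠ 0) :
    ∃ B : ℝ, ∀ (x s : ℝ) (M : ℕ), ‖1 / ((s + c * Complex.I : ℂ) - x) -
        ∑ j ∈ Finset.Icc (-(M:ℤ)) (M:ℤ),
          (sincF j h x : ℂ) * (1 / ((s + c * Complex.I : ℂ) - j * h))‖ ≤ B := by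
  obtain ⟨C, hC, hS⟩ := exists_sum_inv_le
  have hm : 0 < min (h ^ 2) (c ^ 2) := lt_min (by positivity) (by positivity)
  have hnorm : ∀ s r : ℝ, ‖(s + c * Complex.I : ℂ) - r‖ ^ 2 = (s - r) ^ 2 + c ^ 2 := by
    intro s r
    rw [← Complex.normSq_eq_norm_sq, Complex.normSq_apply]
    simp; ring
  have hge : ∀ s r : ℝ, |c| ≤ ‖(s + c * Complex.I : ℂ) - r‖ := by
    intro s r
    refine abs_le_of_sq_le_sq' ?_ (norm_nonneg _) |> abs_le.2 |>.trans le_rfl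
    rw [hnorm]; nlinarith [sq_nonneg (s - r)]
  refine ⟨1 / |c| + (2 * C + (1 / min (h ^ 2) (c ^ 2)) * C), fun x s M => ?_⟩
  refine (norm_sub_le _ _).trans (add_le_add ?_ ?_)
  · rw [norm_div, norm_one]
    exact one_div_le_one_div_of_le (abs_pos.2 hc) (hge s x)
  · refine (norm_sum_le _ _).trans ?_
    calc ∑ j ∈ Finset.Icc (-(M:ℤ)) (M:ℤ),
          ‖(sincF j h x : ℂ) * (1 / ((s + c * Complex.I : ℂ) - j * h))‖
        ≤ ∑ j ∈ Finset.Icc (-(M:ℤ)) (M:ℤ), (2 * (1 + (x / h - j) ^ 2)⁻¹ +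
            (1 / min (h ^ 2) (c ^ 2)) * (1 + (s / h - j) ^ 2)⁻¹) := by
          refine Finset.sum_le_sum fun j _ => ?_
          have hn := hnorm s (j * h)
          have hg := hge s (j * h)
          push_cast at hn hg
          set n := ‖(s + c * Complex.I : ℂ) - j * h‖ with hnd
          have hn0 : 0 < n := lt_of_lt_of_le (abs_pos.2 hc) hg
          rw [norm_mul, norm_div, norm_one, Complex.norm_real, Real.norm_eq_abs, ← hnd]
          have h1 := sincF_sq_le j hh x
          have h2 : (1 / n) ^ 2 ≤ (1 / min (h ^ 2) (c ^ 2)) * (1 + (s / h - j) ^ 2)⁻¹ := by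
            rw [div_pow, hn, one_pow, inv_eq_one_div, div_mul_div_comm, one_mul]
            refine one_div_le_one_div_of_le (by positivity) ?_
            have e : (s - j * h) ^ 2 = h ^ 2 * (s / h - j) ^ 2 := by
              rw [← mul_pow]; congr 1; field_simp
            rw [e]
            have := min_le_left (h ^ 2) (c ^ 2)
            have := min_le_right (h ^ 2) (c ^ 2)
            nlinarith [sq_nonneg (s / h - j)]
          have h3 : |sincF j h x| ^ 2 = sincF j h x ^ 2 := sq_abs _
          nlinarith [sq_nonneg (|sincF j h x| - 1 / n), sq_nonneg (|sincF j h x|),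
            sq_nonneg (1 / n)]
      _ ≤ _ := by
          rw [Finset.sum_add_distrib, ← Finset.mul_sum, ← Finset.mul_sum]
          gcongr
          · exact hS _ _
          · exact hS _ _

/-! ### Sinc interpolation and indefinite integration on a strip -/

/-- The parametrisation `s ↦ s + c i` of a horizontal line. -/
def hline (c s : ℝ) : ℂ := s + c * Complex.I

@[simp] lemma hline_re (c s : ℝ) : (hline c s).re = s := by simp [hline]
@[simp] lemma hline_im (c s : ℝ) : (hline c s).im = c := by simp [hline]

lemma continuous_hline (c : ℝ) : Continuous (hline c) := by unfold hline; fun_prop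

lemma hline_mem {c d : ℝ} (hc : |c| < d) (s : ℝ) : hline c s ∈ Dstrip d := by
  simpa [Dstrip] using hc

lemma ofReal_mem_Dstrip {d : ℝ} (hd : 0 < d) (x : ℝ) : (x : ℂ) ∈ Dstrip d := by
  simpa [Dstrip] using hd

lemma isOpen_Dstrip (d : ℝ) : IsOpen (Dstrip d) :=
  isOpen_lt (continuous_abs.comp Complex.continuous_im) continuous_const

lemma norm_hline_sub_sq (c s r : ℝ) : ‖hline c s - r‖ ^ 2 = (r - s) ^ 2 + c ^ 2 := by
  rw [← Complex.normSq_eq_norm_sq, Complex.normSq_apply]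
  simp; ring

lemma abs_le_norm_hline_sub (c s r : ℝ) : |c| ≤ ‖hline c s - r‖ := by
  have := Complex.abs_im_le_norm (hline c s - r)
  simpa using this

lemma hline_sub_ne {c : ℝ} (hc : c ≠ 0) (s r : ℝ) : hline c s - r ≠ 0 := by
  rw [← norm_pos_iff]
  exact (abs_pos.2 hc).trans_le (abs_le_norm_hline_sub c s r)

/-- Analytic functions on the strip `D_d` with double exponential decay along it. -/
structure DecayOn (F : ℂ → ℂ) (d ε C : ℝ) : Prop where
  diff : DifferentiableOn ℂ F (Dstrip d)
  bound : ∀ z ∈ Dstrip d, ‖F z‖ ≤ C * dew ε z.re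

lemma DecayOn.cont_line {F : ℂ → ℂ} {d ε C c : ℝ} (hF : DecayOn F d ε C) (hc : |c| < d) :
    Continuous fun s => F (hline c s) := by
  rw [← continuousOn_univ]
  exact hF.diff.continuousOn.comp (continuous_hline c).continuousOn fun s _ => hline_mem hc s

lemma DecayOn.cont_real {F : ℂ → ℂ} {d ε C : ℝ} (hd : 0 < d) (hF : DecayOn F d ε C) :
    Continuous fun s : ℝ => F s := by
  rw [← continuousOn_univ]
  exact hF.diff.continuousOn.comp Complex.continuous_ofReal.continuousOn
    fun s _ => ofReal_mem_Dstrip hd s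

lemma DecayOn.bound_line {F : ℂ → ℂ} {d ε C c : ℝ} (hF : DecayOn F d ε C) (hc : |c| < d) (s : ℝ) :
    ‖F (hline c s)‖ ≤ C * dew ε s := by
  simpa using hF.bound _ (hline_mem hc s)

lemma DecayOn.bound_real {F : ℂ → ℂ} {d ε C : ℝ} (hd : 0 < d) (hF : DecayOn F d ε C) (s : ℝ) :
    ‖F s‖ ≤ C * dew ε s := by
  simpa using hF.bound _ (ofReal_mem_Dstrip hd s)

lemma DecayOn.nonneg {F : ℂ → ℂ} {d ε C : ℝ} (hd : 0 < d) (hF : DecayOn F d ε C) : 0 ≤ C := by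
  have := (norm_nonneg _).trans (hF.bound_real hd 0)
  exact nonneg_of_mul_nonneg_left this (dew_pos _ _)

lemma DecayOn.integrable_line_mul {F : ℂ → ℂ} {d ε C c B : ℝ} (hε : 0 < ε) (hF : DecayOn F d ε C)
    (hc : |c| < d) {q : ℝ → ℂ} (hq : Continuous q) (hB : ∀ s, ‖q s‖ ≤ B) :
    Integrable fun s => F (hline c s) * q s := by
  refine (((integrable_dew hε).const_mul C).mul_const B).mono'
    ((hF.cont_line hc).mul hq).aestronglyMeasurable (Eventually.of_forall fun s => ?_)
  rw [norm_mul]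
  exact mul_le_mul (hF.bound_line hc s) (hB s) (norm_nonneg _)
    ((norm_nonneg _).trans (hF.bound_line hc s))

lemma DecayOn.integrable_real {F : ℂ → ℂ} {d ε C : ℝ} (hε : 0 < ε) (hd : 0 < d)
    (hF : DecayOn F d ε C) : Integrable fun s : ℝ => F s :=
  ((integrable_dew hε).const_mul C).mono' (hF.cont_real hd).aestronglyMeasurable
    (Eventually.of_forall fun s => hF.bound_real hd s)

lemma integrable_poisson {c : ℝ} (hc : 0 < c) (x : ℝ) :
    Integrable fun s : ℝ => ((x - s) ^ 2 + c ^ 2)⁻¹ := by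
  have h1 := ((integrable_inv_one_add_sq.comp_div hc.ne').comp_sub_right x).const_mul (c ^ 2)⁻¹
  refine h1.congr (Eventually.of_forall fun s => ?_)
  simp only
  rw [← mul_inv]; congr 1; field_simp; ring

lemma integral_poisson {c : ℝ} (hc : 0 < c) (x : ℝ) :
    ∫ s : ℝ, ((x - s) ^ 2 + c ^ 2)⁻¹ = Real.pi / c := by
  have h1 : ∀ s : ℝ, ((x - s) ^ 2 + c ^ 2)⁻¹ = (c ^ 2)⁻¹ * (1 + ((s - x) / c) ^ 2)⁻¹ := by
    intro s
    rw [← mul_inv]; congr 1; field_simp; ring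
  simp_rw [h1]
  rw [integral_const_mul, integral_sub_right_eq_self (fun s => (1 + (s / c) ^ 2)⁻¹) x,
    Measure.integral_comp_div (fun s => (1 + s ^ 2)⁻¹), integral_univ_inv_one_add_sq,
    abs_of_pos hc, smul_eq_mul]
  field_simp

/-- Cauchy's integral formula on a strip. -/
lemma DecayOn.cauchy {F : ℂ → ℂ} {d ε C c : ℝ} (hε : 0 < ε) (hF : DecayOn F d ε C)
    (hc : 0 < c) (hcd : c < d) (x : ℝ) :
    ∫ s, (F (hline (-c) s) * (1 / (hline (-c) s - x)) - F (hline c s) * (1 / (hline c s - x))) =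
      2 * Real.pi * Complex.I * F x := by
  have hd : 0 < d := hc.trans hcd
  have hc1 : |c| < d := by rwa [abs_of_pos hc]
  have hc2 : |-c| < d := by rwa [abs_neg, abs_of_pos hc]
  have hcn : (-c) ≠ 0 := by simpa using hc.ne'
  set q : ℂ → ℂ := dslope F x with hq
  have hqd : DifferentiableOn ℂ q (Dstrip d) :=
    (Complex.differentiableOn_dslope ((isOpen_Dstrip d).mem_nhds (ofReal_mem_Dstrip hd x))).2 hF.diff
  have hqv : ∀ z : ℂ, z ≠ x → q z = (F z - F x) * (1 / (z - x)) := by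
    intro z hz
    rw [hq, dslope_of_ne _ hz, slope_def_field]; ring
  have hker : ∀ e : ℝ, e ≠ 0 → Continuous (fun s => 1 / (hline e s - x)) := fun e he =>
    continuous_const.div ((continuous_hline e).sub continuous_const) fun s => hline_sub_ne he s x
  have hkb : ∀ e : ℝ, e ≠ 0 → ∀ s, ‖1 / (hline e s - x)‖ ≤ 1 / |e| := fun e he s => by
    rw [norm_div, norm_one]
    exact one_div_le_one_div_of_le (abs_pos.2 he) (abs_le_norm_hline_sub e s x)
  set A : ℝ → ℂ := fun s =>
    F (hline (-c) s) * (1 / (hline (-c) s - x)) - F (hline c s) * (1 / (hline c s - x)) with hA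
  have hAi : Integrable A :=
    (hF.integrable_line_mul hε hc2 (hker _ hcn) (hkb _ hcn)).sub
      (hF.integrable_line_mul hε hc1 (hker _ hc.ne') (hkb _ hc.ne'))
  set P : ℝ → ℂ := fun s => ((((x - s) ^ 2 + c ^ 2)⁻¹ : ℝ) : ℂ) with hP
  have hPi : Integrable P := (integrable_poisson hc x).ofReal
  have hPv : ∫ s, P s = Real.pi / c := by
    have := integral_ofReal (𝕜 := ℂ) (μ := volume) (f := fun s : ℝ => ((x - s) ^ 2 + c ^ 2)⁻¹)
    rw [integral_poisson hc x] at this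
    rw [hP]
    exact this.trans (by push_cast; rfl)
  have hg : ∀ s, q (hline (-c) s) - q (hline c s) = A s - F x * (2 * c * Complex.I) * P s := by
    intro s
    have h1 := hline_sub_ne hcn s x
    have h2 := hline_sub_ne hc.ne' s x
    rw [hqv _ (sub_ne_zero.1 h1), hqv _ (sub_ne_zero.1 h2)]
    have h3 : 1 / (hline (-c) s - x) - 1 / (hline c s - x) = (2 * c * Complex.I) * P s := by
      have h4 : (hline (-c) s - x) * (hline c s - x) = (((x - s) ^ 2 + c ^ 2 : ℝ) : ℂ) := by
        simp only [hline]; push_cast; linear_combination (-(c:ℂ)^2) * Complex.I_sq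
      rw [div_sub_div _ _ h1 h2, h4, hP]
      simp only [hline]; push_cast; rw [div_eq_mul_inv]; ring
    rw [hA]; simp only
    linear_combination (-F x) * h3
  have hgi : Integrable fun s => A s - F x * (2 * c * Complex.I) * P s :=
    hAi.sub (hPi.const_mul _)
  -- the rectangle integral of the difference quotient
  have hrect : ∀ R : ℝ, (∫ s in (-R)..R, (A s - F x * (2 * c * Complex.I) * P s)) =
      -(Complex.I • ∫ y in (-c)..c, q (hline y R)) + Complex.I • ∫ y in (-c)..c, q (hline y (-R)) := by
    intro R
    have h := Complex.integral_boundary_rect_eq_zero_of_differentiableOn q (hline (-c) (-R))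
      (hline c R) (hqd.mono ?_)
    · simp only [hline_re, hline_im] at h
      have e1 : (∫ s in (-R)..R, (A s - F x * (2 * c * Complex.I) * P s)) =
          (∫ s in (-R)..R, q (hline (-c) s)) - ∫ s in (-R)..R, q (hline c s) := by
        rw [← intervalIntegral.integral_sub]
        · exact intervalIntegral.integral_congr fun s _ => (hg s).symm
        · exact (hqd.continuousOn.comp_continuous (continuous_hline _)
            (hline_mem hc2)).intervalIntegrable _ _
        · exact (hqd.continuousOn.comp_continuous (continuous_hline _)
            (hline_mem hc1)).intervalIntegrable _ _
      rw [e1]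
      simp only [hline] at h ⊢
      linear_combination h
    · intro z hz
      rw [Complex.mem_reProdIm] at hz
      simp only [hline_im] at hz
      rw [Set.uIcc_of_le (show -c ≤ c by linarith)] at hz
      show |z.im| < d
      exact lt_of_le_of_lt (abs_le.2 hz.2) hcd
  have hvert : ∀ e : ℝ → ℝ, (∀ R, |e R| = |R|) → Tendsto (fun R : ℝ =>
      ∫ y in (-c)..c, q (hline y (e R))) atTop (𝓝 0) := by
    intro e he
    have hb : ∀ᶠ R : ℝ in atTop, ‖∫ y in (-c)..c, q (hline y (e R))‖ ≤
        ((C + ‖F x‖) * (1 / (R - |x|))) * |c - -c| := by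
      filter_upwards [eventually_gt_atTop |x|] with R hR
      refine intervalIntegral.norm_integral_le_of_norm_le_const fun y hy => ?_
      rw [Set.uIoc_of_le (by linarith)] at hy
      have hyd : |y| < d := lt_of_le_of_lt (abs_le.2 ⟨hy.1.le, hy.2⟩) hcd
      have hR0 : 0 < R := (abs_nonneg x).trans_lt hR
      have hnb : R - |x| ≤ ‖hline y (e R) - x‖ := by
        have h1 := Complex.abs_re_le_norm (hline y (e R) - x)
        have h2 := abs_sub_abs_le_abs_sub (e R) x
        rw [he, abs_of_pos hR0] at h2
        simp at h1
        linarith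
      have hne : hline y (e R) ≠ x := by
        rw [← sub_ne_zero, ← norm_pos_iff]; linarith
      rw [hqv _ hne, norm_mul]
      gcongr
      · exact add_nonneg (hF.nonneg hd) (norm_nonneg _)
      · refine (norm_sub_le _ _).trans ?_
        gcongr
        exact (hF.bound_line hyd _).trans
          (mul_le_of_le_one_right (hF.nonneg hd) (dew_le_one hε.le _))
      · rw [norm_div, norm_one]
        exact one_div_le_one_div_of_le (by linarith) hnb
    refine squeeze_zero_norm' hb ?_
    have : Tendsto (fun R : ℝ => 1 / (R - |x|)) atTop (𝓝 0) := by
      simp only [one_div]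
      exact tendsto_inv_atTop_zero.comp (tendsto_atTop_add_const_right _ _ tendsto_id)
    simpa using (this.const_mul (C + ‖F x‖)).mul_const |c - -c|
  have hl1 := intervalIntegral_tendsto_integral hgi tendsto_neg_atTop_atBot tendsto_id
  have hl2 := ((hvert (fun R => R) fun _ => rfl).const_smul Complex.I).neg.add
    ((hvert (fun R => -R) fun R => abs_neg R).const_smul Complex.I)
  have hfin := tendsto_nhds_unique hl1 (hl2.congr fun R => (hrect R).symm)
  rw [integral_sub hAi (hPi.const_mul _), integral_const_mul, hPv] at hfin
  have hcC : (c:ℂ) ≠ 0 := by exact_mod_cast hc.ne'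
  rw [sub_eq_iff_eq_add] at hfin
  rw [hfin]
  simp only [smul_zero, neg_zero, zero_add]
  field_simp

lemma sinh_abs_le_norm_sin (z : ℂ) : Real.sinh |z.im| ≤ ‖Complex.sin z‖ := by
  refine abs_le_of_sq_le_sq' ?_ (norm_nonneg _) |>.2
  rw [← Complex.normSq_eq_norm_sq, Complex.sin_eq z]
  have e : Complex.sin z.re * Complex.cosh z.im + Complex.cos z.re * Complex.sinh z.im * Complex.I =
      ((Real.sin z.re * Real.cosh z.im : ℝ) : ℂ) +
        ((Real.cos z.re * Real.sinh z.im : ℝ) : ℂ) * Complex.I := by push_cast; rfl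
  rw [e, Complex.normSq_add_mul_I]
  have h1 : Real.sinh |z.im| ^ 2 = Real.sinh z.im ^ 2 := by
    rcases abs_choice z.im with h | h <;> rw [h]
    rw [Real.sinh_neg]; ring
  have h2 := Real.cosh_sq z.im
  have h3 := Real.sin_sq_add_cos_sq z.re
  rw [h1, mul_pow, mul_pow, h2]
  nlinarith [sq_nonneg (Real.sin z.re)]

/-- The kernel `sin (πx/h) / ((w - x) sin (πw/h))` of the sinc interpolation error. -/
def errKer (h x : ℝ) (w : ℂ) : ℂ :=
  Complex.sin (Real.pi * x / h) / ((w - x) * Complex.sin (Real.pi * w / h))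

lemma sinh_le_norm_sin_hline {h c : ℝ} (hh : 0 < h) (s : ℝ) :
    Real.sinh (Real.pi * |c| / h) ≤ ‖Complex.sin (Real.pi * hline c s / h)‖ := by
  have := sinh_abs_le_norm_sin (Real.pi * hline c s / h)
  have e : ((Real.pi * hline c s / h : ℂ)).im = Real.pi * c / h := by
    rw [Complex.div_ofReal_im, Complex.im_ofReal_mul, hline_im]
  rwa [e, abs_div, abs_mul, abs_of_pos hh, abs_of_pos Real.pi_pos] at this

lemma sinh_pos_aux {h c : ℝ} (hh : 0 < h) (hc : c ≠ 0) : 0 < Real.sinh (Real.pi * |c| / h) := by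
  rw [Real.sinh_pos_iff]
  have := Real.pi_pos
  have := abs_pos.2 hc
  positivity

lemma sin_hline_ne {h c : ℝ} (hh : 0 < h) (hc : c ≠ 0) (s : ℝ) :
    Complex.sin (Real.pi * hline c s / h) ≠ 0 := by
  rw [← norm_pos_iff]
  exact (sinh_pos_aux hh hc).trans_le (sinh_le_norm_sin_hline hh s)

lemma norm_sin_real_le (x h : ℝ) : ‖Complex.sin (Real.pi * x / h)‖ ≤ 1 := by
  rw [show (Real.pi * x / h : ℂ) = ((Real.pi * x / h : ℝ) : ℂ) by push_cast; rfl,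
    ← Complex.ofReal_sin, Complex.norm_real]
  exact Real.abs_sin_le_one _

lemma norm_errKer_le {h c : ℝ} (hh : 0 < h) (hc : c ≠ 0) (x s : ℝ) :
    ‖errKer h x (hline c s)‖ ≤ 1 / (|c| * Real.sinh (Real.pi * |c| / h)) := by
  rw [errKer, norm_div, norm_mul]
  exact div_le_div₀ zero_le_one (norm_sin_real_le x h)
    (mul_pos (abs_pos.2 hc) (sinh_pos_aux hh hc))
    (mul_le_mul (abs_le_norm_hline_sub _ _ _) (sinh_le_norm_sin_hline hh s)
      (sinh_pos_aux hh hc).le (norm_nonneg _))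

lemma continuous_errKer {h c : ℝ} (hh : 0 < h) (hc : c ≠ 0) :
    Continuous fun p : ℝ × ℝ => errKer h p.1 (hline c p.2) := by
  unfold errKer
  refine Continuous.div ?_ ?_ ?_
  · fun_prop
  · have := continuous_hline c
    fun_prop
  · intro p
    exact mul_ne_zero (hline_sub_ne hc _ _) (sin_hline_ne hh hc _)

/-- The integrand of the contour integral for the sinc interpolation error. -/
def errInt (F : ℂ → ℂ) (c h x s : ℝ) : ℂ :=
  F (hline (-c) s) * errKer h x (hline (-c) s) - F (hline c s) * errKer h x (hline c s)

/-- The contour integral for the sinc interpolation error. -/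
def sincErr (F : ℂ → ℂ) (c h x : ℝ) : ℂ :=
  (2 * Real.pi * Complex.I)⁻¹ * ∫ s, errInt F c h x s

lemma DecayOn.integrable_cauchy {F : ℂ → ℂ} {d ε C c : ℝ} (hε : 0 < ε) (hF : DecayOn F d ε C)
    (hc : c ≠ 0) (hcd : |c| < d) (x : ℝ) :
    Integrable fun s => F (hline c s) * (1 / (hline c s - x)) := by
  refine hF.integrable_line_mul hε hcd (B := 1 / |c|)
    (continuous_const.div ((continuous_hline c).sub continuous_const) fun s => hline_sub_ne hc s x)
    fun s => ?_
  rw [norm_div, norm_one]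
  exact one_div_le_one_div_of_le (abs_pos.2 hc) (abs_le_norm_hline_sub c s x)

/-- The error of the full sinc interpolation series is a contour integral. -/
lemma DecayOn.tendsto_sincErr {F : ℂ → ℂ} {d ε C c h : ℝ} (hε : 0 < ε) (hF : DecayOn F d ε C)
    (hc : 0 < c) (hcd : c < d) (hh : 0 < h) (x : ℝ) :
    Tendsto (fun M : ℕ => F x - ∑ j ∈ Finset.Icc (-(M:ℤ)) (M:ℤ), (sincF j h x : ℂ) * F (j * h))
      atTop (𝓝 (sincErr F c h x)) := by
  have hc1 : |c| < d := by rwa [abs_of_pos hc]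
  have hc2 : |-c| < d := by rwa [abs_neg, abs_of_pos hc]
  have hcn : (-c) ≠ 0 := by simpa using hc.ne'
  have hpi : (2 * Real.pi * Complex.I : ℂ) ≠ 0 := by simp [Real.pi_ne_zero]
  set κ : ℕ → ℂ → ℂ := fun M w => 1 / (w - x) -
        ∑ j ∈ Finset.Icc (-(M:ℤ)) (M:ℤ), (sincF j h x : ℂ) * (1 / (w - j * h)) with hκ
  set Φ : ℕ → ℝ → ℂ := fun M s =>
    F (hline (-c) s) * κ M (hline (-c) s) - F (hline c s) * κ M (hline c s) with hΦ
  set A : ℝ → ℝ → ℂ := fun r s =>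
    F (hline (-c) s) * (1 / (hline (-c) s - r)) - F (hline c s) * (1 / (hline c s - r)) with hA
  have hAi : ∀ r, Integrable (A r) := fun r =>
    (hF.integrable_cauchy hε hcn hc2 r).sub (hF.integrable_cauchy hε hc.ne' hc1 r)
  have hAv : ∀ r, ∫ s, A r s = 2 * Real.pi * Complex.I * F r := fun r => hF.cauchy hε hc hcd r
  have hΦA : ∀ M, Φ M = fun s => A x s - ∑ j ∈ Finset.Icc (-(M:ℤ)) (M:ℤ),
      (sincF j h x : ℂ) * A (j * h) s := by
    intro M
    ext s
    simp only [hΦ, hκ, hA, mul_sub, Finset.mul_sum, Finset.sum_sub_distrib]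
    push_cast
    simp only [mul_left_comm]
    ring
  have hsumi : ∀ M : ℕ, Integrable fun s => ∑ j ∈ Finset.Icc (-(M:ℤ)) (M:ℤ),
      (sincF j h x : ℂ) * A (j * h) s := fun M =>
    integrable_finsetSum _ fun j _ => (hAi _).const_mul _
  have hΦi : ∀ M, Integrable (Φ M) := fun M => by
    rw [hΦA]; exact (hAi x).sub (hsumi M)
  have hΦv : ∀ M : ℕ, (2 * Real.pi * Complex.I)⁻¹ * ∫ s, Φ M s =
      F x - ∑ j ∈ Finset.Icc (-(M:ℤ)) (M:ℤ), (sincF j h x : ℂ) * F (j * h) := by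
    intro M
    rw [hΦA, integral_sub (hAi x) (hsumi M), integral_finsetSum _ fun j _ => (hAi _).const_mul _]
    simp_rw [integral_const_mul, hAv]
    push_cast
    rw [mul_sub, ← mul_assoc, inv_mul_cancel₀ hpi, one_mul, Finset.mul_sum]
    congr 1
    refine Finset.sum_congr rfl fun j _ => ?_
    rw [mul_left_comm, ← mul_assoc (2 * (Real.pi:ℂ) * Complex.I)⁻¹, inv_mul_cancel₀ hpi, one_mul]
  obtain ⟨B1, hB1⟩ := exists_norm_cauchy_kernel_le hh hc.ne'
  obtain ⟨B2, hB2⟩ := exists_norm_cauchy_kernel_le hh hcn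
  have hC0 := hF.nonneg (hc.trans hcd)
  refine Tendsto.congr hΦv (Tendsto.const_mul _ ?_)
  refine tendsto_integral_of_dominated_convergence (fun s => C * dew ε s * B2 + C * dew ε s * B1)
    (fun M => (hΦi M).aestronglyMeasurable)
    ((((integrable_dew hε).const_mul C).mul_const B2).add
      (((integrable_dew hε).const_mul C).mul_const B1)) ?_ ?_
  · intro M
    refine Eventually.of_forall fun s => ?_
    refine (norm_sub_le _ _).trans (add_le_add ?_ ?_)
    · rw [norm_mul]
      exact mul_le_mul (hF.bound_line hc2 s) (hB2 x s M) (norm_nonneg _)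
        (mul_nonneg hC0 (dew_pos _ _).le)
    · rw [norm_mul]
      exact mul_le_mul (hF.bound_line hc1 s) (hB1 x s M) (norm_nonneg _)
        (mul_nonneg hC0 (dew_pos _ _).le)
  · refine Eventually.of_forall fun s => ?_
    exact ((tendsto_sinc_cauchy_kernel hh x (by simpa using hc.ne')).const_mul _).sub
      ((tendsto_sinc_cauchy_kernel hh x (by simpa using hc.ne')).const_mul _)

/-- The integral of the decay weight. -/
def dewInt (ε : ℝ) : ℝ := ∫ s, dew ε s

lemma dewInt_nonneg (ε : ℝ) : 0 ≤ dewInt ε := integral_nonneg fun _ => (dew_pos _ _).le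

lemma norm_two_pi_I_inv : ‖(2 * Real.pi * Complex.I : ℂ)⁻¹‖ = 1 / (2 * Real.pi) := by
  rw [norm_inv, norm_mul, norm_mul, Complex.norm_I, Complex.norm_real, Real.norm_eq_abs,
    abs_of_pos Real.pi_pos]
  simp

/-- A pointwise bound on the two pieces of a contour integral gives a bound on the integral. -/
lemma DecayOn.norm_contour_le {F : ℂ → ℂ} {d ε C c B : ℝ} (hε : 0 < ε) (hF : DecayOn F d ε C)
    (hc : 0 < c) (hcd : c < d) {q : ℂ → ℂ} (h1 : ∀ s, ‖q (hline c s)‖ ≤ B)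
    (h2 : ∀ s, ‖q (hline (-c) s)‖ ≤ B) :
    ‖(2 * Real.pi * Complex.I)⁻¹ *
      ∫ s, (F (hline (-c) s) * q (hline (-c) s) - F (hline c s) * q (hline c s))‖ ≤
      C * dewInt ε * B := by
  have hc1 : |c| < d := by rwa [abs_of_pos hc]
  have hc2 : |-c| < d := by rwa [abs_neg, abs_of_pos hc]
  have hC0 := hF.nonneg (hc.trans hcd)
  have hB0 : 0 ≤ B := (norm_nonneg _).trans (h1 0)
  have hle : ‖∫ s, (F (hline (-c) s) * q (hline (-c) s) - F (hline c s) * q (hline c s))‖ ≤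
      ∫ s, dew ε s * (C * B * 2) := by
    refine norm_integral_le_of_norm_le ((integrable_dew hε).mul_const _)
      (Eventually.of_forall fun s => ?_)
    have e1 := mul_le_mul (hF.bound_line hc1 s) (h1 s) (norm_nonneg _)
        (mul_nonneg hC0 (dew_pos _ _).le)
    have e2 := mul_le_mul (hF.bound_line hc2 s) (h2 s) (norm_nonneg _)
        (mul_nonneg hC0 (dew_pos _ _).le)
    rw [← norm_mul] at e1 e2
    refine (norm_sub_le _ _).trans ?_
    linarith
  rw [integral_mul_const] at hle
  rw [norm_mul, norm_two_pi_I_inv]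
  have hp : 1 / (2 * Real.pi) ≤ 1 / 2 := by
    refine one_div_le_one_div_of_le (by norm_num) ?_
    linarith [Real.pi_gt_three]
  calc _ ≤ 1 / 2 * (dewInt ε * (C * B * 2)) := by
        refine mul_le_mul hp hle (norm_nonneg _) (by norm_num)
    _ = _ := by ring

lemma DecayOn.norm_sincErr_le {F : ℂ → ℂ} {d ε C c h : ℝ} (hε : 0 < ε) (hF : DecayOn F d ε C)
    (hc : 0 < c) (hcd : c < d) (hh : 0 < h) (x : ℝ) :
    ‖sincErr F c h x‖ ≤ C * dewInt ε * (1 / (c * Real.sinh (Real.pi * c / h))) := by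
  refine hF.norm_contour_le hε hc hcd (q := errKer h x) ?_ ?_
  · intro s
    simpa [abs_of_pos hc] using norm_errKer_le hh hc.ne' x s
  · intro s
    simpa [abs_of_pos hc] using norm_errKer_le hh (neg_ne_zero.2 hc.ne') x s

/-- Truncating an index set from `M` to `N`. -/
lemma norm_sum_sub_sum_le {ε C B h : ℝ} (hε : 0 < ε) (hh : 0 < h) (hh1 : h ≤ 1) {q : ℤ → ℂ}
    {p : ℤ → ℂ} (hq : ∀ j : ℤ, ‖q j‖ ≤ C * dew ε (j * h)) (hp : ∀ j, ‖p j‖ ≤ B) {N M : ℕ}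
    (hNM : N ≤ M) (hC : 0 ≤ C) (hB : 0 ≤ B) :
    ‖(∑ j ∈ Finset.Icc (-(M:ℤ)) (M:ℤ), p j * q j) - ∑ j ∈ Finset.Icc (-(N:ℤ)) (N:ℤ), p j * q j‖ ≤
      B * C * (16 / ε / h * dew (ε / 2) (N * h)) := by
  have hsub : Finset.Icc (-(N:ℤ)) (N:ℤ) ⊆ Finset.Icc (-(M:ℤ)) (M:ℤ) :=
    Finset.Icc_subset_Icc (by omega) (by omega)
  rw [← Finset.sum_sdiff hsub, add_sub_cancel_right]
  refine (norm_sum_le _ _).trans ?_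
  refine le_trans (Finset.sum_le_sum (g := fun j : ℤ => B * C * dew ε (j * h)) fun j _ => ?_) ?_
  · rw [norm_mul, mul_assoc]
    exact mul_le_mul (hp j) (hq j) (norm_nonneg _) hB
  · rw [← Finset.mul_sum]
    exact mul_le_mul_of_nonneg_left (sum_dew_tail_le hε hh hh1 N M) (mul_nonneg hB hC)

lemma DecayOn.bound_node {F : ℂ → ℂ} {d ε C : ℝ} (hd : 0 < d) (hF : DecayOn F d ε C) (h : ℝ)
    (j : ℤ) : ‖F (j * h)‖ ≤ C * dew ε (j * h) := by
  have := hF.bound_real hd (j * h)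
  push_cast at this
  exact this

lemma inv_sinh_le {y : ℝ} (hy : 1 ≤ y) : 1 / Real.sinh y ≤ 4 * Real.exp (-y) := by
  have h1 : 2 ≤ Real.exp y := by linarith [Real.add_one_le_exp y]
  have h2 : Real.exp (-y) ≤ 1 / 2 := by
    rw [Real.exp_neg, inv_eq_one_div]
    exact one_div_le_one_div_of_le (by norm_num) h1
  have h3 : Real.exp (-y) * Real.exp y = 1 := by rw [← Real.exp_add]; simp
  have h4 : 0 < Real.sinh y := Real.sinh_pos_iff.2 (by linarith)
  rw [div_le_iff₀ h4, Real.sinh_eq]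
  nlinarith [Real.exp_pos (-y)]

/-- A family of bounds with parameter `c < d` passes to the limit `c → d`. -/
lemma le_of_strip_limit {d h A B Y : ℝ} (hd : 0 < d) (hh : 0 < h)
    (hY : ∀ c, 0 < c → c < d → Y ≤ A * (1 / (c * Real.sinh (Real.pi * c / h))) + B)
    (hA : 0 ≤ A) (hhd : h ≤ d) :
    Y ≤ A * (4 / d) * Real.exp (-(Real.pi * d / h)) + B := by
  have hs : 0 < Real.sinh (Real.pi * d / h) := by
    rw [Real.sinh_pos_iff]; have := Real.pi_pos; positivity
  have hlim : Tendsto (fun c => A * (1 / (c * Real.sinh (Real.pi * c / h))) + B) (𝓝[<] d)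
      (𝓝 (A * (1 / (d * Real.sinh (Real.pi * d / h))) + B)) := by
    refine Tendsto.mono_left ?_ nhdsWithin_le_nhds
    refine ContinuousAt.tendsto (f := fun c => A * (1 / (c * Real.sinh (Real.pi * c / h))) + B) ?_
    refine (continuousAt_const.mul (continuousAt_const.div ?_ (by positivity))).add
      continuousAt_const
    exact (continuous_id.mul (Real.continuous_sinh.comp (by fun_prop))).continuousAt
  have h1 : Y ≤ A * (1 / (d * Real.sinh (Real.pi * d / h))) + B := by
    refine ge_of_tendsto hlim ?_
    filter_upwards [Ioo_mem_nhdsLT hd] with c hc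
    exact hY c hc.1 hc.2
  refine h1.trans ?_
  have h2 : (1:ℝ) ≤ Real.pi * d / h := by
    rw [le_div_iff₀ hh]; nlinarith [Real.pi_gt_three]
  have h3 := inv_sinh_le h2
  have h4 : 1 / (d * Real.sinh (Real.pi * d / h)) ≤ (4 / d) * Real.exp (-(Real.pi * d / h)) := by
    rw [← div_div, div_right_comm, div_eq_mul_one_div (4:ℝ) d]
    calc 1 / Real.sinh (Real.pi * d / h) / d ≤ 4 * Real.exp (-(Real.pi * d / h)) / d := by gcongr
      _ = _ := by ring
  rw [mul_assoc]
  gcongr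

/-- Error of truncated sinc interpolation. -/
lemma DecayOn.interp {F : ℂ → ℂ} {d ε C h : ℝ} (hε : 0 < ε) (hd : 0 < d) (hF : DecayOn F d ε C)
    (hh : 0 < h) (hh1 : h ≤ 1) (hhd : h ≤ d) (N : ℕ) (x : ℝ) :
    ‖F x - ∑ j ∈ Finset.Icc (-(N:ℤ)) (N:ℤ), (sincF j h x : ℂ) * F (j * h)‖ ≤
      C * dewInt ε * (4 / d) * Real.exp (-(Real.pi * d / h)) +
        C * (16 / ε / h * dew (ε / 2) (N * h)) := by
  have hC0 := hF.nonneg hd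
  refine le_of_strip_limit hd hh ?_ (mul_nonneg hC0 (dewInt_nonneg ε)) hhd
  intro c hc hcd
  have hlim := (hF.tendsto_sincErr hε hc hcd hh x).norm.add_const
    (C * (16 / ε / h * dew (ε / 2) (N * h)))
  refine le_trans (ge_of_tendsto hlim ?_) (add_le_add (hF.norm_sincErr_le hε hc hcd hh x) le_rfl)
  filter_upwards [eventually_ge_atTop N] with M hM
  have h1 := norm_sum_sub_sum_le hε hh hh1 (B := 1) (hF.bound_node hd h)
    (p := fun j => (sincF j h x : ℂ)) (fun j => by
      rw [Complex.norm_real]; exact abs_sincF_le_one j hh x) hM hC0 zero_le_one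
  rw [one_mul] at h1
  refine le_trans ?_ (add_le_add le_rfl h1)
  refine le_trans (le_of_eq ?_) (norm_add_le _ _)
  congr 1; ring

/-- The oscillation of `sin (πy/h)` gains a factor `h` against the Cauchy kernel,
by one integration by parts. -/
lemma norm_integral_sin_kernel_le {h c : ℝ} (hh : 0 < h) (hc : c ≠ 0) {X x : ℝ} (hX : X ≤ x) (s : ℝ) :
    ‖∫ y in X..x, Complex.sin (Real.pi * y / h) * (1 / (hline c s - y))‖ ≤ 2 * h / |c| := by
  have hpi := Real.pi_pos
  have hpiC : (Real.pi:ℂ) ≠ 0 := by exact_mod_cast Real.pi_ne_zero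
  have hhC : (h:ℂ) ≠ 0 := by exact_mod_cast hh.ne'
  have hc0 : 0 < |c| := abs_pos.2 hc
  set v : ℝ → ℂ := fun y => 1 / (hline c s - y) with hv
  set v' : ℝ → ℂ := fun y => 1 / (hline c s - y) ^ 2 with hv'
  set U : ℝ → ℂ := fun y => -((h / Real.pi) * Complex.cos (Real.pi * y / h)) with hU
  have hUd : ∀ y : ℝ, HasDerivAt U (Complex.sin (Real.pi * y / h)) y := by
    intro y
    have h1 : HasDerivAt (fun y : ℂ => Real.pi * y / h) (Real.pi / h) (y:ℂ) := by
      have := ((hasDerivAt_id (y:ℂ)).const_mul (Real.pi:ℂ)).div_const (h:ℂ)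
      exact this.congr_deriv (by simp)
    have h2 := ((h1.ccos.const_mul (h / Real.pi : ℂ)).neg).comp_ofReal
    refine h2.congr_deriv ?_
    field_simp
  have hvd : ∀ y : ℝ, HasDerivAt v (v' y) y := by
    intro y
    have h1 : HasDerivAt (fun y : ℂ => hline c s - y) (-1) (y:ℂ) := by
      simpa using (hasDerivAt_id (y:ℂ)).const_sub (hline c s)
    have h2 := (h1.inv (hline_sub_ne hc s y)).comp_ofReal
    have h3 : v = fun y : ℝ => (hline c s - y)⁻¹ := by ext y; simp [hv]
    rw [h3]
    refine h2.congr_deriv ?_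
    simp [hv']
  have hden : Continuous fun y : ℝ => hline c s - (y:ℂ) := by fun_prop
  have hvc : Continuous v := continuous_const.div hden fun y => hline_sub_ne hc s y
  have hv'c : Continuous v' := continuous_const.div (hden.pow 2) fun y =>
    pow_ne_zero 2 (hline_sub_ne hc s y)
  have hparts := intervalIntegral.integral_mul_deriv_eq_deriv_mul (a := X) (b := x)
    (u := v) (v := U) (u' := v') (v' := fun y : ℝ => Complex.sin (Real.pi * y / h))
    (fun y _ => hvd y) (fun y _ => hUd y) (hv'c.intervalIntegrable _ _)
    (Continuous.intervalIntegrable (by fun_prop) _ _)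
  simp_rw [mul_comm (Complex.sin _)]
  rw [hparts]
  have hUb : ∀ y, ‖U y‖ ≤ h / Real.pi := by
    intro y
    simp only [hU]
    rw [norm_neg, norm_mul, show (Real.pi * y / h : ℂ) = ((Real.pi * y / h : ℝ) : ℂ) by
      push_cast; rfl, ← Complex.ofReal_cos, ← Complex.ofReal_div, Complex.norm_real,
      Complex.norm_real, Real.norm_eq_abs, Real.norm_eq_abs, abs_of_pos (by positivity)]
    exact mul_le_of_le_one_right (by positivity) (Real.abs_cos_le_one _)
  have hvb : ∀ y, ‖v y‖ ≤ 1 / |c| := by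
    intro y
    rw [hv, norm_div, norm_one]
    exact one_div_le_one_div_of_le hc0 (abs_le_norm_hline_sub c s y)
  have hbd : ∀ y, ‖v y * U y‖ ≤ 1 / |c| * (h / Real.pi) := fun y => by
    rw [norm_mul]; exact mul_le_mul (hvb y) (hUb y) (norm_nonneg _) (by positivity)
  have hint : ‖∫ y in X..x, v' y * U y‖ ≤ (Real.pi / |c|) * (h / Real.pi) := by
    have hpoi := (integrable_poisson hc0 s).mul_const (h / Real.pi)
    refine (intervalIntegral.norm_integral_le_of_norm_le hX (g := fun y =>
      ((s - y) ^ 2 + |c| ^ 2)⁻¹ * (h / Real.pi)) (Eventually.of_forall fun y _ => ?_)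
      hpoi.intervalIntegrable).trans ?_
    · rw [norm_mul]
      refine mul_le_mul (le_of_eq ?_) (hUb y) (norm_nonneg _) (by positivity)
      simp only [hv']
      rw [norm_div, norm_one, norm_pow, norm_hline_sub_sq, sq_abs, one_div]
      congr 1; ring
    · rw [intervalIntegral.integral_of_le hX, ← integral_poisson hc0 s, ← integral_mul_const]
      exact setIntegral_le_integral hpoi (Eventually.of_forall fun y => by simp only [Pi.zero_apply]; positivity)
  calc _ ≤ ‖v x * U x‖ + ‖v X * U X‖ + ‖∫ y in X..x, v' y * U y‖ :=
        (norm_sub_le _ _).trans (add_le_add (norm_sub_le _ _) le_rfl)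
    _ ≤ 1 / |c| * (h / Real.pi) + 1 / |c| * (h / Real.pi) + (Real.pi / |c|) * (h / Real.pi) :=
        add_le_add (add_le_add (hbd x) (hbd X)) hint
    _ = (2 / Real.pi + 1) * h / |c| := by field_simp; ring
    _ ≤ 2 * h / |c| := by
        have : 2 / Real.pi ≤ 1 := by rw [div_le_one hpi]; linarith [Real.pi_gt_three]
        gcongr
        linarith

lemma DecayOn.norm_integral_sincErr_le {F : ℂ → ℂ} {d ε C c h : ℝ} (hε : 0 < ε)
    (hF : DecayOn F d ε C) (hc : 0 < c) (hcd : c < d) (hh : 0 < h) {X x : ℝ} (hX : X ≤ x) :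
    ‖∫ y in X..x, sincErr F c h y‖ ≤
      C * dewInt ε * (2 * h * (1 / (c * Real.sinh (Real.pi * c / h)))) := by
  have hc1 : |c| < d := by rwa [abs_of_pos hc]
  have hc2 : |-c| < d := by rwa [abs_neg, abs_of_pos hc]
  have hcn : (-c) ≠ 0 := by simpa using hc.ne'
  have hC0 := hF.nonneg (hc.trans hcd)
  have hcont : ∀ e : ℝ, e ≠ 0 → |e| < d →
      Continuous fun p : ℝ × ℝ => F (hline e p.2) * errKer h p.1 (hline e p.2) := fun e he hed =>
    ((hF.cont_line hed).comp continuous_snd).mul (continuous_errKer hh he)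
  have hint : ∀ e : ℝ, e ≠ 0 → |e| < d →
      Integrable (fun p : ℝ × ℝ => F (hline e p.2) * errKer h p.1 (hline e p.2))
        ((volume.restrict (Set.uIoc X x)).prod volume) := by
    intro e he hed
    have hfin : IsFiniteMeasure (volume.restrict (Set.uIoc X x)) := by
      refine ⟨?_⟩
      rw [Measure.restrict_apply_univ, Set.uIoc]
      exact measure_Ioc_lt_top
    have h1 : Integrable (fun p : ℝ × ℝ =>
        (1 / (|e| * Real.sinh (Real.pi * |e| / h))) * (C * dew ε p.2))
        ((volume.restrict (Set.uIoc X x)).prod volume) :=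
      Integrable.mul_prod (integrable_const _) ((integrable_dew hε).const_mul C)
    refine h1.mono' (hcont e he hed).aestronglyMeasurable (Eventually.of_forall fun p => ?_)
    rw [norm_mul, mul_comm]
    exact mul_le_mul (norm_errKer_le hh he _ _) (hF.bound_line hed _) (norm_nonneg _)
      (le_trans (norm_nonneg _) (norm_errKer_le hh he 0 0))
  unfold sincErr
  rw [intervalIntegral.integral_const_mul,
    intervalIntegral_integral_swap (f := fun y s => errInt F c h y s)
      ((hint _ hcn hc2).sub (hint _ hc.ne' hc1))]
  have hi : ∀ s, ∫ y in X..x, errInt F c h y s =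
      F (hline (-c) s) * (∫ y in X..x, errKer h y (hline (-c) s)) -
        F (hline c s) * ∫ y in X..x, errKer h y (hline c s) := by
    intro s
    unfold errInt
    have hk : ∀ e : ℝ, e ≠ 0 → Continuous fun y => errKer h y (hline e s) := fun e he =>
      (continuous_errKer hh he).comp (g := fun p : ℝ × ℝ => errKer h p.1 (hline e p.2))
        (f := fun y : ℝ => (y, s)) (by fun_prop)
    have i1 : IntervalIntegrable (fun y => F (hline (-c) s) * errKer h y (hline (-c) s))
        volume X x := (continuous_const.mul (hk (-c) hcn)).intervalIntegrable _ _
    have i2 : IntervalIntegrable (fun y => F (hline c s) * errKer h y (hline c s))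
        volume X x := (continuous_const.mul (hk c hc.ne')).intervalIntegrable _ _
    rw [intervalIntegral.integral_sub i1 i2, intervalIntegral.integral_const_mul,
      intervalIntegral.integral_const_mul]
  simp_rw [hi]
  have hb : ∀ e : ℝ, e ≠ 0 → ∀ s, ‖∫ y in X..x, errKer h y (hline e s)‖ ≤
      2 * h * (1 / (|e| * Real.sinh (Real.pi * |e| / h))) := by
    intro e he s
    have h1 : ∀ y : ℝ, errKer h y (hline e s) = (1 / Complex.sin (Real.pi * hline e s / h)) *
        (Complex.sin (Real.pi * y / h) * (1 / (hline e s - y))) := by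
      intro y
      rw [errKer]; field_simp
    simp_rw [h1]
    rw [intervalIntegral.integral_const_mul, norm_mul, norm_div, norm_one]
    have h2 := norm_integral_sin_kernel_le hh he hX s
    have h3 := one_div_le_one_div_of_le (sinh_pos_aux hh he) (sinh_le_norm_sin_hline (c := e) hh s)
    calc _ ≤ (1 / Real.sinh (Real.pi * |e| / h)) * (2 * h / |e|) :=
          mul_le_mul h3 h2 (norm_nonneg _) (by have := sinh_pos_aux hh he; positivity)
      _ = _ := by
          rw [div_mul_div_comm, one_mul, mul_one_div, mul_comm |e|]
  refine hF.norm_contour_le hε hc hcd (q := fun w => ∫ y in X..x, errKer h y w) ?_ ?_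
  · intro s
    simpa only [abs_of_pos hc] using hb c hc.ne' s
  · intro s
    simpa only [abs_neg, abs_of_pos hc] using hb (-c) hcn s

lemma continuous_sincF (j : ℤ) {h : ℝ} (hh : 0 < h) : Continuous (sincF j h) := by
  have : sincF j h = fun x => Real.sinc (Real.pi * (x - j * h) / h) := by
    ext x; exact sincF_eq j hh x
  rw [this]
  exact Real.continuous_sinc.comp (by fun_prop)

lemma integral_sincF (j : ℤ) {h : ℝ} (hh : 0 < h) (X x : ℝ) :
    ∫ y in X..x, sincF j h y = Jfun j h x - Jfun j h X :=
  intervalIntegral.integral_eq_sub_of_hasDerivAt (fun y _ => hasDerivAt_Jfun j hh y)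
    ((continuous_sincF j hh).intervalIntegrable _ _)

/-- Error of truncated sinc indefinite integration. -/
lemma DecayOn.quad {F : ℂ → ℂ} {d ε C h : ℝ} (hε : 0 < ε) (hd : 0 < d) (hF : DecayOn F d ε C)
    (hh : 0 < h) (hh1 : h ≤ 1) (hhd : h ≤ d) (N : ℕ) (x : ℝ) :
    ‖(∫ y in Iic x, F y) - ∑ j ∈ Finset.Icc (-(N:ℤ)) (N:ℤ), (Jfun j h x : ℂ) * F (j * h)‖ ≤
      C * dewInt ε * (2 * h) * (4 / d) * Real.exp (-(Real.pi * d / h)) +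
        4 * h * C * (16 / ε / h * dew (ε / 2) (N * h)) := by
  have hC0 := hF.nonneg hd
  refine le_of_strip_limit hd hh ?_ (mul_nonneg (mul_nonneg hC0 (dewInt_nonneg ε)) (by positivity)) hhd
  intro c hc hcd
  have hFi := hF.integrable_real hε hd
  -- first a bound on `[X, x]`, uniform in `X`
  have hfinite : ∀ X ≤ x, ‖(∫ y in X..x, F y) - ∑ j ∈ Finset.Icc (-(N:ℤ)) (N:ℤ),
      ((Jfun j h x - Jfun j h X : ℝ) : ℂ) * F (j * h)‖ ≤
      C * dewInt ε * (2 * h) * (1 / (c * Real.sinh (Real.pi * c / h))) +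
        4 * h * C * (16 / ε / h * dew (ε / 2) (N * h)) := by
    intro X hX
    set R : ℕ → ℝ → ℂ := fun M y =>
      F y - ∑ j ∈ Finset.Icc (-(M:ℤ)) (M:ℤ), (sincF j h y : ℂ) * F (j * h) with hR
    have hsc : ∀ j : ℤ, Continuous fun y : ℝ => (sincF j h y : ℂ) * F (j * h) := fun j =>
      (Complex.continuous_ofReal.comp (continuous_sincF j hh)).mul continuous_const
    have hRc : ∀ M, Continuous (R M) := fun M =>
      (hF.cont_real hd).sub (continuous_finsetSum _ fun j _ => hsc j)
    have hRv : ∀ M : ℕ, ∫ y in X..x, R M y = (∫ y in X..x, F y) -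
        ∑ j ∈ Finset.Icc (-(M:ℤ)) (M:ℤ), ((Jfun j h x - Jfun j h X : ℝ) : ℂ) * F (j * h) := by
      intro M
      rw [hR, intervalIntegral.integral_sub ((hF.cont_real hd).intervalIntegrable _ _)
        ((continuous_finsetSum _ fun j _ => hsc j).intervalIntegrable _ _),
        intervalIntegral.integral_finsetSum fun j _ => (hsc j).intervalIntegrable _ _]
      congr 1
      refine Finset.sum_congr rfl fun j _ => ?_
      rw [intervalIntegral.integral_mul_const, intervalIntegral.integral_ofReal, integral_sincF j hh]
    have hlim : Tendsto (fun M => ∫ y in X..x, R M y) atTop (𝓝 (∫ y in X..x, sincErr F c h y)) := by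
      refine intervalIntegral.tendsto_integral_filter_of_dominated_convergence
        (fun _ => C + C * (8 / ε / h)) (Eventually.of_forall fun M => (hRc M).aestronglyMeasurable)
        (Eventually.of_forall fun M => Eventually.of_forall fun y _ => ?_)
        intervalIntegrable_const
        (Eventually.of_forall fun y _ => hF.tendsto_sincErr hε hc hcd hh y)
      refine (norm_sub_le _ _).trans (add_le_add ?_ ?_)
      · exact (hF.bound_real hd y).trans (mul_le_of_le_one_right hC0 (dew_le_one hε.le _))
      · refine (norm_sum_le _ _).trans ?_
        refine le_trans ?_ (mul_le_mul_of_nonneg_left (sum_dew_le hε hh hh1 M) hC0)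
        rw [Finset.mul_sum]
        refine Finset.sum_le_sum fun j _ => ?_
        rw [norm_mul, Complex.norm_real]
        calc _ ≤ 1 * (C * dew ε (j * h)) := mul_le_mul (abs_sincF_le_one j hh y)
              (hF.bound_node hd h j) (norm_nonneg _) zero_le_one
          _ = _ := one_mul _
    have hlim2 := hlim.norm.add_const (4 * h * C * (16 / ε / h * dew (ε / 2) (N * h)))
    have hE := hF.norm_integral_sincErr_le hε hc hcd hh hX
    rw [← mul_assoc] at hE
    refine le_trans (ge_of_tendsto hlim2 ?_) (add_le_add hE le_rfl)
    filter_upwards [eventually_ge_atTop N] with M hM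
    have h1 := norm_sum_sub_sum_le hε hh hh1 (B := 4 * h) (hF.bound_node hd h)
      (p := fun j => ((Jfun j h x - Jfun j h X : ℝ) : ℂ)) (fun j => by
        rw [Complex.norm_real]
        refine (norm_sub_le _ _).trans ?_
        have := abs_Jfun_le j hh x
        have := abs_Jfun_le j hh X
        simp only [Real.norm_eq_abs]
        linarith) hM hC0 (by positivity)
    refine le_trans ?_ (add_le_add le_rfl h1)
    rw [hRv]
    refine le_trans (le_of_eq ?_) (norm_add_le _ _)
    congr 1; ring
  have hlimX : Tendsto (fun X => ‖(∫ y in X..x, F y) - ∑ j ∈ Finset.Icc (-(N:ℤ)) (N:ℤ),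
      ((Jfun j h x - Jfun j h X : ℝ) : ℂ) * F (j * h)‖) atBot
      (𝓝 ‖(∫ y in Iic x, F y) - ∑ j ∈ Finset.Icc (-(N:ℤ)) (N:ℤ),
        ((Jfun j h x - 0 : ℝ) : ℂ) * F (j * h)‖) := by
    refine ((intervalIntegral_tendsto_integral_Iic x hFi.integrableOn tendsto_id).sub
      (tendsto_finsetSum _ fun j _ => ?_)).norm
    exact (Complex.continuous_ofReal.continuousAt.tendsto.comp
      ((tendsto_Jfun_atBot j hh).const_sub _)).mul_const _
  simp only [sub_zero] at hlimX
  refine le_of_tendsto hlimX ?_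
  filter_upwards [eventually_le_atBot x] with X hX
  exact hfinite X hX

/-! ### The double exponential transformation -/

/-- The inner function `(π/2) sinh z` of the DE transformation. -/
def deW (z : ℂ) : ℂ := (Real.pi : ℂ) / 2 * Complex.sinh z

/-- The complex derivative of the DE transformation. -/
def psiD (a b : ℝ) (z : ℂ) : ℂ :=
  ((b : ℂ) - a) / 2 * ((Real.pi : ℂ) / 2 * Complex.cosh z / Complex.cosh (deW z) ^ 2)

/-- The decay exponent of the DE transformation on `D_d`. -/
def deK (d : ℝ) : ℝ := Real.pi / 2 * Real.cos d

lemma deK_pos {d : ℝ} (hd : 0 < d) (hdpi : d < Real.pi / 2) : 0 < deK d :=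
  mul_pos (by have := Real.pi_pos; positivity) (Real.cos_pos_of_mem_Ioo ⟨by linarith, hdpi⟩)

lemma sinh_re_im (z : ℂ) : (Complex.sinh z).re = Real.sinh z.re * Real.cos z.im ∧
    (Complex.sinh z).im = Real.cosh z.re * Real.sin z.im := by
  have e : Complex.sinh z = ((Real.sinh z.re * Real.cos z.im : ℝ) : ℂ) +
      ((Real.cosh z.re * Real.sin z.im : ℝ) : ℂ) * Complex.I := by
    conv_lhs => rw [← Complex.re_add_im z]
    rw [Complex.sinh_add, Complex.cosh_mul_I, Complex.sinh_mul_I]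
    push_cast; ring
  rw [e]
  constructor
  · rw [Complex.add_re, Complex.ofReal_re, Complex.re_ofReal_mul, Complex.I_re]; ring
  · rw [Complex.add_im, Complex.ofReal_im, Complex.im_ofReal_mul, Complex.I_im]; ring

lemma deW_re (z : ℂ) : (deW z).re = Real.pi / 2 * (Real.sinh z.re * Real.cos z.im) := by
  rw [deW, show (Real.pi : ℂ) / 2 = ((Real.pi / 2 : ℝ) : ℂ) by push_cast; rfl,
    Complex.re_ofReal_mul, (sinh_re_im z).1]

lemma deW_im (z : ℂ) : (deW z).im = Real.pi / 2 * (Real.cosh z.re * Real.sin z.im) := by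
  rw [deW, show (Real.pi : ℂ) / 2 = ((Real.pi / 2 : ℝ) : ℂ) by push_cast; rfl,
    Complex.im_ofReal_mul, (sinh_re_im z).2]

lemma norm_cosh_sq (w : ℂ) : ‖Complex.cosh w‖ ^ 2 = Real.sinh w.re ^ 2 + Real.cos w.im ^ 2 := by
  have e : Complex.cosh w = ((Real.cosh w.re * Real.cos w.im : ℝ) : ℂ) +
      ((Real.sinh w.re * Real.sin w.im : ℝ) : ℂ) * Complex.I := by
    conv_lhs => rw [← Complex.re_add_im w]
    rw [Complex.cosh_add, Complex.cosh_mul_I, Complex.sinh_mul_I]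
    push_cast; ring
  rw [← Complex.normSq_eq_norm_sq, e, Complex.normSq_add_mul_I, mul_pow, mul_pow, Real.cosh_sq]
  linear_combination Real.sinh w.re ^ 2 * Real.sin_sq_add_cos_sq w.im

lemma cos_im_ge {d : ℝ} (hdpi : d < Real.pi / 2) {z : ℂ} (hz : z ∈ Dstrip d) :
    Real.cos d ≤ Real.cos z.im := by
  rw [← Real.cos_abs z.im]
  have h : |z.im| < d := hz
  exact Real.cos_le_cos_of_nonneg_of_le_pi (abs_nonneg _) (by linarith [Real.pi_pos]) h.le

lemma abs_sin_im_le {d : ℝ} (hdpi : d < Real.pi / 2) {z : ℂ} (hz : z ∈ Dstrip d) :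
    |Real.sin z.im| ≤ Real.sin d := by
  have h : |z.im| < d := hz
  have h1 := abs_lt.1 h
  rw [abs_le]
  constructor
  · rw [← Real.sin_neg]
    exact Real.sin_le_sin_of_le_of_le_pi_div_two (by linarith) (by linarith) h1.1.le
  · exact Real.sin_le_sin_of_le_of_le_pi_div_two (by linarith) (by linarith) h1.2.le

lemma cosh_sub_one_le_abs_sinh (x : ℝ) : Real.cosh x - 1 ≤ |Real.sinh x| := by
  refine abs_le_of_sq_le_sq' ?_ (abs_nonneg _) |>.2
  rw [sq_abs]
  have := Real.cosh_sq x
  nlinarith [Real.one_le_cosh x]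

lemma abs_sinh_mul_le {d : ℝ} (hd : 0 < d) (hdpi : d < Real.pi / 2) {z : ℂ} (hz : z ∈ Dstrip d) :
    deK d * |Real.sinh z.re| ≤ |(deW z).re| := by
  have hc := cos_im_ge hdpi hz
  have hc0 : 0 < Real.cos d := Real.cos_pos_of_mem_Ioo ⟨by linarith, hdpi⟩
  rw [deW_re, abs_mul, abs_mul, abs_of_pos (show 0 < Real.pi / 2 by linarith),
    abs_of_pos (hc0.trans_le hc), deK, mul_assoc, mul_comm (Real.cos d)]
  have := Real.pi_pos
  gcongr

lemma deK_mul_le {d : ℝ} (hd : 0 < d) (hdpi : d < Real.pi / 2) {z : ℂ} (hz : z ∈ Dstrip d) :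
    deK d * (Real.cosh z.re - 1) ≤ |(deW z).re| :=
  (mul_le_mul_of_nonneg_left (cosh_sub_one_le_abs_sinh _) (deK_pos hd hdpi).le).trans
    (abs_sinh_mul_le hd hdpi hz)

/-- The denominator of the DE transformation grows like `exp |Re w|` on the strip: where `Re w` is
bounded away from zero the hyperbolic sine does it, and elsewhere `|Im w|` stays below `π/2`. -/
lemma exists_cosh_lower {d : ℝ} (hd : 0 < d) (hdpi : d < Real.pi / 2) :
    ∃ c > 0, ∀ z ∈ Dstrip d, c * Real.exp |(deW z).re| ≤ ‖Complex.cosh (deW z)‖ := by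
  have hpi := Real.pi_pos
  have hκ := deK_pos hd hdpi
  have hs0 : 0 < Real.sin d := Real.sin_pos_of_pos_of_lt_pi hd (by linarith)
  have hs1 : Real.sin d < 1 := by
    have h := Real.sin_lt_sin_of_lt_of_le_pi_div_two (show -(Real.pi / 2) ≤ d by linarith) le_rfl hdpi
    rwa [Real.sin_pi_div_two] at h
  set q := (1 / Real.sin d - 1) / 2 with hq
  have hq0 : 0 < q := by
    have : 1 < 1 / Real.sin d := by rw [lt_div_iff₀ hs0]; linarith
    rw [hq]; linarith
  set δ := deK d * Real.sqrt q with hδ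
  have hδ0 : 0 < δ := mul_pos hκ (Real.sqrt_pos.2 hq0)
  set β := Real.pi / 2 * ((1 + Real.sin d) / 2) with hβ
  have hβ0 : 0 < β := by positivity
  have hβ1 : β < Real.pi / 2 := by rw [hβ]; nlinarith
  have hcβ : 0 < Real.cos β := Real.cos_pos_of_mem_Ioo ⟨by linarith, hβ1⟩
  have he1 : Real.exp (-(2 * δ)) < 1 := by rw [Real.exp_lt_one_iff]; linarith
  refine ⟨min ((1 - Real.exp (-(2 * δ))) / 2) (Real.cos β * Real.exp (-δ)),
    lt_min (by linarith) (by positivity), fun z hz => ?_⟩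
  have hn := norm_cosh_sq (deW z)
  set r := |(deW z).re| with hr
  have hr0 : 0 ≤ r := abs_nonneg _
  have hsr : Real.sinh (deW z).re ^ 2 = Real.sinh r ^ 2 := by
    rcases abs_choice (deW z).re with h | h <;> rw [hr, h]
    rw [Real.sinh_neg]; ring
  rw [hsr] at hn
  by_cases hrδ : δ ≤ r
  · refine le_trans (mul_le_mul_of_nonneg_right (min_le_left _ _) (Real.exp_pos _).le) ?_
    have h1 : Real.sinh r ≤ ‖Complex.cosh (deW z)‖ :=
      (abs_le_of_sq_le_sq' (by rw [hn]; nlinarith [sq_nonneg (Real.cos (deW z).im)])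
        (norm_nonneg _)).2
    refine le_trans ?_ h1
    rw [Real.sinh_eq]
    have h2 : Real.exp (-r) ≤ Real.exp (-(2 * δ)) * Real.exp r := by
      rw [← Real.exp_add]; exact Real.exp_le_exp.2 (by linarith)
    nlinarith
  · push Not at hrδ
    refine le_trans (mul_le_mul_of_nonneg_right (min_le_right _ _) (Real.exp_pos _).le) ?_
    have h1 : deK d * |Real.sinh z.re| ≤ δ := (abs_sinh_mul_le hd hdpi hz).trans hrδ.le
    have h2 : |Real.sinh z.re| ≤ Real.sqrt q := le_of_mul_le_mul_left h1 hκ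
    have h3 : Real.sinh z.re ^ 2 ≤ q := by
      rw [← sq_abs, ← Real.sq_sqrt hq0.le]
      exact pow_le_pow_left₀ (abs_nonneg _) h2 2
    have h4 : Real.cosh z.re ≤ 1 + q := by
      have := Real.cosh_sq z.re
      nlinarith [Real.one_le_cosh z.re]
    have h5 : |(deW z).im| ≤ β := by
      rw [deW_im, abs_mul, abs_mul, abs_of_pos (by positivity : (0:ℝ) < Real.pi / 2),
        abs_of_pos (Real.cosh_pos _), hβ]
      have h6 := abs_sin_im_le hdpi hz
      have h7 : Real.cosh z.re * |Real.sin z.im| ≤ (1 + q) * Real.sin d :=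
        mul_le_mul h4 h6 (abs_nonneg _) (by linarith)
      have h8 : (1 + q) * Real.sin d = (1 + Real.sin d) / 2 := by rw [hq]; field_simp; ring
      rw [h8] at h7
      gcongr
    have h9 : Real.cos β ≤ Real.cos (deW z).im := by
      rw [← Real.cos_abs (deW z).im]
      exact Real.cos_le_cos_of_nonneg_of_le_pi (abs_nonneg _) (by linarith) h5
    have h10 : Real.cos β ≤ ‖Complex.cosh (deW z)‖ :=
      (abs_le_of_sq_le_sq' (by rw [hn]; nlinarith [sq_nonneg (Real.sinh r)]) (norm_nonneg _)).2
    refine le_trans ?_ h10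
    rw [mul_assoc, ← Real.exp_add]
    refine mul_le_of_le_one_right hcβ.le ?_
    rw [Real.exp_le_one_iff]; linarith

lemma cosh_deW_ne {d : ℝ} (hd : 0 < d) (hdpi : d < Real.pi / 2) {z : ℂ} (hz : z ∈ Dstrip d) :
    Complex.cosh (deW z) ≠ 0 := by
  obtain ⟨c, hc, h⟩ := exists_cosh_lower hd hdpi
  rw [← norm_pos_iff]
  exact lt_of_lt_of_le (by positivity) (h z hz)

lemma psiDEC_sub_a {a b : ℝ} {z : ℂ} (hz : Complex.cosh (deW z) ≠ 0) :
    psiDEC a b z - a = ((b:ℂ) - a) / 2 * (Complex.exp (deW z) / Complex.cosh (deW z)) := by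
  rw [psiDEC, Complex.tanh_eq_sinh_div_cosh, ← Complex.cosh_add_sinh]
  change Complex.cosh (Real.pi / 2 * Complex.sinh z) ≠ 0 at hz
  rw [deW]
  generalize Complex.cosh (Real.pi / 2 * Complex.sinh z) = p at *
  field_simp; ring

lemma b_sub_psiDEC {a b : ℝ} {z : ℂ} (hz : Complex.cosh (deW z) ≠ 0) :
    b - psiDEC a b z = ((b:ℂ) - a) / 2 * (Complex.exp (-deW z) / Complex.cosh (deW z)) := by
  rw [psiDEC, Complex.tanh_eq_sinh_div_cosh, ← Complex.cosh_sub_sinh]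
  change Complex.cosh (Real.pi / 2 * Complex.sinh z) ≠ 0 at hz
  rw [deW]
  generalize Complex.cosh (Real.pi / 2 * Complex.sinh z) = p at *
  field_simp; ring

lemma hasDerivAt_psiDEC {a b : ℝ} {z : ℂ} (hz : Complex.cosh (deW z) ≠ 0) :
    HasDerivAt (psiDEC a b) (psiD a b z) z := by
  have hw : HasDerivAt deW ((Real.pi:ℂ) / 2 * Complex.cosh z) z :=
    (Complex.hasDerivAt_sinh z).const_mul _
  have h1 := ((hw.csinh.div hw.ccosh hz).const_mul (((b:ℂ) - a) / 2)).add_const (((b:ℂ) + a) / 2)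
  have h2 : psiDEC a b = fun z => ((b:ℂ) - a) / 2 * (Complex.sinh (deW z) / Complex.cosh (deW z)) +
      ((b:ℂ) + a) / 2 := by
    ext z; rw [psiDEC, Complex.tanh_eq_sinh_div_cosh]; rfl
  rw [h2]
  refine h1.congr_deriv ?_
  rw [psiD]
  congr 1; congr 1
  have := Complex.cosh_sq (deW z)
  linear_combination ((Real.pi:ℂ) / 2 * Complex.cosh z) * this

lemma differentiableOn_psiD {a b d : ℝ} (hd : 0 < d) (hdpi : d < Real.pi / 2) :
    DifferentiableOn ℂ (psiD a b) (Dstrip d) := by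
  intro z hz
  have hw : DifferentiableAt ℂ deW z :=
    ((Complex.hasDerivAt_sinh z).const_mul _).differentiableAt
  refine DifferentiableAt.differentiableWithinAt ?_
  unfold psiD
  have hz' := cosh_deW_ne hd hdpi hz
  refine DifferentiableAt.const_mul (DifferentiableAt.div ?_ (hw.ccosh.pow 2) (pow_ne_zero 2 hz')) _
  exact Complex.differentiable_cosh.differentiableAt.const_mul _

lemma differentiableOn_psiDEC {a b d : ℝ} (hd : 0 < d) (hdpi : d < Real.pi / 2) :
    DifferentiableOn ℂ (psiDEC a b) (Dstrip d) := fun _ hz =>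
  (hasDerivAt_psiDEC (cosh_deW_ne hd hdpi hz)).differentiableAt.differentiableWithinAt

lemma norm_cosh_le (z : ℂ) : ‖Complex.cosh z‖ ≤ Real.cosh z.re := by
  refine (abs_le_of_sq_le_sq' ?_ (Real.cosh_pos _).le).2
  rw [norm_cosh_sq, Real.cosh_sq]
  nlinarith [Real.cos_sq_le_one z.im]

/-- Double exponential decay of the DE transformation towards the endpoints, and of its
derivative. -/
lemma exists_psi_bounds (a b : ℝ) {d : ℝ} (hd : 0 < d) (hdpi : d < Real.pi / 2) :
    ∃ C > 0, ∀ z ∈ Dstrip d, ‖psiD a b z‖ ≤ C * dew (deK d) z.re ∧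
      (z.re ≤ 0 → ‖psiDEC a b z - a‖ ≤ C * dew (deK d) z.re) ∧
      (0 ≤ z.re → ‖b - psiDEC a b z‖ ≤ C * dew (deK d) z.re) := by
  obtain ⟨c, hc, hlow⟩ := exists_cosh_lower hd hdpi
  have hκ := deK_pos hd hdpi
  have hpi := Real.pi_pos
  set κ := deK d with hκd
  set A := ‖((b:ℂ) - a) / 2‖ with hA
  have hA0 : 0 ≤ A := norm_nonneg _
  refine ⟨(A + 1) * (1 / c + Real.pi / 2 * (1 / κ) / c ^ 2) * Real.exp (2 * κ), by positivity,
    fun z hz => ?_⟩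
  have hne := cosh_deW_ne hd hdpi hz
  have hl := hlow z hz
  have hkr := deK_mul_le hd hdpi hz
  rw [← hκd] at hkr
  set r := |(deW z).re| with hr
  have hr0 : 0 ≤ r := abs_nonneg _
  have hcpos : 0 < c * Real.exp r := by positivity
  have her : Real.exp (-r) ≤ Real.exp κ * dew κ z.re := by
    rw [dew, ← Real.exp_add]; exact Real.exp_le_exp.2 (by linarith)
  have hexp1 : Real.exp κ ≤ Real.exp (2 * κ) := Real.exp_le_exp.2 (by linarith)
  -- the common estimate for the two endpoint differences
  have hend : ∀ w : ℂ, w.re = -r →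
      ‖((b:ℂ) - a) / 2 * (Complex.exp w / Complex.cosh (deW z))‖ ≤
        (A + 1) * (1 / c + Real.pi / 2 * (1 / κ) / c ^ 2) * Real.exp (2 * κ) * dew κ z.re := by
    intro w hw
    rw [norm_mul, ← hA, norm_div, Complex.norm_exp, hw]
    have h1 : Real.exp (-r) / ‖Complex.cosh (deW z)‖ ≤ (1 / c) * (Real.exp κ * dew κ z.re) := by
      rw [div_le_iff₀ (hcpos.trans_le hl)]
      have h2 : (1:ℝ) ≤ Real.exp r := Real.one_le_exp hr0
      have h3 : c ≤ ‖Complex.cosh (deW z)‖ := by nlinarith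
      calc Real.exp (-r) ≤ Real.exp κ * dew κ z.re := her
        _ = (1 / c) * (Real.exp κ * dew κ z.re) * c := by field_simp
        _ ≤ _ := by
          have := dew_pos κ z.re
          gcongr
    have hdp := dew_pos κ z.re
    calc A * (Real.exp (-r) / ‖Complex.cosh (deW z)‖) ≤
          (A + 1) * ((1 / c) * (Real.exp κ * dew κ z.re)) := by
          gcongr; linarith
      _ ≤ (A + 1) * ((1 / c + Real.pi / 2 * (1 / κ) / c ^ 2) * (Real.exp (2 * κ) * dew κ z.re)) := by
          gcongr
          exact le_add_of_nonneg_right (by positivity)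
      _ = _ := by ring
  refine ⟨?_, fun hx => ?_, fun hx => ?_⟩
  · rw [psiD, norm_mul, ← hA, norm_div, norm_mul, norm_pow]
    have e1 : ‖(Real.pi : ℂ) / 2‖ = Real.pi / 2 := by
      rw [show (Real.pi : ℂ) / 2 = ((Real.pi / 2 : ℝ) : ℂ) by push_cast; rfl, Complex.norm_real,
        Real.norm_eq_abs, abs_of_pos (by positivity)]
    rw [e1]
    have hdp := dew_pos κ z.re
    have h1 : Real.cosh z.re ≤ (1 / κ) * Real.exp (κ * Real.cosh z.re) := by
      rw [one_div, ← div_eq_inv_mul, le_div_iff₀ hκ]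
      linarith [Real.add_one_le_exp (κ * Real.cosh z.re)]
    have h2 : Real.exp (-r) ^ 2 ≤ Real.exp (2 * κ) * dew κ z.re ^ 2 := by
      rw [show Real.exp (2 * κ) = Real.exp κ ^ 2 by rw [← Real.exp_nat_mul]; norm_num, ← mul_pow]
      exact pow_le_pow_left₀ (Real.exp_pos _).le her 2
    have h3 : Real.exp (κ * Real.cosh z.re) * dew κ z.re = 1 := by
      rw [dew, ← Real.exp_add]; simp
    have h4 : Real.pi / 2 * ‖Complex.cosh z‖ / ‖Complex.cosh (deW z)‖ ^ 2 ≤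
        Real.pi / 2 * (1 / κ) / c ^ 2 * (Real.exp (2 * κ) * dew κ z.re) := by
      calc _ ≤ Real.pi / 2 * ((1 / κ) * Real.exp (κ * Real.cosh z.re)) / (c * Real.exp r) ^ 2 := by
            gcongr
            exact (norm_cosh_le z).trans h1
        _ = Real.pi / 2 * (1 / κ) / c ^ 2 * (Real.exp (κ * Real.cosh z.re) * Real.exp (-r) ^ 2) := by
            rw [Real.exp_neg]; field_simp
        _ ≤ Real.pi / 2 * (1 / κ) / c ^ 2 * (Real.exp (κ * Real.cosh z.re) *
              (Real.exp (2 * κ) * dew κ z.re ^ 2)) := by gcongr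
        _ = Real.pi / 2 * (1 / κ) / c ^ 2 * (Real.exp (2 * κ) * dew κ z.re *
              (Real.exp (κ * Real.cosh z.re) * dew κ z.re)) := by ring
        _ = _ := by rw [h3, mul_one]
    calc _ ≤ (A + 1) * (Real.pi / 2 * (1 / κ) / c ^ 2 * (Real.exp (2 * κ) * dew κ z.re)) := by
          gcongr; linarith
      _ ≤ (A + 1) * ((1 / c + Real.pi / 2 * (1 / κ) / c ^ 2) * (Real.exp (2 * κ) * dew κ z.re)) := by
          gcongr
          exact le_add_of_nonneg_left (by positivity)
      _ = _ := by ring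
  · rw [psiDEC_sub_a hne]
    refine hend _ ?_
    have h0 : (deW z).re ≤ 0 := by
      rw [deW_re]
      have hc0 : 0 < Real.cos d := Real.cos_pos_of_mem_Ioo ⟨by linarith, hdpi⟩
      have h1 := hc0.trans_le (cos_im_ge hdpi hz)
      have h2 : Real.sinh z.re ≤ 0 := Real.sinh_nonpos_iff.2 hx
      exact mul_nonpos_of_nonneg_of_nonpos (by positivity) (mul_nonpos_of_nonpos_of_nonneg h2 h1.le)
    rw [hr, abs_of_nonpos h0, neg_neg]
  · rw [b_sub_psiDEC hne]
    refine hend _ ?_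
    have h0 : 0 ≤ (deW z).re := by
      rw [deW_re]
      have hc0 : 0 < Real.cos d := Real.cos_pos_of_mem_Ioo ⟨by linarith, hdpi⟩
      have h1 := hc0.trans_le (cos_im_ge hdpi hz)
      have h2 : 0 ≤ Real.sinh z.re := Real.sinh_nonneg_iff.2 hx
      positivity
    rw [hr, abs_of_nonneg h0, Complex.neg_re]

lemma psiDEC_ofReal (a b x : ℝ) : psiDEC a b x = (psiDE a b x : ℂ) := by
  rw [psiDEC, psiDE]; push_cast; rfl

lemma psiD_ofReal (a b x : ℝ) : psiD a b x = ((deriv (psiDE a b) x : ℝ) : ℂ) ∧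
    HasDerivAt (psiDE a b) (deriv (psiDE a b) x) x := by
  have hz : Complex.cosh (deW x) ≠ 0 := by
    rw [deW, show (Real.pi : ℂ) / 2 * Complex.sinh x = ((Real.pi / 2 * Real.sinh x : ℝ) : ℂ) by
      push_cast; rfl, ← Complex.ofReal_cosh]
    exact_mod_cast (Real.cosh_pos _).ne'
  have h1 := (hasDerivAt_psiDEC (a := a) (b := b) hz).real_of_complex
  simp only [psiDEC_ofReal, Complex.ofReal_re] at h1
  set D : ℝ := (b - a) / 2 * (Real.pi / 2 * Real.cosh x /
    Real.cosh (Real.pi / 2 * Real.sinh x) ^ 2) with hD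
  have h2 : psiD a b x = (D : ℂ) := by
    rw [psiD, hD, deW]; push_cast; rfl
  rw [h2, Complex.ofReal_re] at h1
  have h4 : HasDerivAt (psiDE a b) D x := h1
  rw [h4.deriv]
  exact ⟨h2, h4⟩

lemma tanh_eq_exp (v : ℝ) : Real.tanh v = (Real.exp (2 * v) - 1) / (Real.exp (2 * v) + 1) := by
  rw [Real.tanh_eq_sinh_div_cosh, Real.sinh_eq, Real.cosh_eq, Real.exp_neg, two_mul, Real.exp_add]
  have := Real.exp_pos v
  field_simp

lemma psiDE_mem {a b : ℝ} (hab : a < b) (x : ℝ) : psiDE a b x ∈ Ioo a b := by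
  rw [psiDE, tanh_eq_exp]
  have := Real.exp_pos (2 * (Real.pi / 2 * Real.sinh x))
  set E := Real.exp (2 * (Real.pi / 2 * Real.sinh x))
  have h1 : (b - a) / 2 * ((E - 1) / (E + 1)) + (b + a) / 2 = a + (b - a) * (E / (E + 1)) := by
    field_simp; ring
  have h2 : (b - a) / 2 * ((E - 1) / (E + 1)) + (b + a) / 2 = b - (b - a) * (1 / (E + 1)) := by
    field_simp; ring
  have hba : 0 < b - a := by linarith
  constructor
  · rw [h1]
    have : 0 < (b - a) * (E / (E + 1)) := by positivity
    linarith
  · rw [h2]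
    have : 0 < (b - a) * (1 / (E + 1)) := by positivity
    linarith

lemma phiDE_psiDE {a b : ℝ} (hab : a < b) (x : ℝ) : phiDE a b (psiDE a b x) = x := by
  have h : (psiDE a b x - a) / (b - psiDE a b x) = Real.exp (Real.pi * Real.sinh x) := by
    have hm := psiDE_mem hab x
    rw [div_eq_iff (by linarith [hm.2])]
    rw [psiDE, tanh_eq_exp, show 2 * (Real.pi / 2 * Real.sinh x) = Real.pi * Real.sinh x by ring]
    have := Real.exp_pos (Real.pi * Real.sinh x)
    field_simp
    ring
  rw [phiDE, h, Real.log_exp]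
  have := Real.pi_pos
  rw [show 1 / Real.pi * (Real.pi * Real.sinh x) = Real.sinh x by field_simp, Real.arsinh_sinh]

lemma psiDE_phiDE {a b t : ℝ} (ht : t ∈ Ioo a b) : psiDE a b (phiDE a b t) = t := by
  have h1 : 0 < t - a := by linarith [ht.1]
  have h2 : 0 < b - t := by linarith [ht.2]
  have hpi := Real.pi_pos
  rw [psiDE, phiDE, Real.sinh_arsinh, tanh_eq_exp,
    show 2 * (Real.pi / 2 * (1 / Real.pi * Real.log ((t - a) / (b - t)))) =
      Real.log ((t - a) / (b - t)) by field_simp, Real.exp_log (by positivity)]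
  have h3 : (t - a) / (b - t) + 1 = (b - a) / (b - t) := by field_simp; ring
  have h4 : (t - a) / (b - t) - 1 = (2 * t - a - b) / (b - t) := by field_simp; ring
  have h5 : b - a ≠ 0 := by linarith
  rw [h3, h4]
  field_simp; ring

lemma tendsto_dew_atTop {ε : ℝ} (hε : 0 < ε) : Tendsto (dew ε) atTop (𝓝 0) := by
  have : Tendsto (fun x => (2 / ε) * Real.exp (-|x|)) atTop (𝓝 0) := by
    simpa using (Real.tendsto_exp_neg_atTop_nhds_zero.comp tendsto_abs_atTop_atTop).const_mul (2 / ε)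
  exact squeeze_zero (fun x => (dew_pos _ _).le) (fun x => dew_le_exp hε x) this

lemma tendsto_dew_atBot {ε : ℝ} (hε : 0 < ε) : Tendsto (dew ε) atBot (𝓝 0) := by
  have : Tendsto (fun x => (2 / ε) * Real.exp (-|x|)) atBot (𝓝 0) := by
    simpa using (Real.tendsto_exp_neg_atTop_nhds_zero.comp tendsto_abs_atBot_atTop).const_mul (2 / ε)
  exact squeeze_zero (fun x => (dew_pos _ _).le) (fun x => dew_le_exp hε x) this

/-! ### Holomorphy of parameter integrals and of separately analytic functions on the diagonal -/

/-- A dominated integral of holomorphic functions is holomorphic, with the derivative taken under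
the integral sign: the domination of the derivatives comes from Cauchy's estimate. -/
lemma hasDerivAt_integral_param {Θ : Type*} [MeasurableSpace Θ] {μ : Measure Θ} {U : Set ℂ}
    (hU : IsOpen U) {f : ℂ → Θ → ℂ} {bound : Θ → ℝ}
    (hf : ∀ᵐ θ ∂μ, DifferentiableOn ℂ (fun z => f z θ) U)
    (hm : ∀ z ∈ U, AEStronglyMeasurable (f z) μ)
    (hb : ∀ᵐ θ ∂μ, ∀ z ∈ U, ‖f z θ‖ ≤ bound θ) (hbi : Integrable bound μ) {z₀ : ℂ} (hz : z₀ ∈ U) :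
    HasDerivAt (fun z => ∫ θ, f z θ ∂μ) (∫ θ, deriv (fun z => f z θ) z₀ ∂μ) z₀ := by
  obtain ⟨r, hr, hrU⟩ := Metric.isOpen_iff.1 hU z₀ hz
  refine (hasDerivAt_integral_of_dominated_loc_of_deriv_le (F := f)
    (F' := fun z θ => deriv (fun w => f w θ) z) (bound := fun θ => bound θ / (r / 3))
    (Metric.ball_mem_nhds z₀ (show (0:ℝ) < r / 3 by positivity)) ?_ ?_ ?_ ?_ ?_ ?_).2
  · filter_upwards [hU.mem_nhds hz] with z hz using hm z hz
  · refine hbi.mono' (hm z₀ hz) ?_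
    filter_upwards [hb] with θ hθ using hθ z₀ hz
  · -- the derivative is a pointwise limit of difference quotients
    have hlim : Tendsto (fun n : ℕ => ((r / 2 * (1 / ((n:ℝ) + 1)) : ℝ) : ℂ)) atTop (𝓝[≠] 0) := by
      refine tendsto_nhdsWithin_iff.2 ⟨?_, Eventually.of_forall fun n => ?_⟩
      · have := (tendsto_one_div_add_atTop_nhds_zero_nat (𝕜 := ℝ)).const_mul (r / 2)
        rw [mul_zero] at this
        exact_mod_cast (Complex.continuous_ofReal.tendsto 0).comp this
      · have : r / 2 * (1 / ((n:ℝ) + 1)) ≠ 0 := by positivity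
        simpa only [mem_compl_iff, mem_singleton_iff, Complex.ofReal_eq_zero] using this
    refine aestronglyMeasurable_of_tendsto_ae atTop
      (f := fun (n : ℕ) θ => (((r / 2 * (1 / ((n:ℝ) + 1)) : ℝ) : ℂ))⁻¹ •
        (f (z₀ + ((r / 2 * (1 / ((n:ℝ) + 1)) : ℝ) : ℂ)) θ - f z₀ θ)) (fun n => ?_) ?_
    · refine AEStronglyMeasurable.const_smul (𝕜 := ℂ) ((hm _ (hrU ?_)).sub (hm _ hz)) _
      rw [Metric.mem_ball, dist_eq_norm, add_sub_cancel_left, Complex.norm_real, Real.norm_eq_abs,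
        abs_of_pos (by positivity)]
      have : 1 / ((n:ℝ) + 1) ≤ 1 := by
        rw [div_le_one (by positivity)]; linarith [(Nat.cast_nonneg n : (0:ℝ) ≤ n)]
      nlinarith
    · filter_upwards [hf] with θ hθ
      exact (hasDerivAt_iff_tendsto_slope_zero.1
        (hθ.differentiableAt (hU.mem_nhds hz)).hasDerivAt).comp hlim
  · filter_upwards [hf, hb] with θ hθ hbθ z hz'
    have hsub : Metric.closedBall z (r / 3) ⊆ U := fun w hw => hrU (by
      rw [Metric.mem_ball] at hz' ⊢
      rw [Metric.mem_closedBall] at hw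
      linarith [dist_triangle w z z₀])
    refine Complex.norm_deriv_le_of_forall_mem_sphere_norm_le (by positivity) ?_ fun w hw =>
      hbθ w (hsub (Metric.sphere_subset_closedBall hw))
    exact (hθ.mono hsub).diffContOnCl_ball subset_rfl
  · exact hbi.div_const _
  · filter_upwards [hf] with θ hθ z hz'
    refine (hθ.differentiableAt (hU.mem_nhds (hrU ?_))).hasDerivAt
    exact Metric.ball_subset_ball (by linarith) hz'

lemma differentiableOn_integral_param {Θ : Type*} [MeasurableSpace Θ] {μ : Measure Θ} {U : Set ℂ}
    (hU : IsOpen U) {f : ℂ → Θ → ℂ} {bound : Θ → ℝ}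
    (hf : ∀ᵐ θ ∂μ, DifferentiableOn ℂ (fun z => f z θ) U)
    (hm : ∀ z ∈ U, AEStronglyMeasurable (f z) μ)
    (hb : ∀ᵐ θ ∂μ, ∀ z ∈ U, ‖f z θ‖ ≤ bound θ) (hbi : Integrable bound μ) :
    DifferentiableOn ℂ (fun z => ∫ θ, f z θ ∂μ) U := fun _ hz =>
  (hasDerivAt_integral_param hU hf hm hb hbi hz).differentiableAt.differentiableWithinAt

/-- A bounded separately analytic function of two variables is analytic on the diagonal:
Cauchy's formula in the first variable displays it as a parameter integral in the second. -/
lemma differentiableOn_diag {U : Set ℂ} (hU : IsOpen U) {f : ℂ → ℂ → ℂ} {M : ℝ}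
    (h1 : ∀ w ∈ U, DifferentiableOn ℂ (fun z => f z w) U)
    (h2 : ∀ z ∈ U, DifferentiableOn ℂ (fun w => f z w) U)
    (hM : ∀ z ∈ U, ∀ w ∈ U, ‖f z w‖ ≤ M) : DifferentiableOn ℂ (fun z => f z z) U := by
  intro z₀ hz₀
  obtain ⟨r, hr, hrU⟩ := Metric.isOpen_iff.1 hU z₀ hz₀
  set R := r / 2 with hR
  have hR0 : 0 < R := by positivity
  have hcU : Metric.closedBall z₀ R ⊆ U :=
    (Metric.closedBall_subset_ball (by rw [hR]; linarith)).trans hrU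
  have hsph : ∀ θ, circleMap z₀ R θ ∈ Metric.sphere z₀ R := circleMap_mem_sphere z₀ hR0.le
  have hsU : ∀ θ, circleMap z₀ R θ ∈ U := fun θ =>
    hcU (Metric.sphere_subset_closedBall (hsph θ))
  set B := Metric.ball z₀ (R / 2) with hB
  have hBU : B ⊆ U := (Metric.ball_subset_closedBall.trans
    (Metric.closedBall_subset_closedBall (by linarith))).trans hcU
  have hgap : ∀ θ, ∀ z ∈ B, R / 2 ≤ ‖circleMap z₀ R θ - z‖ := fun θ z hz => by
    have h3 : dist (circleMap z₀ R θ) z₀ = R := hsph θ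
    have h4 : dist z z₀ < R / 2 := hz
    have := dist_triangle (circleMap z₀ R θ) z z₀
    rw [← dist_eq_norm]; linarith
  have hne : ∀ θ, ∀ z ∈ B, circleMap z₀ R θ - z ≠ 0 := fun θ z hz =>
    norm_pos_iff.1 ((by positivity : 0 < R / 2).trans_le (hgap θ z hz))
  have hdiff : DifferentiableOn ℂ (fun z => ∫ θ in Ioc 0 (2 * Real.pi),
      deriv (circleMap z₀ R) θ • ((circleMap z₀ R θ - z)⁻¹ • f (circleMap z₀ R θ) z)) B := by
    refine differentiableOn_integral_param (bound := fun _ => R * ((R / 2)⁻¹ * M))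
      Metric.isOpen_ball ?_ ?_ ?_ ?_
    · refine Eventually.of_forall fun θ => ?_
      refine DifferentiableOn.const_smul (c := deriv (circleMap z₀ R) θ) ?_
      have hi : DifferentiableOn ℂ (fun z => (circleMap z₀ R θ - z)⁻¹) B :=
        ((differentiableOn_const _).sub differentiableOn_id).inv (hne θ)
      exact hi.smul ((h2 _ (hsU θ)).mono hBU)
    · intro z hz
      refine Continuous.aestronglyMeasurable ?_
      have hc : Continuous fun θ => f (circleMap z₀ R θ) z :=
        continuousOn_univ.1 ((h1 z (hBU hz)).continuousOn.comp
          (continuous_circleMap z₀ R).continuousOn fun θ _ => hsU θ)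
      have hc2 : Continuous (deriv (circleMap z₀ R)) := by
        rw [show deriv (circleMap z₀ R) = fun θ => circleMap 0 R θ * Complex.I from
          funext fun θ => deriv_circleMap z₀ R θ]
        exact (continuous_circleMap 0 R).mul continuous_const
      exact hc2.smul ((((continuous_circleMap z₀ R).sub continuous_const).inv₀
        fun θ => hne θ z hz).smul hc)
    · refine Eventually.of_forall fun θ z hz => ?_
      rw [norm_smul, norm_smul, deriv_circleMap, norm_mul, Complex.norm_I, mul_one, norm_circleMap_zero,
        abs_of_pos hR0, norm_inv]
      have := hM _ (hsU θ) z (hBU hz)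
      have h5 := hgap θ z hz
      gcongr
    · exact integrable_const _
  have hEq : EqOn (fun z => f z z) (fun z => (2 * Real.pi * Complex.I : ℂ)⁻¹ •
      ∫ θ in Ioc 0 (2 * Real.pi),
      deriv (circleMap z₀ R) θ • ((circleMap z₀ R θ - z)⁻¹ • f (circleMap z₀ R θ) z)) B := by
    intro z hz
    have h6 := Complex.two_pi_I_inv_smul_circleIntegral_sub_inv_smul_of_differentiable_on_off_countable
      (c := z₀) (R := R) (w := z) (f := fun ζ => f ζ z) countable_empty
      (Metric.ball_subset_ball (by linarith) hz)
      ((h1 z (hBU hz)).mono hcU).continuousOn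
      (fun x hx => (h1 z (hBU hz)).differentiableAt
        (hU.mem_nhds (hcU (Metric.ball_subset_closedBall hx.1))))
    rw [circleIntegral, intervalIntegral.integral_of_le (by positivity)] at h6
    exact h6.symm
  have hBn : B ∈ 𝓝 z₀ := Metric.ball_mem_nhds _ (by positivity)
  have h7 := ((hdiff.const_smul ((2 * Real.pi * Complex.I : ℂ)⁻¹)).congr hEq).differentiableAt hBn
  exact h7.differentiableWithinAt

/-! ### The Volterra operator along segments in the strip -/

/-- The Volterra operator `f ↦ ∫_0^z K(z,w) f(w) p(w) dw`, integrated along the segment `[0,z]`. -/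
def volT (K : ℂ → ℂ → ℂ) (p f : ℂ → ℂ) (z : ℂ) : ℂ :=
  z * ∫ τ in (0:ℝ)..1, K z (τ * z) * f (τ * z) * p (τ * z)

/-- A bounded separately analytic kernel `K` and an analytic integrable density `p` on `D_d`. -/
structure VolData (K : ℂ → ℂ → ℂ) (p : ℂ → ℂ) (d M P : ℝ) : Prop where
  hd : 0 < d
  hM : 0 < M
  hP : 0 < P
  diff1 : ∀ y ∈ Dstrip d, DifferentiableOn ℂ (fun x => K x y) (Dstrip d)
  diff2 : ∀ x ∈ Dstrip d, DifferentiableOn ℂ (fun y => K x y) (Dstrip d)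
  bound : ∀ x ∈ Dstrip d, ∀ y ∈ Dstrip d, ‖K x y‖ ≤ M
  pdiff : DifferentiableOn ℂ p (Dstrip d)
  pbound : ∀ z ∈ Dstrip d, ‖p z‖ ≤ P * (1 + z.re ^ 2)⁻¹

/-- The exponent of the weight `e^{λ m(z)}` for which the Volterra operator is a contraction. -/
def mW (z : ℂ) : ℝ := Real.arctan |z.re| + |z.im|

lemma mW_nonneg (z : ℂ) : 0 ≤ mW z :=
  add_nonneg (Real.arctan_nonneg.2 (abs_nonneg _)) (abs_nonneg _)

lemma mW_le {d : ℝ} {z : ℂ} (hz : z ∈ Dstrip d) : mW z ≤ Real.pi / 2 + d :=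
  add_le_add (Real.arctan_lt_pi_div_two _).le (le_of_lt hz)

lemma smul_mem_Dstrip {d τ : ℝ} (hτ : τ ∈ Icc (0:ℝ) 1) {z : ℂ} (hz : z ∈ Dstrip d) :
    (τ : ℂ) * z ∈ Dstrip d := by
  have h : |z.im| < d := hz
  change |((τ : ℂ) * z).im| < d
  rw [Complex.im_ofReal_mul, abs_mul, abs_of_nonneg hτ.1]
  nlinarith [hτ.2, abs_nonneg z.im, hτ.1]

/-- The contraction estimate in terms of the weight: the integrand is dominated by a derivative. -/
lemma integral_weight_le {x y l : ℝ} (hx : 0 ≤ x) (hy : 0 ≤ y) (hl : 0 < l) :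
    ∫ τ in (0:ℝ)..1, (x + y) * ((1 + (τ * x) ^ 2)⁻¹ * Real.exp (l * (Real.arctan (τ * x) + τ * y)))
      ≤ Real.exp (l * (Real.arctan x + y)) / l := by
  have hder : ∀ τ : ℝ, HasDerivAt (fun τ => Real.exp (l * (Real.arctan (τ * x) + τ * y)) / l)
      ((x * (1 + (τ * x) ^ 2)⁻¹ + y) * Real.exp (l * (Real.arctan (τ * x) + τ * y))) τ := by
    intro τ
    have h1 : HasDerivAt (fun τ : ℝ => τ * x) x τ := by simpa using (hasDerivAt_id τ).mul_const x
    have h2 : HasDerivAt (fun τ : ℝ => τ * y) y τ := by simpa using (hasDerivAt_id τ).mul_const y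
    have h3 := ((((Real.hasDerivAt_arctan (τ * x)).comp τ h1).add h2).const_mul l).exp.div_const l
    refine h3.congr_deriv ?_
    have : (1 + (τ * x) ^ 2) ≠ 0 := by positivity
    simp only [Function.comp_apply, Pi.add_apply]
    generalize Real.exp (l * (Real.arctan (τ * x) + τ * y)) = E
    field_simp
  have hpos : ∀ τ : ℝ, (1 + (τ * x) ^ 2) ≠ 0 := fun τ => by positivity
  have hcE : Continuous fun τ : ℝ => Real.exp (l * (Real.arctan (τ * x) + τ * y)) := by
    have := Real.continuous_arctan
    fun_prop
  have hcI : Continuous fun τ : ℝ => (1 + (τ * x) ^ 2)⁻¹ :=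
    Continuous.inv₀ (by fun_prop) hpos
  have hF := intervalIntegral.integral_eq_sub_of_hasDerivAt (a := 0) (b := 1)
    (fun τ _ => hder τ) (Continuous.intervalIntegrable (by fun_prop) _ _)
  have hle : ∫ τ in (0:ℝ)..1,
      (x + y) * ((1 + (τ * x) ^ 2)⁻¹ * Real.exp (l * (Real.arctan (τ * x) + τ * y))) ≤
      ∫ τ in (0:ℝ)..1,
      (x * (1 + (τ * x) ^ 2)⁻¹ + y) * Real.exp (l * (Real.arctan (τ * x) + τ * y)) := by
    refine intervalIntegral.integral_mono_on zero_le_one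
      (Continuous.intervalIntegrable (by fun_prop) _ _)
      (Continuous.intervalIntegrable (by fun_prop) _ _) fun τ _ => ?_
    rw [← mul_assoc]
    gcongr
    have h1 : (1 + (τ * x) ^ 2)⁻¹ ≤ 1 := inv_le_one_of_one_le₀ (by nlinarith [sq_nonneg (τ * x)])
    nlinarith
  rw [hF] at hle
  refine hle.trans ?_
  simp only [one_mul]
  linarith [show 0 ≤ Real.exp (l * (Real.arctan (0 * x) + 0 * y)) / l by positivity]

section
variable {K : ℂ → ℂ → ℂ} {p : ℂ → ℂ} {d M P : ℝ}

/-- In the norm with weight `exp(l m(z))` the Volterra operator has norm at most `MP/l`. -/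
lemma VolData.norm_volT_le (H : VolData K p d M P) {f : ℂ → ℂ} {B l : ℝ} (hB : 0 ≤ B) (hl : 0 < l)
    {z : ℂ} (hz : z ∈ Dstrip d)
    (hf : ∀ τ ∈ Icc (0:ℝ) 1, ‖f (τ * z)‖ ≤ B * Real.exp (l * mW (τ * z))) :
    ‖volT K p f z‖ ≤ M * P / l * B * Real.exp (l * mW z) := by
  have hM := H.hM
  have hP := H.hP
  have hpos : ∀ τ : ℝ, (1 + (τ * |z.re|) ^ 2) ≠ 0 := fun τ => by positivity
  have hc : Continuous fun τ : ℝ => (1 + (τ * |z.re|) ^ 2)⁻¹ *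
      Real.exp (l * (Real.arctan (τ * |z.re|) + τ * |z.im|)) := by
    have := Real.continuous_arctan
    exact (Continuous.inv₀ (by fun_prop) hpos).mul (by fun_prop)
  have h1 : ‖∫ τ in (0:ℝ)..1, K z (τ * z) * f (τ * z) * p (τ * z)‖ ≤
      ∫ τ in (0:ℝ)..1, (M * P * B) * ((1 + (τ * |z.re|) ^ 2)⁻¹ *
      Real.exp (l * (Real.arctan (τ * |z.re|) + τ * |z.im|))) := by
    refine intervalIntegral.norm_integral_le_of_norm_le zero_le_one
      (Eventually.of_forall fun τ hτ => ?_)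
      ((hc.const_mul _).intervalIntegrable _ _)
    have hτ' : τ ∈ Icc (0:ℝ) 1 := Ioc_subset_Icc_self hτ
    have hw := smul_mem_Dstrip hτ' hz
    have a1 := H.bound z hz _ hw
    have a2 := hf τ hτ'
    have a3 := H.pbound _ hw
    have e1 : mW (τ * z) = Real.arctan (τ * |z.re|) + τ * |z.im| := by
      rw [mW, Complex.re_ofReal_mul, Complex.im_ofReal_mul, abs_mul, abs_mul, abs_of_nonneg hτ'.1]
    have e2 : ((τ : ℂ) * z).re ^ 2 = (τ * |z.re|) ^ 2 := by
      rw [Complex.re_ofReal_mul, mul_pow, mul_pow, sq_abs]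
    rw [e1] at a2
    rw [e2] at a3
    calc ‖K z (τ * z) * f (τ * z) * p (τ * z)‖
        = ‖K z (τ * z)‖ * ‖f (τ * z)‖ * ‖p (τ * z)‖ := by rw [norm_mul, norm_mul]
      _ ≤ M * (B * Real.exp (l * (Real.arctan (τ * |z.re|) + τ * |z.im|))) *
          (P * (1 + (τ * |z.re|) ^ 2)⁻¹) := by gcongr
      _ = _ := by ring
  have h2 := integral_weight_le (abs_nonneg z.re) (abs_nonneg z.im) hl
  rw [intervalIntegral.integral_const_mul] at h1 h2
  have h3 : ‖z‖ ≤ |z.re| + |z.im| := Complex.norm_le_abs_re_add_abs_im z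
  set I := ∫ τ in (0:ℝ)..1, ((1 + (τ * |z.re|) ^ 2)⁻¹ *
      Real.exp (l * (Real.arctan (τ * |z.re|) + τ * |z.im|))) with hI
  have hI0 : 0 ≤ I := intervalIntegral.integral_nonneg zero_le_one fun τ _ => by positivity
  rw [volT, norm_mul]
  calc ‖z‖ * ‖∫ τ in (0:ℝ)..1, K z (τ * z) * f (τ * z) * p (τ * z)‖
      ≤ (|z.re| + |z.im|) * (M * P * B * I) := by gcongr
    _ = M * P * B * ((|z.re| + |z.im|) * I) := by ring
    _ ≤ M * P * B * (Real.exp (l * (Real.arctan |z.re| + |z.im|)) / l) := by gcongr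
    _ = _ := by rw [mW]; ring

lemma continuousOn_ray {f : ℂ → ℂ} (hf : ContinuousOn f (Dstrip d)) {z : ℂ}
    (hz : z ∈ Dstrip d) : ContinuousOn (fun τ : ℝ => f (τ * z)) (Icc 0 1) :=
  hf.comp (Continuous.continuousOn (by fun_prop)) fun _ hτ => smul_mem_Dstrip hτ hz

lemma differentiableOn_ray {f : ℂ → ℂ} (hf : DifferentiableOn ℂ f (Dstrip d)) {τ : ℝ}
    (hτ : τ ∈ Icc (0:ℝ) 1) : DifferentiableOn ℂ (fun z => f (τ * z)) (Dstrip d) :=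
  hf.comp (Differentiable.differentiableOn (by fun_prop)) fun _ hz => smul_mem_Dstrip hτ hz

lemma ae_Ioc_mem_Icc {q : ℝ → Prop} (h : ∀ τ ∈ Icc (0:ℝ) 1, q τ) :
    ∀ᵐ τ ∂volume.restrict (Ioc (0:ℝ) 1), q τ := by
  filter_upwards [ae_restrict_mem measurableSet_Ioc] with τ hτ using h τ (Ioc_subset_Icc_self hτ)

lemma VolData.pbound' (H : VolData K p d M P) {z : ℂ} (hz : z ∈ Dstrip d) : ‖p z‖ ≤ P := by
  refine (H.pbound z hz).trans ?_
  have h1 : (1 + z.re ^ 2)⁻¹ ≤ 1 := inv_le_one_of_one_le₀ (by nlinarith [sq_nonneg z.re])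
  nlinarith [H.hP]

lemma VolData.continuousOn_integrand (H : VolData K p d M P) {f : ℂ → ℂ}
    (hf : ContinuousOn f (Dstrip d)) {z : ℂ} (hz : z ∈ Dstrip d) :
    ContinuousOn (fun τ : ℝ => K z (τ * z) * f (τ * z) * p (τ * z)) (Icc 0 1) :=
  ((continuousOn_ray (H.diff2 z hz).continuousOn hz).mul (continuousOn_ray hf hz)).mul
    (continuousOn_ray H.pdiff.continuousOn hz)

lemma VolData.differentiableOn_volT (H : VolData K p d M P) {f : ℂ → ℂ} {B : ℝ}
    (hf : DifferentiableOn ℂ f (Dstrip d)) (hB : ∀ z ∈ Dstrip d, ‖f z‖ ≤ B) :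
    DifferentiableOn ℂ (volT K p f) (Dstrip d) := by
  have hM := H.hM
  have h1 : DifferentiableOn ℂ (fun z => ∫ τ in Ioc (0:ℝ) 1,
      K z (τ * z) * f (τ * z) * p (τ * z)) (Dstrip d) := by
    refine differentiableOn_integral_param (bound := fun _ => M * B * P) (isOpen_Dstrip d) ?_ ?_ ?_
      (integrable_const _)
    · refine ae_Ioc_mem_Icc fun τ hτ => ?_
      refine DifferentiableOn.mul (DifferentiableOn.mul ?_ (differentiableOn_ray hf hτ))
        (differentiableOn_ray H.pdiff hτ)
      exact differentiableOn_diag (f := fun z w => K z (τ * w)) (isOpen_Dstrip d)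
        (fun w hw => H.diff1 _ (smul_mem_Dstrip hτ hw))
        (fun z hz => differentiableOn_ray (H.diff2 z hz) hτ)
        (fun z hz w hw => H.bound z hz _ (smul_mem_Dstrip hτ hw))
    · intro z hz
      exact ((H.continuousOn_integrand hf.continuousOn hz).mono
        Ioc_subset_Icc_self).aestronglyMeasurable measurableSet_Ioc
    · refine ae_Ioc_mem_Icc fun τ hτ z hz => ?_
      have hw := smul_mem_Dstrip hτ hz
      rw [norm_mul, norm_mul]
      have a1 := H.bound z hz _ hw
      have a2 := hB _ hw
      have a3 := H.pbound' hw
      have : 0 ≤ B := (norm_nonneg _).trans a2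
      gcongr
  refine (differentiableOn_id.mul h1).congr fun z _ => ?_
  rw [volT, intervalIntegral.integral_of_le zero_le_one]
  rfl

/-- The Volterra equation of the second kind has a bounded analytic solution on the strip, given by
the Neumann series. -/
theorem VolData.exists_fix (H : VolData K p d M P) {G : ℂ → ℂ} {B : ℝ}
    (hG : DifferentiableOn ℂ G (Dstrip d)) (hB : ∀ z ∈ Dstrip d, ‖G z‖ ≤ B) :
    ∃ U : ℂ → ℂ, DifferentiableOn ℂ U (Dstrip d) ∧ (∃ B', ∀ z ∈ Dstrip d, ‖U z‖ ≤ B') ∧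
      ∀ z ∈ Dstrip d, U z = G z + volT K p U z := by
  have hM := H.hM
  have hP := H.hP
  have hB0 : 0 ≤ B := (norm_nonneg _).trans (hB 0 (by simpa using ofReal_mem_Dstrip H.hd 0))
  -- this exponent makes `1/2` the contraction factor in the weighted norm
  set l := 2 * M * P with hl
  have hl0 : 0 < l := by positivity
  set E := Real.exp (l * (Real.pi / 2 + d)) with hE
  have hmE : ∀ z ∈ Dstrip d, Real.exp (l * mW z) ≤ E := fun z hz =>
    Real.exp_le_exp.2 (mul_le_mul_of_nonneg_left (mW_le hz) hl0.le)
  let it : ℕ → ℂ → ℂ := fun n => (volT K p)^[n] G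
  have it_succ : ∀ n, it (n + 1) = volT K p (it n) := fun n =>
    Function.iterate_succ_apply' (volT K p) n G
  have key : ∀ n, DifferentiableOn ℂ (it n) (Dstrip d) ∧
      ∀ z ∈ Dstrip d, ‖it n z‖ ≤ B * (1 / 2) ^ n * Real.exp (l * mW z) := by
    intro n
    induction n with
    | zero =>
      refine ⟨hG, fun z hz => (hB z hz).trans ?_⟩
      have := Real.one_le_exp (mul_nonneg hl0.le (mW_nonneg z))
      rw [pow_zero, mul_one]
      nlinarith
    | succ n ih =>
      rw [it_succ]
      have hb : ∀ z ∈ Dstrip d, ‖it n z‖ ≤ B * (1 / 2) ^ n * E := fun z hz =>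
        (ih.2 z hz).trans (mul_le_mul_of_nonneg_left (hmE z hz) (by positivity))
      refine ⟨H.differentiableOn_volT ih.1 hb, fun z hz => ?_⟩
      refine (H.norm_volT_le (by positivity) hl0 hz
        fun τ hτ => ih.2 _ (smul_mem_Dstrip hτ hz)).trans (le_of_eq ?_)
      rw [pow_succ, hl]
      field_simp
  have hsm : Summable fun n : ℕ => B * (1 / 2 : ℝ) ^ n * E :=
    (summable_geometric_two.mul_left B).mul_right E
  have hbd : ∀ n, ∀ z ∈ Dstrip d, ‖it n z‖ ≤ B * (1 / 2) ^ n * E := fun n z hz =>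
    ((key n).2 z hz).trans (mul_le_mul_of_nonneg_left (hmE z hz) (by positivity))
  have hs : ∀ z ∈ Dstrip d, Summable fun n => it n z := fun z hz =>
    Summable.of_norm_bounded hsm fun n => hbd n z hz
  refine ⟨fun z => ∑' n, it n z, ?_, ⟨∑' n : ℕ, B * (1 / 2 : ℝ) ^ n * E, fun z hz => ?_⟩,
    fun z hz => ?_⟩
  · exact Complex.differentiableOn_tsum_of_summable_norm hsm (fun n => (key n).1) (isOpen_Dstrip d)
      fun n z hz => hbd n z hz
  · exact tsum_of_norm_bounded hsm.hasSum fun n => hbd n z hz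
  · have h1 : HasSum (fun n => it (n + 1) z) (volT K p (fun z => ∑' n, it n z) z) := by
      simp only [it_succ]
      refine HasSum.mul_left z ?_
      refine intervalIntegral.hasSum_integral_of_dominated_convergence
        (fun n _ => M * (B * (1 / 2 : ℝ) ^ n * E) * P) (fun n => ?_) (fun n => ?_) ?_ ?_ ?_
      · rw [uIoc_of_le zero_le_one]
        exact ((H.continuousOn_integrand (key n).1.continuousOn hz).mono
          Ioc_subset_Icc_self).aestronglyMeasurable measurableSet_Ioc
      · refine Eventually.of_forall fun τ hτ => ?_
        rw [uIoc_of_le zero_le_one] at hτ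
        have hw := smul_mem_Dstrip (Ioc_subset_Icc_self hτ) hz
        rw [norm_mul, norm_mul]
        have a1 := H.bound z hz _ hw
        have a2 := hbd n _ hw
        have a3 := H.pbound' hw
        have : 0 ≤ E := (Real.exp_pos _).le
        gcongr
      · exact Eventually.of_forall fun τ _ => (hsm.mul_left M).mul_right P
      · exact intervalIntegrable_const
      · refine Eventually.of_forall fun τ hτ => ?_
        rw [uIoc_of_le zero_le_one] at hτ
        have hw := smul_mem_Dstrip (Ioc_subset_Icc_self hτ) hz
        exact ((hs _ hw).hasSum.mul_left _).mul_right _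
    have h2 := (hs z hz).tsum_eq_zero_add
    rw [h1.tsum_eq] at h2
    exact h2

/-- Uniqueness for the homogeneous Volterra equation on the real line. -/
theorem VolData.unique (H : VolData K p d M P) {v : ℂ → ℂ} {B : ℝ} (hB : ∀ x : ℝ, ‖v x‖ ≤ B)
    (hT : ∀ x : ℝ, v x = volT K p v x) (x : ℝ) : v x = 0 := by
  have hM := H.hM
  have hP := H.hP
  have hB0 : 0 ≤ B := (norm_nonneg _).trans (hB 0)
  set l := 2 * M * P with hl
  have hl0 : 0 < l := by positivity
  have key : ∀ n : ℕ, ∀ x : ℝ, ‖v x‖ ≤ B * (1 / 2) ^ n * Real.exp (l * mW x) := by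
    intro n
    induction n with
    | zero =>
      intro x
      refine (hB x).trans ?_
      have := Real.one_le_exp (mul_nonneg hl0.le (mW_nonneg x))
      rw [pow_zero, mul_one]
      nlinarith
    | succ n ih =>
      intro x
      rw [hT x]
      refine (H.norm_volT_le (B := B * (1 / 2) ^ n) (by positivity) hl0
        (ofReal_mem_Dstrip H.hd x) fun τ _ => ?_).trans (le_of_eq ?_)
      · rw [← Complex.ofReal_mul]; exact ih _
      · rw [pow_succ, hl]
        field_simp
  have hlim : Tendsto (fun n : ℕ => B * (1 / 2 : ℝ) ^ n * Real.exp (l * mW x)) atTop (𝓝 0) := by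
    have := ((tendsto_pow_atTop_nhds_zero_of_lt_one (show (0:ℝ) ≤ 1 / 2 by norm_num)
      (by norm_num)).const_mul B).mul_const (Real.exp (l * mW x))
    simpa using this
  exact norm_le_zero_iff.1 (ge_of_tendsto' hlim fun n => key n x)

end

/-! ### Primitives of decaying functions, and the change of variables -/

/-- The primitive `∫_{-∞}^z F`, along the real half-line and then the segment `[0,z]`. -/
def prim (F : ℂ → ℂ) (z : ℂ) : ℂ := (∫ s in Iic (0:ℝ), F s) + z * ∫ τ in (0:ℝ)..1, F (τ * z)

section
variable {F : ℂ → ℂ} {d ε C : ℝ}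

lemma hasDerivAt_prim (hF : DifferentiableOn ℂ F (Dstrip d)) (hb : ∀ z ∈ Dstrip d, ‖F z‖ ≤ C)
    {z : ℂ} (hz : z ∈ Dstrip d) : HasDerivAt (prim F) (F z) z := by
  have hfd : ∀ w ∈ Dstrip d, HasDerivAt F (deriv F w) w := fun w hw =>
    (hF.differentiableAt ((isOpen_Dstrip d).mem_nhds hw)).hasDerivAt
  have hF' : ContinuousOn (deriv F) (Dstrip d) := (hF.deriv (isOpen_Dstrip d)).continuousOn
  have h1 := hasDerivAt_integral_param (μ := volume.restrict (Ioc (0:ℝ) 1))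
    (f := fun z τ => F (τ * z)) (bound := fun _ => C) (isOpen_Dstrip d)
    (ae_Ioc_mem_Icc fun τ hτ => differentiableOn_ray hF hτ)
    (fun w hw => ((continuousOn_ray hF.continuousOn hw).mono
      Ioc_subset_Icc_self).aestronglyMeasurable measurableSet_Ioc)
    (ae_Ioc_mem_Icc fun τ hτ w hw => hb _ (smul_mem_Dstrip hτ hw)) (integrable_const _) hz
  have e1 : ∫ τ in Ioc (0:ℝ) 1, deriv (fun w => F (τ * w)) z =
      ∫ τ in (0:ℝ)..1, (τ : ℂ) * deriv F (τ * z) := by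
    rw [intervalIntegral.integral_of_le zero_le_one]
    refine setIntegral_congr_fun measurableSet_Ioc fun τ hτ => ?_
    have h2 : HasDerivAt (fun w : ℂ => (τ : ℂ) * w) τ z := by
      simpa using (hasDerivAt_id z).const_mul (τ : ℂ)
    have h3 := (hfd _ (smul_mem_Dstrip (Ioc_subset_Icc_self hτ) hz)).comp z h2
    have h4 : deriv (fun w => F (τ * w)) z = deriv F (τ * z) * τ := h3.deriv
    exact h4.trans (mul_comm _ _)
  rw [e1] at h1
  -- integrate `d/dτ (τ F(τ z))` over `[0,1]`
  have hder : ∀ τ ∈ uIcc (0:ℝ) 1, HasDerivAt (fun τ : ℝ => (τ : ℂ) * F (τ * z))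
      (F (τ * z) + z * ((τ : ℂ) * deriv F (τ * z))) τ := by
    intro τ hτ
    rw [uIcc_of_le zero_le_one] at hτ
    have h2 : HasDerivAt (fun t : ℝ => (t : ℂ) * z) z τ := by
      simpa using (Complex.ofRealCLM.hasDerivAt (x := τ)).mul_const z
    have h3 := (hfd _ (smul_mem_Dstrip hτ hz)).comp τ h2
    have h4 : HasDerivAt (fun t : ℝ => (t : ℂ)) 1 τ := Complex.ofRealCLM.hasDerivAt (x := τ)
    refine (h4.mul h3).congr_deriv ?_
    simp only [Function.comp_apply]
    ring
  have c1 : ContinuousOn (fun τ : ℝ => F (τ * z)) (uIcc 0 1) := by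
    rw [uIcc_of_le zero_le_one]; exact continuousOn_ray hF.continuousOn hz
  have c2 : ContinuousOn (fun τ : ℝ => (τ : ℂ) * deriv F (τ * z)) (uIcc 0 1) := by
    rw [uIcc_of_le zero_le_one]
    exact Complex.continuous_ofReal.continuousOn.mul (continuousOn_ray hF' hz)
  have h5 := intervalIntegral.integral_eq_sub_of_hasDerivAt hder
    (c1.add (c2.const_mul z)).intervalIntegrable
  rw [intervalIntegral.integral_add c1.intervalIntegrable (c2.const_mul z).intervalIntegrable,
    intervalIntegral.integral_const_mul] at h5
  have h6 := ((hasDerivAt_id z).mul h1).const_add (∫ s in Iic (0:ℝ), F s)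
  have e2 : prim F = fun w => (∫ s in Iic (0:ℝ), F s) +
      ((id : ℂ → ℂ) * fun w : ℂ => ∫ τ in Ioc (0:ℝ) 1, F (τ * w)) w := by
    funext w
    rw [prim, intervalIntegral.integral_of_le zero_le_one]; rfl
  rw [e2]
  refine h6.congr_deriv ?_
  simp only [id, one_mul, ← intervalIntegral.integral_of_le (zero_le_one (α := ℝ))]
  rw [h5]
  simp

lemma ray_integral_real (F : ℂ → ℂ) (x : ℝ) :
    (x : ℂ) * ∫ τ in (0:ℝ)..1, F (τ * (x : ℂ)) = ∫ s in (0:ℝ)..x, F s := by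
  have h := intervalIntegral.smul_integral_comp_mul_right (fun s : ℝ => F s) (a := 0) (b := 1) x
  rw [zero_mul, one_mul] at h
  rw [← h, Complex.real_smul]
  simp only [Complex.ofReal_mul]

lemma prim_ofReal (hF : Integrable fun s : ℝ => F s) (x : ℝ) : prim F x = ∫ s in Iic x, F s := by
  rw [prim, ray_integral_real,
    ← intervalIntegral.integral_Iic_sub_Iic hF.integrableOn hF.integrableOn]
  ring

lemma norm_prim_sub_le (hε : 0 < ε) (hd : 0 < d) (hF : DecayOn F d ε C) {z : ℂ} (hz : z ∈ Dstrip d) :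
    ‖prim F z - prim F z.re‖ ≤ C * dew ε z.re * d := by
  have hC := hF.nonneg hd
  set S : Set ℂ := {w | w.re = z.re} ∩ Dstrip d with hS
  have hconv : Convex ℝ S := by
    refine Convex.inter ?_ ?_
    · exact (convex_singleton z.re).linear_preimage Complex.reLm
    · have : Dstrip d = Complex.imLm ⁻¹' (Ioo (-d) d) := by
        ext w; simp [Dstrip, abs_lt]
      rw [this]; exact (convex_Ioo _ _).linear_preimage Complex.imLm
  have hbd : ∀ w ∈ Dstrip d, ‖F w‖ ≤ C := fun w hw => (hF.bound w hw).trans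
    (by nlinarith [dew_le_one hε.le w.re])
  have h1 := hconv.norm_image_sub_le_of_norm_hasDerivWithin_le (f := prim F) (f' := F)
    (C := C * dew ε z.re) (x := (z.re : ℂ)) (y := z)
    (fun w hw => (hasDerivAt_prim hF.diff hbd hw.2).hasDerivWithinAt)
    (fun w hw => by have := hF.bound w hw.2; rwa [show w.re = z.re from hw.1] at this)
    ⟨by simp, ofReal_mem_Dstrip hd _⟩ ⟨rfl, hz⟩
  refine h1.trans ?_
  have h2 : ‖z - z.re‖ ≤ d := by
    have e : z - z.re = z.im * Complex.I := by
      rw [sub_eq_iff_eq_add']; exact (Complex.re_add_im z).symm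
    rw [e, norm_mul, Complex.norm_I, mul_one, Complex.norm_real]
    exact le_of_lt hz
  have := dew_pos ε z.re
  gcongr

lemma norm_setIntegral_dew_le (hε : 0 < ε) (hd : 0 < d) (hF : DecayOn F d ε C) {x : ℝ} {S : Set ℝ}
    (hS : MeasurableSet S) (hx : ∀ s ∈ S, |x| ≤ |s|) :
    ‖∫ s in S, F s‖ ≤ C * dewInt (ε / 2) * dew (ε / 2) x := by
  have hC := hF.nonneg hd
  have hi := integrable_dew (half_pos hε)
  calc ‖∫ s in S, F s‖ ≤ ∫ s in S, C * dew (ε / 2) x * dew (ε / 2) s := by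
        refine norm_integral_le_of_norm_le (hi.const_mul _).integrableOn ?_
        filter_upwards [ae_restrict_mem hS] with s hs
        refine (hF.bound_real hd s).trans ?_
        rw [← dew_half_sq, mul_assoc]
        have := dew_le_of_abs_le (half_pos hε).le (hx s hs)
        have := dew_pos (ε / 2) s
        gcongr
    _ ≤ ∫ s, C * dew (ε / 2) x * dew (ε / 2) s := by
        refine setIntegral_le_integral (hi.const_mul _) (Eventually.of_forall fun s => ?_)
        have := dew_pos (ε / 2) s
        have := dew_pos (ε / 2) x
        positivity
    _ = _ := by rw [integral_const_mul, dewInt]; ring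

lemma dew_le_half (hε : 0 < ε) (x : ℝ) : dew ε x ≤ dew (ε / 2) x := dew_anti (by linarith) x

lemma norm_prim_le (hε : 0 < ε) (hd : 0 < d) (hF : DecayOn F d ε C) {z : ℂ} (hz : z ∈ Dstrip d)
    (h0 : z.re ≤ 0) : ‖prim F z‖ ≤ C * (d + dewInt (ε / 2)) * dew (ε / 2) z.re := by
  have hC := hF.nonneg hd
  have h1 := norm_prim_sub_le hε hd hF hz
  have h2 := norm_setIntegral_dew_le hε hd hF (x := z.re) (S := Iic z.re) measurableSet_Iic
    fun s hs => by rw [abs_of_nonpos h0, abs_of_nonpos (le_trans hs h0)]; exact neg_le_neg hs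
  rw [← prim_ofReal (hF.integrable_real hε hd)] at h2
  have h3 : C * dew ε z.re * d ≤ C * dew (ε / 2) z.re * d := by
    have := dew_le_half hε z.re
    gcongr
  calc ‖prim F z‖ = ‖(prim F z - prim F z.re) + prim F z.re‖ := by rw [sub_add_cancel]
    _ ≤ _ := (norm_add_le _ _).trans (by linarith)

lemma norm_prim_sub_integral_le (hε : 0 < ε) (hd : 0 < d) (hF : DecayOn F d ε C) {z : ℂ}
    (hz : z ∈ Dstrip d) (h0 : 0 ≤ z.re) :
    ‖prim F z - ∫ s : ℝ, F s‖ ≤ C * (d + dewInt (ε / 2)) * dew (ε / 2) z.re := by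
  have hC := hF.nonneg hd
  have hi := hF.integrable_real hε hd
  have h1 := norm_prim_sub_le hε hd hF hz
  have h2 := norm_setIntegral_dew_le hε hd hF (x := z.re) (S := Ioi z.re) measurableSet_Ioi
    fun s hs => by
      rw [abs_of_nonneg h0, abs_of_nonneg (h0.trans (le_of_lt hs))]; exact le_of_lt hs
  have h3 : C * dew ε z.re * d ≤ C * dew (ε / 2) z.re * d := by
    have := dew_le_half hε z.re
    gcongr
  have h4 : prim F z.re + ∫ s in Ioi z.re, F s = ∫ s : ℝ, F s := by
    rw [prim_ofReal hi]
    exact intervalIntegral.integral_Iic_add_Ioi hi.integrableOn hi.integrableOn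
  calc ‖prim F z - ∫ s : ℝ, F s‖ = ‖(prim F z - prim F z.re) - ∫ s in Ioi z.re, F s‖ := by
        rw [← h4]; congr 1; ring
    _ ≤ _ := (norm_sub_le _ _).trans (by linarith)

end

lemma deriv_psiDE_pos {a b : ℝ} (hab : a < b) (x : ℝ) : 0 < deriv (psiDE a b) x := by
  have h1 := (psiD_ofReal a b x).1
  have h2 : psiD a b x = (((b - a) / 2 * (Real.pi / 2 * Real.cosh x /
      Real.cosh (Real.pi / 2 * Real.sinh x) ^ 2) : ℝ) : ℂ) := by
    rw [psiD, deW]; push_cast; rfl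
  rw [h2] at h1
  rw [← Complex.ofReal_injective h1]
  have := Real.cosh_pos x
  have := Real.cosh_pos (Real.pi / 2 * Real.sinh x)
  have := Real.pi_pos
  have : 0 < b - a := by linarith
  positivity

lemma strictMono_psiDE {a b : ℝ} (hab : a < b) : StrictMono (psiDE a b) :=
  strictMono_of_deriv_pos fun x => deriv_psiDE_pos hab x

lemma continuous_psiDE (a b : ℝ) : Continuous (psiDE a b) :=
  continuous_iff_continuousAt.2 fun x => (psiD_ofReal a b x).2.continuousAt

lemma integral_psiDE_Iic {a b : ℝ} (hab : a < b) (f : ℝ → ℂ) (x : ℝ) :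
    ∫ t in a..psiDE a b x, f t = ∫ s in Iic x, f (psiDE a b s) * psiD a b s := by
  have him : psiDE a b '' Iic x = Ioc a (psiDE a b x) := by
    ext t
    constructor
    · rintro ⟨s, hs, rfl⟩
      exact ⟨(psiDE_mem hab s).1, (strictMono_psiDE hab).monotone hs⟩
    · intro ht
      have ht' : t ∈ Ioo a b := ⟨ht.1, ht.2.trans_lt (psiDE_mem hab x).2⟩
      refine ⟨phiDE a b t, ?_, psiDE_phiDE ht'⟩
      refine (strictMono_psiDE hab).le_iff_le.1 ?_
      rw [psiDE_phiDE ht']; exact ht.2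
  rw [intervalIntegral.integral_of_le (psiDE_mem hab x).1.le, ← him,
    integral_image_eq_integral_abs_deriv_smul measurableSet_Iic
      (fun s _ => (psiD_ofReal a b s).2.hasDerivWithinAt) (strictMono_psiDE hab).injective.injOn]
  refine integral_congr_ae (Eventually.of_forall fun s => ?_)
  simp only [abs_of_pos (deriv_psiDE_pos hab s), Complex.real_smul, (psiD_ofReal a b s).1, mul_comm]

lemma integral_psiDE {a b : ℝ} (hab : a < b) (f : ℝ → ℂ) :
    ∫ t in a..b, f t = ∫ s, f (psiDE a b s) * psiD a b s := by
  have him : psiDE a b '' univ = Ioo a b := by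
    ext t
    constructor
    · rintro ⟨s, _, rfl⟩
      exact psiDE_mem hab s
    · exact fun ht => ⟨phiDE a b t, mem_univ _, psiDE_phiDE ht⟩
  rw [intervalIntegral.integral_of_le hab.le, integral_Ioc_eq_integral_Ioo, ← him,
    integral_image_eq_integral_abs_deriv_smul MeasurableSet.univ
      (fun s _ => (psiD_ofReal a b s).2.hasDerivWithinAt) (strictMono_psiDE hab).injective.injOn,
    setIntegral_univ]
  refine integral_congr_ae (Eventually.of_forall fun s => ?_)
  simp only [abs_of_pos (deriv_psiDE_pos hab s), Complex.real_smul, (psiD_ofReal a b s).1, mul_comm]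

/-! ### Analytic continuation of the exact solution -/

/-- The standing hypotheses: analytic extensions `G`, `K` of the data to the strip with Hölder
bounds at the endpoints (common bound `M`, Hölder constant `L`), and the exact solution `u`. -/
structure DESetup (a b α d : ℝ) (k : ℝ → ℝ → ℂ) (g u : ℝ → ℂ) (G : ℂ → ℂ) (K : ℂ → ℂ → ℂ)
    (kb : ℂ → ℂ) (L M : ℝ) : Prop where
  hab : a < b
  hα : 0 < α
  hα1 : α ≤ 1
  hd : 0 < d
  hdpi : d < Real.pi / 2
  hM : 0 < M
  hL : 0 ≤ L
  Gdiff : DifferentiableOn ℂ G (Dstrip d)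
  Gbound : ∀ z ∈ Dstrip d, ‖G z‖ ≤ M
  Greal : ∀ x : ℝ, G x = g (psiDE a b x)
  Kbound : ∀ x ∈ Dstrip d, ∀ y ∈ Dstrip d, ‖K x y‖ ≤ M
  Kdiff1 : ∀ y ∈ Dstrip d, DifferentiableOn ℂ (fun x => K x y) (Dstrip d)
  Kdiff2 : ∀ x ∈ Dstrip d, DifferentiableOn ℂ (fun y => K x y) (Dstrip d)
  Kreal : ∀ x y : ℝ, K x y = k (psiDE a b x) (psiDE a b y)
  kbreal : ∀ y : ℝ, kb y = k b (psiDE a b y)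
  Ga : ∀ z ∈ Dstrip d, ‖G z - g a‖ ≤ L * ‖psiDEC a b z - a‖ ^ α
  Gb : ∀ z ∈ Dstrip d, ‖g b - G z‖ ≤ L * ‖b - psiDEC a b z‖ ^ α
  Kb : ∀ z ∈ Dstrip d, ∀ w ∈ Dstrip d, ‖kb w - K z w‖ ≤ L * ‖b - psiDEC a b z‖ ^ α
  kbcont : ContinuousOn (fun s => k b s) (Icc a b)
  ucont : ContinuousOn u (Icc a b)
  ueq : ∀ t ∈ Icc a b, u t = g t + ∫ s in a..t, k t s * u s

section
variable {a b α d : ℝ} {k : ℝ → ℝ → ℂ} {g u : ℝ → ℂ} {G : ℂ → ℂ} {K : ℂ → ℂ → ℂ}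
    {kb : ℂ → ℂ} {L M : ℝ}

lemma DESetup.psi_Icc (S : DESetup a b α d k g u G K kb L M) (x : ℝ) : psiDE a b x ∈ Icc a b :=
  Ioo_subset_Icc_self (psiDE_mem S.hab x)

lemma dew_rpow (ε x β : ℝ) : dew ε x ^ β = dew (β * ε) x := by
  rw [dew, dew, ← Real.exp_mul]; ring_nf

/-- The exact solution continues to a bounded analytic function on the strip that solves the
transformed equation there. -/
lemma DESetup.exists_continuation (S : DESetup a b α d k g u G K kb L M) :
    ∃ U : ℂ → ℂ, DifferentiableOn ℂ U (Dstrip d) ∧ (∃ B, ∀ z ∈ Dstrip d, ‖U z‖ ≤ B) ∧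
      (∀ x : ℝ, U x = u (psiDE a b x)) ∧
      ∀ z ∈ Dstrip d, U z = G z + prim (fun w => K z w * U w * psiD a b w) z := by
  have hκ := deK_pos S.hd S.hdpi
  obtain ⟨C0, hC0, hψ⟩ := exists_psi_bounds a b S.hd S.hdpi
  have hM := S.hM
  have hp : ∀ s : ℝ, ‖psiD a b s‖ ≤ C0 * dew (deK d) s := fun s => by
    simpa using (hψ s (ofReal_mem_Dstrip S.hd s)).1
  have hpc : Continuous fun s : ℝ => psiD a b s := continuousOn_univ.1
    ((differentiableOn_psiD S.hd S.hdpi).continuousOn.comp Complex.continuous_ofReal.continuousOn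
      fun s _ => ofReal_mem_Dstrip S.hd s)
  have H : VolData K (psiD a b) d M (C0 * (4 / deK d)) :=
    { hd := S.hd, hM := S.hM, hP := by positivity, diff1 := S.Kdiff1, diff2 := S.Kdiff2
      bound := S.Kbound, pdiff := differentiableOn_psiD S.hd S.hdpi
      pbound := fun z hz => by
        rw [mul_assoc]
        exact (hψ z hz).1.trans (mul_le_mul_of_nonneg_left (dew_le_inv hκ _) hC0.le) }
  obtain ⟨Mu, hMu⟩ := isCompact_Icc.exists_bound_of_continuousOn S.ucont
  have hMu0 : 0 ≤ Mu := (norm_nonneg _).trans (hMu _ (S.psi_Icc 0))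
  -- `u ∘ ψ` as a function on `ℂ`, constant on vertical lines; only its values on `ℝ` matter
  set W : ℂ → ℂ := fun w => u (psiDE a b w.re) with hW
  have hWc : Continuous W := S.ucont.comp_continuous
    ((continuous_psiDE a b).comp Complex.continuous_re) fun w => S.psi_Icc _
  have hWb : ∀ w, ‖W w‖ ≤ Mu := fun w => hMu _ (S.psi_Icc _)
  have hcK : ∀ z ∈ Dstrip d, Continuous fun s : ℝ => K z s := fun z hz => continuousOn_univ.1
    ((S.Kdiff2 z hz).continuousOn.comp Complex.continuous_ofReal.continuousOn
      fun s _ => ofReal_mem_Dstrip S.hd s)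
  have hcF : ∀ z ∈ Dstrip d, Continuous fun s : ℝ => K z s * W s * psiD a b s := fun z hz =>
    ((hcK z hz).mul (hWc.comp Complex.continuous_ofReal)).mul hpc
  have hbF : ∀ z ∈ Dstrip d, ∀ s : ℝ,
      ‖K z s * W s * psiD a b s‖ ≤ M * Mu * (C0 * dew (deK d) s) := fun z hz s => by
    rw [norm_mul, norm_mul]
    have a1 := S.Kbound z hz s (ofReal_mem_Dstrip S.hd s)
    have a2 := hWb s
    have a3 := hp s
    gcongr
  have hbi : Integrable fun s => M * Mu * (C0 * dew (deK d) s) :=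
    ((integrable_dew hκ).const_mul C0).const_mul (M * Mu)
  have hint : ∀ z ∈ Dstrip d, Integrable fun s : ℝ => K z s * W s * psiD a b s := fun z hz =>
    hbi.mono' (hcF z hz).aestronglyMeasurable (Eventually.of_forall (hbF z hz))
  -- the known solution enters the inhomogeneity through the integral over `(-∞, 0]`, which leaves an
  -- equation with integration along `[0, z]` only
  obtain ⟨U, hUd, hUb, hUeq⟩ := H.exists_fix
    (G := fun z => G z + ∫ s in Iic (0:ℝ), K z s * W s * psiD a b s)
    (B := M + ∫ s in Iic (0:ℝ), M * Mu * (C0 * dew (deK d) s))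
    (S.Gdiff.add (differentiableOn_integral_param (isOpen_Dstrip d)
      (Eventually.of_forall fun s => ((S.Kdiff1 s (ofReal_mem_Dstrip S.hd s)).mul_const _).mul_const _)
      (fun z hz => (hcF z hz).aestronglyMeasurable)
      (Eventually.of_forall fun s z hz => hbF z hz s) hbi.integrableOn))
    (fun z hz => (norm_add_le _ _).trans (add_le_add (S.Gbound z hz)
      (norm_integral_le_of_norm_le hbi.integrableOn (Eventually.of_forall (hbF z hz)))))
  obtain ⟨B, hB⟩ := hUb
  -- the transformed equation on the real line
  have hWeq : ∀ x : ℝ, W x = (G x + ∫ s in Iic (0:ℝ), K x s * W s * psiD a b s) +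
      volT K (psiD a b) W x := by
    intro x
    have hx := ofReal_mem_Dstrip S.hd x
    have e1 : volT K (psiD a b) W x = ∫ s in (0:ℝ)..x, K x s * W s * psiD a b s :=
      ray_integral_real (fun w => K x w * W w * psiD a b w) x
    rw [e1, ← intervalIntegral.integral_Iic_sub_Iic (hint x hx).integrableOn
      (hint x hx).integrableOn]
    have e2 := S.ueq _ (S.psi_Icc x)
    rw [integral_psiDE_Iic S.hab] at e2
    simp only [hW, Complex.ofReal_re, S.Kreal, S.Greal]
    rw [e2]; ring
  have hUreal : ∀ x : ℝ, U x = u (psiDE a b x) := by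
    intro x
    have h0 := H.unique (v := fun w => W w - U w) (B := Mu + B)
      (fun x => (norm_sub_le _ _).trans (add_le_add (hWb _) (hB _ (ofReal_mem_Dstrip S.hd x))))
      (fun x => ?_) x
    · have := sub_eq_zero.1 h0
      simpa [hW] using this.symm
    · have hx := ofReal_mem_Dstrip S.hd x
      have e : volT K (psiD a b) (fun w => W w - U w) x =
          volT K (psiD a b) W x - volT K (psiD a b) U x := by
        have c1 := H.continuousOn_integrand hWc.continuousOn hx
        have c2 := H.continuousOn_integrand hUd.continuousOn hx
        rw [← uIcc_of_le zero_le_one] at c1 c2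
        rw [volT, volT, volT, ← mul_sub,
          ← intervalIntegral.integral_sub c1.intervalIntegrable c2.intervalIntegrable]
        congr 1
        refine intervalIntegral.integral_congr fun τ _ => ?_
        ring
      rw [e]
      have h1 := hWeq x
      have h2 := hUeq x hx
      linear_combination h1 - h2
  refine ⟨U, hUd, ⟨B, hB⟩, hUreal, fun z hz => ?_⟩
  rw [hUeq z hz, prim, volT, add_assoc]
  simp only [hUreal, hW, Complex.ofReal_re]

/-- The continuation approaches the boundary values of the solution double exponentially. -/
theorem DESetup.exists_extension (S : DESetup a b α d k g u G K kb L M) :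
    ∃ (U : ℂ → ℂ) (C : ℝ), 0 < C ∧ DifferentiableOn ℂ U (Dstrip d) ∧
      (∀ z ∈ Dstrip d, ‖U z‖ ≤ C) ∧ (∀ x : ℝ, U x = u (psiDE a b x)) ∧
      (∀ z ∈ Dstrip d, z.re ≤ 0 → ‖U z - u a‖ ≤ C * dew (α * deK d / 2) z.re) ∧
      (∀ z ∈ Dstrip d, 0 ≤ z.re → ‖U z - u b‖ ≤ C * dew (α * deK d / 2) z.re) := by
  have hκ := deK_pos S.hd S.hdpi
  have hα := S.hα
  have hL := S.hL
  have hd := S.hd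
  obtain ⟨C0, hC0, hψ⟩ := exists_psi_bounds a b S.hd S.hdpi
  obtain ⟨U, hUd, ⟨B, hB⟩, hUr, hUeq⟩ := S.exists_continuation
  have hM := S.hM
  have hB0 : 0 ≤ B := (norm_nonneg _).trans (hB _ (ofReal_mem_Dstrip S.hd 0))
  have hF : ∀ z ∈ Dstrip d, DecayOn (fun w => K z w * U w * psiD a b w) d (deK d) (M * B * C0) :=
    fun z hz => ⟨((S.Kdiff2 z hz).mul hUd).mul (differentiableOn_psiD S.hd S.hdpi), fun w hw => by
      rw [norm_mul, norm_mul, mul_assoc (M * B)]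
      have a1 := S.Kbound z hz w hw
      have a2 := hB w hw
      have a3 := (hψ w hw).1
      gcongr⟩
  have hUp : Integrable fun s : ℝ => U s * psiD a b s :=
    DecayOn.integrable_real (F := fun w => U w * psiD a b w) (C := B * C0) hκ S.hd
      ⟨hUd.mul (differentiableOn_psiD S.hd S.hdpi), fun w hw => by
        rw [norm_mul, mul_assoc]
        exact mul_le_mul (hB w hw) (hψ w hw).1 (norm_nonneg _) hB0⟩
  set ε := α * deK d / 2 with hε
  set Q := ∫ s : ℝ, ‖U s * psiD a b s‖ with hQ
  have hQ0 : 0 ≤ Q := integral_nonneg fun _ => norm_nonneg _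
  set D := M * B * C0 * (d + dewInt (deK d / 2)) with hD
  have hD0 : 0 ≤ D := by have := dewInt_nonneg (deK d / 2); positivity
  have hd1 : ∀ x, dew (deK d / 2) x ≤ dew ε x := fun x => dew_anti (by rw [hε]; nlinarith [S.hα1]) x
  have hd2 : ∀ x, dew (α * deK d) x ≤ dew ε x := fun x =>
    dew_anti (by rw [hε]; linarith [mul_pos hα hκ]) x
  -- Hölder bounds turn into decay
  have hH : ∀ (w : ℂ) (x : ℝ), ‖w‖ ≤ C0 * dew (deK d) x → L * ‖w‖ ^ α ≤ L * C0 ^ α * dew ε x := by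
    intro w x hw
    have h1 : ‖w‖ ^ α ≤ (C0 * dew (deK d) x) ^ α := Real.rpow_le_rpow (norm_nonneg _) hw hα.le
    rw [Real.mul_rpow hC0.le (dew_pos _ _).le, dew_rpow] at h1
    have h2 : 0 < C0 ^ α := Real.rpow_pos_of_pos hC0 α
    calc L * ‖w‖ ^ α ≤ L * (C0 ^ α * dew (α * deK d) x) := by gcongr
      _ ≤ L * (C0 ^ α * dew ε x) := by have := hd2 x; gcongr
      _ = _ := by ring
  set A := L * C0 ^ α with hA
  have hA0 : 0 ≤ A := mul_nonneg hL (Real.rpow_pos_of_pos hC0 α).le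
  refine ⟨U, B + A + A * Q + D + 1, by positivity, hUd, fun z hz => (hB z hz).trans ?_, hUr,
    fun z hz h0 => ?_, fun z hz h0 => ?_⟩
  · have := mul_nonneg hA0 hQ0
    linarith
  · have e1 : u a = g a := by simpa using S.ueq a ⟨le_rfl, S.hab.le⟩
    have h1 := (S.Ga z hz).trans (hH _ _ ((hψ z hz).2.1 h0))
    have h2 := norm_prim_le hκ hd (hF z hz) hz h0
    have h3 : D * dew (deK d / 2) z.re ≤ D * dew ε z.re := mul_le_mul_of_nonneg_left (hd1 _) hD0
    have h4 := mul_nonneg hA0 hQ0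
    have h5 := dew_pos ε z.re
    rw [e1, hUeq z hz, show ∀ p : ℂ, G z + p - g a = (G z - g a) + p from fun p => by ring]
    refine (norm_add_le _ _).trans ?_
    nlinarith [mul_nonneg h4 h5.le, mul_nonneg hB0 h5.le]
  · have e1 : u b = g b + ∫ s : ℝ, kb s * (U s * psiD a b s) := by
      rw [S.ueq b ⟨S.hab.le, le_rfl⟩, integral_psiDE S.hab]
      simp only [hUr, S.kbreal, mul_assoc]
    have h1 := (S.Gb z hz).trans (hH _ _ ((hψ z hz).2.2 h0))
    rw [norm_sub_rev] at h1
    have h2 := norm_prim_sub_integral_le hκ hd (hF z hz) hz h0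
    have h3 : D * dew (deK d / 2) z.re ≤ D * dew ε z.re := mul_le_mul_of_nonneg_left (hd1 _) hD0
    have hkc : Continuous fun s : ℝ => kb s := by
      simp only [S.kbreal]
      exact S.kbcont.comp_continuous (continuous_psiDE a b) S.psi_Icc
    obtain ⟨Mk, hMk⟩ := isCompact_Icc.exists_bound_of_continuousOn S.kbcont
    have hik : Integrable fun s : ℝ => kb s * (U s * psiD a b s) := by
      refine (hUp.norm.const_mul Mk).mono' (hkc.aestronglyMeasurable.mul hUp.1)
        (Eventually.of_forall fun s => ?_)
      rw [norm_mul]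
      exact mul_le_mul_of_nonneg_right (by rw [S.kbreal]; exact hMk _ (S.psi_Icc s)) (norm_nonneg _)
    have hiK := (hF z hz).integrable_real hκ hd
    have h6 : ‖(∫ s : ℝ, K z s * U s * psiD a b s) - ∫ s : ℝ, kb s * (U s * psiD a b s)‖ ≤
        A * dew ε z.re * Q := by
      rw [← integral_sub hiK hik, hQ, ← integral_const_mul]
      refine norm_integral_le_of_norm_le (hUp.norm.const_mul _) (Eventually.of_forall fun s => ?_)
      have h7 := (S.Kb z hz s (ofReal_mem_Dstrip hd s)).trans (hH _ _ ((hψ z hz).2.2 h0))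
      rw [norm_sub_rev] at h7
      rw [mul_assoc (K z s), ← sub_mul, norm_mul]
      exact mul_le_mul_of_nonneg_right h7 (norm_nonneg _)
    have h5 := dew_pos ε z.re
    set I1 := ∫ s : ℝ, K z s * U s * psiD a b s
    set I2 := ∫ s : ℝ, kb s * (U s * psiD a b s)
    rw [e1, hUeq z hz, show ∀ p : ℂ, G z + p - (g b + I2) = (G z - g b) + ((p - I1) + (I1 - I2))
      from fun p => by ring]
    refine (norm_add_le _ _).trans ((add_le_add_right (norm_add_le _ _) _).trans ?_)
    nlinarith [mul_nonneg hB0 h5.le]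

end

/-! ### Stability of the discrete system -/

lemma sum_zidx {E : Type*} [AddCommMonoid E] (N : ℕ) (f : ℤ → E) :
    ∑ i : Fin (2 * N + 1), f (zidx N i) = ∑ j ∈ Finset.Icc (-(N:ℤ)) (N:ℤ), f j := by
  refine Finset.sum_bij (fun i _ => zidx N i) (fun i _ => ?_) (fun i _ j _ hij => ?_)
    (fun j hj => ?_) fun i _ => rfl
  · rw [Finset.mem_Icc, zidx]
    have := i.2
    constructor <;> omega
  · rw [zidx, zidx] at hij
    apply Fin.ext; omega
  · rw [Finset.mem_Icc] at hj
    exact ⟨⟨(j + N).toNat, by omega⟩, Finset.mem_univ _, by rw [zidx]; simp; omega⟩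

/-- Discrete Gronwall inequality. -/
lemma gronwall_fin {n : ℕ} {c x : Fin n → ℝ} {A : ℝ} (hA : 0 ≤ A) (hc : ∀ i, 0 ≤ c i)
    (h : ∀ i, x i ≤ A + ∑ j, if j < i then c j * x j else 0) (i : Fin n) :
    x i ≤ A * Real.exp (∑ j, c j) := by
  have key : ∀ m : ℕ, m ≤ n → A + (∑ j : Fin n, if (j:ℕ) < m then c j * x j else 0) ≤
      A * Real.exp (∑ j : Fin n, if (j:ℕ) < m then c j else 0) := by
    intro m
    induction m with
    | zero => intro _; simp
    | succ m ih =>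
      intro hm
      have ih := ih (by omega)
      have hsplit : ∀ w : Fin n → ℝ, (∑ j : Fin n, if (j:ℕ) < m + 1 then w j else 0) =
          (∑ j : Fin n, if (j:ℕ) < m then w j else 0) + w ⟨m, hm⟩ := by
        intro w
        have e : w ⟨m, hm⟩ = ∑ j : Fin n, if j = ⟨m, hm⟩ then w j else 0 := by simp
        rw [e, ← Finset.sum_add_distrib]
        refine Finset.sum_congr rfl fun j _ => ?_
        by_cases h1 : (j:ℕ) < m
        · rw [if_pos (by omega), if_pos h1, if_neg (fun h2 => by simp [h2] at h1), add_zero]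
        · by_cases h2 : (j:ℕ) = m
          · rw [if_pos (by omega), if_neg h1, if_pos (Fin.ext h2), zero_add]
          · rw [if_neg (by omega), if_neg h1, if_neg (fun h3 => h2 (by simp [h3])), zero_add]
      rw [hsplit, hsplit, Real.exp_add]
      have h3 := h ⟨m, hm⟩
      have h4 : x ⟨m, hm⟩ ≤ A + ∑ j : Fin n, if (j:ℕ) < m then c j * x j else 0 := h3
      set P := ∑ j : Fin n, if (j:ℕ) < m then c j * x j else 0
      set E := Real.exp (∑ j : Fin n, if (j:ℕ) < m then c j else 0)
      set cm := c ⟨m, hm⟩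
      have h5 : 0 ≤ cm := hc _
      have h6 := Real.add_one_le_exp cm
      have hE : 0 < E := Real.exp_pos _
      calc A + (P + cm * x ⟨m, hm⟩) ≤ (A + P) * (cm + 1) := by nlinarith
        _ ≤ A * E * (cm + 1) := by gcongr
        _ ≤ A * E * Real.exp cm := by gcongr
        _ = _ := by ring
  have h1 : x i ≤ A + ∑ j : Fin n, if (j:ℕ) < i then c j * x j else 0 := h i
  refine (h1.trans (key i i.2.le)).trans ?_
  gcongr with j
  split_ifs
  · exact le_rfl
  · exact hc j

section
variable {a b α d : ℝ} {k : ℝ → ℝ → ℂ} {g u : ℝ → ℂ} {G : ℂ → ℂ} {K : ℂ → ℂ → ℂ}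
    {kb : ℂ → ℂ} {L M : ℝ}

lemma DESetup.norm_k_le (S : DESetup a b α d k g u G K kb L M) (x y : ℝ) :
    ‖k (psiDE a b x) (psiDE a b y)‖ ≤ M := by
  rw [← S.Kreal]
  exact S.Kbound _ (ofReal_mem_Dstrip S.hd x) _ (ofReal_mem_Dstrip S.hd y)

/-- The inverse of `I - V_n` is bounded in the maximum norm as soon as `h √N` is small: up to an
error of that size `V_n` is strictly lower triangular with summable columns. -/
theorem DESetup.stability (S : DESetup a b α d k g u G K kb L M) :
    ∃ η > 0, ∃ Cs > 0, ∀ N : ℕ, 1 ≤ N → ∀ h : ℝ, 0 < h → h ≤ 1 → h * √N ≤ η →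
      ∀ v f : Fin (2 * N + 1) → ℂ, (1 - VnDE a b h N k).mulVec v = f →
      ∀ F : ℝ, (∀ i, ‖f i‖ ≤ F) → ∀ i, ‖v i‖ ≤ Cs * F := by
  have hκ := deK_pos S.hd S.hdpi
  have hM := S.hM
  obtain ⟨C0, hC0, hψ⟩ := exists_psi_bounds a b S.hd S.hdpi
  obtain ⟨C1, hC1, hsum⟩ := exists_sum_inv_abs_le
  have hp : ∀ s : ℝ, deriv (psiDE a b) s ≤ C0 * dew (deK d) s := fun s => by
    have h1 := (hψ s (ofReal_mem_Dstrip S.hd s)).1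
    rw [(psiD_ofReal a b s).1, Complex.norm_real, Complex.ofReal_re, Real.norm_eq_abs,
      abs_of_pos (deriv_psiDE_pos S.hab s)] at h1
    exact h1
  set E := Real.exp (M * (C0 * (8 / deK d))) with hE
  have hE0 : 0 < E := Real.exp_pos _
  refine ⟨1 / (2 * E * (M * C0 * C1)), by positivity, 2 * E, by positivity, ?_⟩
  intro N hN h hh hh1 hη v f hvf F hF i
  have hF0 : 0 ≤ F := (norm_nonneg _).trans (hF i)
  set c : Fin (2 * N + 1) → ℝ := fun j => M * (deriv (psiDE a b) (zidx N j * h) * h) with hc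
  have hc0 : ∀ j, 0 ≤ c j := fun j => by
    have := deriv_psiDE_pos S.hab (zidx N j * h)
    positivity
  have hcle : ∀ j, c j ≤ M * C0 * h := fun j => by
    have h1 := hp (zidx N j * h)
    have h2 := dew_le_one hκ.le (zidx N j * h)
    rw [hc, mul_assoc]
    have h3 : deriv (psiDE a b) (zidx N j * h) ≤ C0 := by nlinarith
    simp only
    gcongr
  have hcsum : ∑ j, c j ≤ M * (C0 * (8 / deK d)) := by
    rw [hc, ← Finset.mul_sum]
    gcongr
    rw [sum_zidx N (fun j => deriv (psiDE a b) (j * h) * h)]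
    have h1 := sum_dew_le hκ hh hh1 N
    calc _ ≤ ∑ j ∈ Finset.Icc (-(N:ℤ)) (N:ℤ), C0 * dew (deK d) (j * h) * h := by
          gcongr with j; exact hp _
      _ = C0 * (h * ∑ j ∈ Finset.Icc (-(N:ℤ)) (N:ℤ), dew (deK d) (j * h)) := by
          rw [Finset.mul_sum, Finset.mul_sum]
          exact Finset.sum_congr rfl fun j _ => by ring
      _ ≤ C0 * (h * (8 / deK d / h)) := by gcongr
      _ = C0 * (8 / deK d) := by field_simp
  -- the entries of the matrix
  have hVij : ∀ i j, ‖VnDE a b h N k i j‖ ≤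
      (if j < i then c j else 0) + M * C0 * h * (2 / (1 + |((zidx N i - zidx N j : ℤ) : ℝ)|)) := by
    intro i j
    have h1 := abs_deltaM_sub_le (zidx N i - zidx N j)
    have h2 : |deltaM (zidx N i - zidx N j)| ≤ (if j < i then 1 else 0) +
        2 / (1 + |((zidx N i - zidx N j : ℤ) : ℝ)|) := by
      have e : (0 < zidx N i - zidx N j) ↔ j < i := by
        rw [zidx, zidx, Fin.lt_def]; omega
      simp only [e] at h1
      have h3 := abs_le.1 h1
      have h4 : (0:ℝ) ≤ if j < i then 1 else 0 := by split_ifs <;> norm_num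
      rw [abs_le]; constructor <;> linarith
    have h3 : ‖VnDE a b h N k i j‖ ≤ c j * |deltaM (zidx N i - zidx N j)| := by
      rw [VnDE, Matrix.of_apply, norm_mul, norm_mul, norm_mul, Complex.norm_real, Complex.norm_real,
        Complex.norm_real, Real.norm_eq_abs, Real.norm_eq_abs, Real.norm_eq_abs,
        abs_of_pos (deriv_psiDE_pos S.hab _), abs_of_pos hh, hc]
      have h4 := S.norm_k_le (zidx N i * h) (zidx N j * h)
      have h5 := deriv_psiDE_pos S.hab (zidx N j * h)
      simp only [tDE]
      rw [mul_assoc ‖_‖]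
      gcongr
    calc _ ≤ c j * |deltaM (zidx N i - zidx N j)| := h3
      _ ≤ c j * ((if j < i then 1 else 0) + 2 / (1 + |((zidx N i - zidx N j : ℤ) : ℝ)|)) :=
          mul_le_mul_of_nonneg_left h2 (hc0 j)
      _ = (if j < i then c j else 0) + c j * (2 / (1 + |((zidx N i - zidx N j : ℤ) : ℝ)|)) := by
          rw [mul_add, mul_ite, mul_one, mul_zero]
      _ ≤ _ := by gcongr; exact hcle j
  have hvi : ∀ i, ‖v i‖ ≤ (F + M * C0 * C1 * (h * √N) * ‖v‖) +
      ∑ j, if j < i then c j * ‖v j‖ else 0 := by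
    intro i
    have e : v i = f i + ∑ j, VnDE a b h N k i j * v j := by
      rw [← hvf, Matrix.sub_mulVec, Matrix.one_mulVec, Pi.sub_apply]
      simp [Matrix.mulVec, dotProduct]
    have h1 : ‖∑ j, VnDE a b h N k i j * v j‖ ≤ (∑ j, if j < i then c j * ‖v j‖ else 0) +
        M * C0 * h * (∑ j, 2 / (1 + |((zidx N i - zidx N j : ℤ) : ℝ)|)) * ‖v‖ := by
      refine (norm_sum_le _ _).trans ?_
      rw [Finset.mul_sum, Finset.sum_mul, ← Finset.sum_add_distrib]
      refine Finset.sum_le_sum fun j _ => ?_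
      rw [norm_mul]
      refine (mul_le_mul_of_nonneg_right (hVij i j) (norm_nonneg _)).trans ?_
      rw [add_mul, ite_mul, zero_mul]
      gcongr
      exact norm_le_pi_norm v j
    have h2 := hsum N hN (zidx N i)
    rw [← sum_zidx N (fun j => 2 / (1 + |((zidx N i - j : ℤ) : ℝ)|))] at h2
    have h3 : M * C0 * h * (∑ j, 2 / (1 + |((zidx N i - zidx N j : ℤ) : ℝ)|)) * ‖v‖ ≤
        M * C0 * h * (C1 * √N) * ‖v‖ := by gcongr
    have h4 := norm_add_le (f i) (∑ j, VnDE a b h N k i j * v j)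
    rw [← e] at h4
    have h5 := hF i
    linarith
  have hv : ‖v‖ ≤ (F + M * C0 * C1 * (h * √N) * ‖v‖) * E := by
    have hA : 0 ≤ F + M * C0 * C1 * (h * √N) * ‖v‖ := by positivity
    refine (pi_norm_le_iff_of_nonneg (by positivity)).2 fun i => ?_
    refine (gronwall_fin (x := fun i => ‖v i‖) hA hc0 hvi i).trans ?_
    gcongr
    exact Real.exp_le_exp.2 hcsum
  have h6 : M * C0 * C1 * (h * √N) * ‖v‖ * E ≤ ‖v‖ / 2 := by
    calc M * C0 * C1 * (h * √N) * ‖v‖ * E ≤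
        M * C0 * C1 * (1 / (2 * E * (M * C0 * C1))) * ‖v‖ * E := by gcongr
      _ = ‖v‖ / 2 := by field_simp
  have h7 := norm_le_pi_norm v i
  nlinarith

lemma isUnit_of_stable {N : ℕ} {h Cs : ℝ}
    (hs : ∀ v f : Fin (2 * N + 1) → ℂ, (1 - VnDE a b h N k).mulVec v = f →
      ∀ F : ℝ, (∀ i, ‖f i‖ ≤ F) → ∀ i, ‖v i‖ ≤ Cs * F) : IsUnit (1 - VnDE a b h N k) := by
  rw [← Matrix.mulVec_injective_iff_isUnit]
  intro v w hvw
  have h1 := hs (v - w) 0 (by rw [Matrix.mulVec_sub]; exact sub_eq_zero.2 hvw) 0 (by simp)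
  funext i
  have h2 := h1 i
  rw [mul_zero] at h2
  exact sub_eq_zero.1 (norm_le_zero_iff.1 h2)

lemma Jfun_node (i j : ℤ) {h : ℝ} (hh : 0 < h) : Jfun j h (i * h) = h * deltaM (i - j) := by
  rw [Jfun, deltaM]
  congr 4
  push_cast
  field_simp

/-- The error of the DE-Sinc-Nyström solution at the nodes. -/
theorem DESetup.nodal_error (S : DESetup a b α d k g u G K kb L M) :
    ∃ Cq > 0, ∀ (N : ℕ) (h Cs : ℝ), 0 < h → h ≤ 1 → h ≤ d → 0 < Cs →
      (∀ v f : Fin (2 * N + 1) → ℂ, (1 - VnDE a b h N k).mulVec v = f →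
        ∀ F : ℝ, (∀ i, ‖f i‖ ≤ F) → ∀ i, ‖v i‖ ≤ Cs * F) →
      ∀ uvec : Fin (2 * N + 1) → ℂ, (1 - VnDE a b h N k).mulVec uvec = gnDE a b h N g →
      ∀ i, ‖u (tDE a b h (zidx N i)) - uvec i‖ ≤
        Cs * (Cq * (h * Real.exp (-(Real.pi * d / h)) + dew (deK d / 2) (N * h))) := by
  have hκ := deK_pos S.hd S.hdpi
  have hM := S.hM
  have hd := S.hd
  obtain ⟨C0, hC0, hψ⟩ := exists_psi_bounds a b S.hd S.hdpi
  obtain ⟨U, B, hB0, hUd, hB, hUr, -, -⟩ := S.exists_extension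
  have hI := dewInt_nonneg (deK d)
  refine ⟨M * B * C0 * dewInt (deK d) * 2 * (4 / d) + 4 * (M * B * C0) * (16 / deK d),
    by positivity, ?_⟩
  intro N h Cs hh hh1 hhd hCs hs uvec huv
  refine hs (fun i => u (tDE a b h (zidx N i)) - uvec i) _ rfl _ fun i => ?_
  set x : ℝ := zidx N i * h with hx
  have hxm := ofReal_mem_Dstrip hd x
  have hF : DecayOn (fun w => K x w * U w * psiD a b w) d (deK d) (M * B * C0) :=
    ⟨((S.Kdiff2 x hxm).mul hUd).mul (differentiableOn_psiD S.hd S.hdpi), fun w hw => by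
      rw [norm_mul, norm_mul, mul_assoc (M * B)]
      have a1 := S.Kbound x hxm w hw
      have a2 := hB w hw
      have a3 := (hψ w hw).1
      gcongr⟩
  have hq := hF.quad hκ hd hh hh1 hhd N x
  -- the residual is the quadrature error
  have e1 : (1 - VnDE a b h N k).mulVec (fun i => u (tDE a b h (zidx N i)) - uvec i) i =
      (∫ y in Iic x, K x y * U y * psiD a b y) -
      ∑ j ∈ Finset.Icc (-(N:ℤ)) (N:ℤ), (Jfun j h x : ℂ) * (K x (j * h) * U (j * h) * psiD a b (j * h)) := by
    have e2 : (fun i => u (tDE a b h (zidx N i)) - uvec i) =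
        (fun i => u (tDE a b h (zidx N i))) - uvec := rfl
    rw [e2, Matrix.mulVec_sub, huv, Matrix.sub_mulVec, Matrix.one_mulVec, Pi.sub_apply, Pi.sub_apply,
      gnDE]
    have e3 := S.ueq _ (S.psi_Icc x)
    rw [integral_psiDE_Iic S.hab] at e3
    have e4 : (VnDE a b h N k).mulVec (fun i => u (tDE a b h (zidx N i))) i =
        ∑ j ∈ Finset.Icc (-(N:ℤ)) (N:ℤ),
          (Jfun j h x : ℂ) * (K x (j * h) * U (j * h) * psiD a b (j * h)) := by
      rw [← sum_zidx N (fun j =>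
        (Jfun j h x : ℂ) * (K x (j * h) * U (j * h) * psiD a b (j * h))), Matrix.mulVec, dotProduct]
      refine Finset.sum_congr rfl fun j _ => ?_
      have e5 : ((zidx N j : ℤ) : ℂ) * (h : ℂ) = ((zidx N j * h : ℝ) : ℂ) := by push_cast; rfl
      rw [VnDE, Matrix.of_apply, e5, S.Kreal, hUr, (psiD_ofReal a b _).1, hx, Jfun_node _ _ hh]
      simp only [tDE]
      push_cast
      ring
    rw [e4]
    simp only [S.Kreal, hUr]
    simp only [tDE, ← hx]
    rw [e3]
    ring
  rw [e1]
  refine hq.trans ?_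
  have hT := Real.exp_pos (-(Real.pi * d / h))
  have hw := dew_pos (deK d / 2) (N * h)
  have e6 : 4 * h * (M * B * C0) * (16 / deK d / h * dew (deK d / 2) (N * h)) =
      4 * (M * B * C0) * (16 / deK d) * dew (deK d / 2) (N * h) := by field_simp
  rw [e6]
  set T := Real.exp (-(Real.pi * d / h))
  set w := dew (deK d / 2) (N * h)
  have p1 : 0 ≤ M * B * C0 * dewInt (deK d) * 2 * (4 / d) := by positivity
  have p2 : 0 ≤ 4 * (M * B * C0) * (16 / deK d) := by positivity
  nlinarith [mul_nonneg p1 hw.le, mul_nonneg p2 (mul_nonneg hh.le hT.le)]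

end

/-! ### The collocation error for a given mesh size -/

/-- The Nyström function takes the values of the solution vector at the nodes. -/
lemma uNDEf_node {a b h : ℝ} (hab : a < b) (hh : 0 < h) {N : ℕ} {k : ℝ → ℝ → ℂ} {g : ℝ → ℂ}
    {uvec : Fin (2 * N + 1) → ℂ} (huv : (1 - VnDE a b h N k).mulVec uvec = gnDE a b h N g)
    (i : Fin (2 * N + 1)) : uNDEf a b h N k g uvec (tDE a b h (zidx N i)) = uvec i := by
  have h1 := congrFun huv i
  rw [Matrix.sub_mulVec, Matrix.one_mulVec, Pi.sub_apply, gnDE, Matrix.mulVec, dotProduct] at h1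
  rw [uNDEf, ← h1, sub_add_eq_add_sub, sub_eq_iff_eq_add]
  congr 1
  refine Finset.sum_congr rfl fun j _ => ?_
  have hm := psiDE_mem hab (zidx N i * h)
  have e : JDEext a b h (zidx N j) (tDE a b h (zidx N i)) = h * deltaM (zidx N i - zidx N j) := by
    rw [JDEext, tDE, if_neg (not_le.2 hm.1), if_neg (not_le.2 hm.2), phiDE_psiDE hab,
      Jfun_node _ _ hh]
  rw [e, VnDE, Matrix.of_apply]
  push_cast
  ring

lemma abs_omA_le {a b t : ℝ} (hab : a < b) (ht : t ∈ Icc a b) : |omA a b t| ≤ 1 := by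
  have := sub_pos.2 hab
  rw [omA, abs_of_nonneg (div_nonneg (by linarith [ht.2]) this.le), div_le_one this]
  linarith [ht.1]

lemma abs_omB_le {a b t : ℝ} (hab : a < b) (ht : t ∈ Icc a b) : |omB a b t| ≤ 1 := by
  have := sub_pos.2 hab
  rw [omB, abs_of_nonneg (div_nonneg (by linarith [ht.1]) this.le), div_le_one this]
  linarith [ht.2]

section
variable {a b α d : ℝ} {k : ℝ → ℝ → ℂ} {g u : ℝ → ℂ} {G : ℂ → ℂ} {K : ℂ → ℂ → ℂ}
    {kb : ℂ → ℂ} {L M : ℝ}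

/-- After subtraction of the linear interpolant of its end values, the pulled back exact solution
decays double exponentially on the strip; the end values are attained at the same rate. -/
lemma DESetup.exists_decay (S : DESetup a b α d k g u G K kb L M) :
    ∃ (f : ℂ → ℂ) (C : ℝ), 0 < C ∧ DecayOn f d (α * deK d / 2) C ∧
      (∀ x : ℝ, f x = u (psiDE a b x) - u a * (omA a b (psiDE a b x) : ℂ)
        - u b * (omB a b (psiDE a b x) : ℂ)) ∧
      (∀ x : ℝ, x ≤ 0 → ‖u (psiDE a b x) - u a‖ ≤ C * dew (α * deK d / 2) x) ∧
      (∀ x : ℝ, 0 ≤ x → ‖u (psiDE a b x) - u b‖ ≤ C * dew (α * deK d / 2) x) := by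
  have hκ := deK_pos S.hd S.hdpi
  have hba : 0 < b - a := sub_pos.2 S.hab
  have hbac : ((b : ℂ) - a) ≠ 0 := by
    rw [← Complex.ofReal_sub]; exact Complex.ofReal_ne_zero.2 hba.ne'
  have hεκ : α * deK d / 2 ≤ deK d := by nlinarith [S.hα, S.hα1]
  obtain ⟨C0, hC0, hψ⟩ := exists_psi_bounds a b S.hd S.hdpi
  obtain ⟨U, B, hB0, hUd, hB, hUr, hUa, hUb⟩ := S.exists_extension
  have hpd := differentiableOn_psiDEC (a := a) (b := b) S.hd S.hdpi
  have nba : ‖((b : ℂ) - a)‖ = b - a := by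
    rw [← Complex.ofReal_sub, Complex.norm_real, Real.norm_eq_abs, abs_of_pos hba]
  set D := ‖u a - u b‖ * (C0 / (b - a)) with hD
  have hD0 : 0 ≤ D := by positivity
  refine ⟨fun z => U z - u a * ((b - psiDEC a b z) / (b - a)) - u b * ((psiDEC a b z - a) / (b - a)),
    B + D, by positivity, ⟨?_, fun z hz => ?_⟩, fun x => ?_, fun x hx => ?_, fun x hx => ?_⟩
  · exact ((hUd.sub (((hpd.const_sub _).div_const _).const_mul _))).sub
      (((hpd.sub_const _).div_const _).const_mul _)
  · have hw := dew_anti hεκ z.re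
    have hw0 := dew_pos (α * deK d / 2) z.re
    rcases le_total z.re 0 with h0 | h0
    · have e : U z - u a * ((b - psiDEC a b z) / (b - a)) - u b * ((psiDEC a b z - a) / (b - a)) =
          (U z - u a) + (u a - u b) * ((psiDEC a b z - a) / (b - a)) := by
        generalize psiDEC a b z = p
        field_simp
        ring
      have h1 := (hψ z hz).2.1 h0
      have h2 : ‖(u a - u b) * ((psiDEC a b z - a) / (b - a))‖ ≤ D * dew (α * deK d / 2) z.re := by
        rw [norm_mul, norm_div, nba, hD, mul_assoc, div_mul_eq_mul_div]
        gcongr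
        exact h1.trans (by gcongr)
      simp only [e]
      rw [add_mul]
      exact (norm_add_le _ _).trans (add_le_add (hUa z hz h0) h2)
    · have e : U z - u a * ((b - psiDEC a b z) / (b - a)) - u b * ((psiDEC a b z - a) / (b - a)) =
          (U z - u b) - (u a - u b) * ((b - psiDEC a b z) / (b - a)) := by
        generalize psiDEC a b z = p
        field_simp
        ring
      have h1 := (hψ z hz).2.2 h0
      have h2 : ‖(u a - u b) * ((b - psiDEC a b z) / (b - a))‖ ≤ D * dew (α * deK d / 2) z.re := by
        rw [norm_mul, norm_div, nba, hD, mul_assoc, div_mul_eq_mul_div]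
        gcongr
        exact h1.trans (by gcongr)
      simp only [e]
      rw [add_mul]
      exact (norm_sub_le _ _).trans (add_le_add (hUb z hz h0) h2)
  · simp only [hUr, psiDEC_ofReal, omA, omB]
    push_cast
    ring
  · have h1 := hUa x (ofReal_mem_Dstrip S.hd x) hx
    rw [hUr, Complex.ofReal_re] at h1
    refine h1.trans ?_
    have := dew_pos (α * deK d / 2) x
    gcongr
    linarith
  · have h1 := hUb x (ofReal_mem_Dstrip S.hd x) hx
    rw [hUr, Complex.ofReal_re] at h1
    refine h1.trans ?_
    have := dew_pos (α * deK d / 2) x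
    gcongr
    linarith

/-- The error of `P_N w` against the exact solution, for any `w` that is close to it at the
nodes: interpolation error plus the nodal error amplified by the Lebesgue constant of the Sinc
interpolation, for which `O(√N)` suffices. -/
theorem DESetup.proj_error (S : DESetup a b α d k g u G K kb L M) :
    ∃ Cp > 0, ∀ (N : ℕ) (h e : ℝ) (w : ℝ → ℂ), 1 ≤ N → 0 < h → h ≤ 1 → h ≤ d →
      (∀ j ∈ Finset.Icc (-(N:ℤ)) (N:ℤ), ‖u (tDE a b h j) - w (tDE a b h j)‖ ≤ e) →
      ∀ t ∈ Icc a b, ‖u t - PNDE a b h N w t‖ ≤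
        Cp * (Real.exp (-(Real.pi * d / h)) + 1 / h * dew (α * deK d / 4) (N * h) +
          √N * (e + dew (α * deK d / 4) (N * h))) := by
  have hκ := deK_pos S.hd S.hdpi
  have hd := S.hd
  have hα := S.hα
  have hε : 0 < α * deK d / 2 := by positivity
  have hI := dewInt_nonneg (α * deK d / 2)
  obtain ⟨f, C, hC, hf, hfr, hfa, hfb⟩ := S.exists_decay
  obtain ⟨C1, hC1, hleb⟩ := exists_sum_abs_sincF_le
  set A1 := C * dewInt (α * deK d / 2) * (4 / d) with hA1
  set A2 := C * (16 / (α * deK d / 2)) with hA2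
  set A3 := (2 + 3 * C1) * (1 + C) with hA3
  have hA10 : 0 ≤ A1 := by positivity
  have hA20 : 0 ≤ A2 := by positivity
  have hA30 : 0 < A3 := by positivity
  refine ⟨A1 + A2 + A3, by positivity, ?_⟩
  intro N h e w hN hh hh1 hhd hw t ht
  set T := Real.exp (-(Real.pi * d / h)) with hT
  have hT0 : 0 < T := Real.exp_pos _
  set ω := dew (α * deK d / 4) (N * h) with hω
  have hω0 : 0 < ω := dew_pos _ _
  have hNm : (N:ℤ) ∈ Finset.Icc (-(N:ℤ)) (N:ℤ) := by simp
  have hNm' : -(N:ℤ) ∈ Finset.Icc (-(N:ℤ)) (N:ℤ) := by simp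
  have he0 : 0 ≤ e := (norm_nonneg _).trans (hw _ hNm)
  have hsq : 1 ≤ √(N:ℝ) := by
    rw [Real.one_le_sqrt]; exact_mod_cast hN
  have hωε : dew (α * deK d / 2) (N * h) ≤ ω := dew_anti (by linarith) _
  set ρ := e + C * ω with hρ
  have hρ0 : 0 ≤ ρ := by positivity
  have hρle : ρ ≤ (1 + C) * (e + ω) := by nlinarith
  have heρ : e ≤ ρ := by rw [hρ]; nlinarith
  have ra : ‖u a - w (tDE a b h (-(N:ℤ)))‖ ≤ ρ := by
    have h1 := hfa (((-(N:ℤ) : ℤ) : ℝ) * h) (by push_cast; nlinarith [Nat.cast_nonneg (α := ℝ) N])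
    have h2 := hw _ hNm'
    have h3 : dew (α * deK d / 2) (((-(N:ℤ) : ℤ) : ℝ) * h) ≤ ω := by
      refine le_trans (dew_le_of_abs_le hε.le ?_) hωε
      push_cast; rw [neg_mul, abs_neg]
    have h4 := norm_sub_le_norm_sub_add_norm_sub (u a) (u (tDE a b h (-(N:ℤ))))
      (w (tDE a b h (-(N:ℤ))))
    rw [norm_sub_rev (u a)  (u (tDE a b h (-(N:ℤ))))] at h4
    simp only [tDE] at h4 h2 ⊢
    nlinarith
  have rb : ‖u b - w (tDE a b h (N:ℤ))‖ ≤ ρ := by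
    have h1 := hfb (((N:ℤ) : ℝ) * h) (by positivity)
    have h2 := hw _ hNm
    have h3 : dew (α * deK d / 2) (((N:ℤ) : ℝ) * h) ≤ ω := by
      push_cast; exact hωε
    have h4 := norm_sub_le_norm_sub_add_norm_sub (u b) (u (tDE a b h (N:ℤ)))
      (w (tDE a b h (N:ℤ)))
    rw [norm_sub_rev (u b)  (u (tDE a b h (N:ℤ)))] at h4
    simp only [tDE] at h4 h2 ⊢
    nlinarith
  have hρfin : ρ * (2 + 3 * C1 * √N) ≤ A3 * (√N * (e + ω)) := by
    have h1 : 2 + 3 * C1 * √N ≤ (2 + 3 * C1) * √N := by nlinarith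
    calc ρ * (2 + 3 * C1 * √N) ≤ ((1 + C) * (e + ω)) * ((2 + 3 * C1) * √N) := by gcongr
      _ = _ := by rw [hA3]; ring
  have hfin : A1 * T + A2 * (1 / h * ω) + ρ * (2 + 3 * C1 * √N) ≤
      (A1 + A2 + A3) * (T + 1 / h * ω + √N * (e + ω)) := by
    have p1 : 0 ≤ 1 / h * ω := by positivity
    have p2 : 0 ≤ √N * (e + ω) := by positivity
    nlinarith [mul_nonneg hA10 p1, mul_nonneg hA10 p2, mul_nonneg hA20 hT0.le, mul_nonneg hA20 p2,
      mul_nonneg hA30.le hT0.le, mul_nonneg hA30.le p1]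
  have hend : ρ ≤ A1 * T + A2 * (1 / h * ω) + ρ * (2 + 3 * C1 * √N) := by
    have p1 : 0 ≤ A1 * T := by positivity
    have p2 : 0 ≤ A2 * (1 / h * ω) := by positivity
    have p3 : 0 ≤ ρ * (3 * C1 * √N) := by positivity
    nlinarith
  refine le_trans ?_ hfin
  rw [PNDE]
  by_cases hta : t ≤ a
  · rw [if_pos hta, le_antisymm hta ht.1]
    exact ra.trans hend
  rw [if_neg hta]
  by_cases htb : b ≤ t
  · rw [if_pos htb, le_antisymm ht.2 htb]
    exact rb.trans hend
  rw [if_neg htb]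
  have hto : t ∈ Ioo a b := ⟨not_le.1 hta, not_le.1 htb⟩
  set x := phiDE a b t with hx
  have hxt : psiDE a b x = t := psiDE_phiDE hto
  have hint := hf.interp hε hd hh hh1 hhd N x
  set wa := w (tDE a b h (-(N:ℤ)))
  set wb := w (tDE a b h (N:ℤ))
  set R : ℤ → ℂ := fun j => (u (tDE a b h j) - w (tDE a b h j)) -
    (u a - wa) * (omA a b (tDE a b h j) : ℂ) - (u b - wb) * (omB a b (tDE a b h j) : ℂ) with hR
  have key : u t - (wa * (omA a b t : ℂ) + wb * (omB a b t : ℂ) +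
      ∑ j ∈ Finset.Icc (-(N:ℤ)) (N:ℤ), (w (tDE a b h j) - wa * (omA a b (tDE a b h j) : ℂ) -
        wb * (omB a b (tDE a b h j) : ℂ)) * (sincF j h x : ℂ)) =
      (f x - ∑ j ∈ Finset.Icc (-(N:ℤ)) (N:ℤ), (sincF j h x : ℂ) * f (j * h)) +
      (u a - wa) * (omA a b t : ℂ) + (u b - wb) * (omB a b t : ℂ) +
      ∑ j ∈ Finset.Icc (-(N:ℤ)) (N:ℤ), R j * (sincF j h x : ℂ) := by
    have e1 : ∑ j ∈ Finset.Icc (-(N:ℤ)) (N:ℤ), R j * (sincF j h x : ℂ) =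
        (∑ j ∈ Finset.Icc (-(N:ℤ)) (N:ℤ), (sincF j h x : ℂ) * f (j * h)) -
        ∑ j ∈ Finset.Icc (-(N:ℤ)) (N:ℤ), (w (tDE a b h j) - wa * (omA a b (tDE a b h j) : ℂ) -
        wb * (omB a b (tDE a b h j) : ℂ)) * (sincF j h x : ℂ) := by
      rw [← Finset.sum_sub_distrib]
      refine Finset.sum_congr rfl fun j _ => ?_
      have e5 : (j : ℂ) * (h : ℂ) = ((j * h : ℝ) : ℂ) := by push_cast; rfl
      rw [e5, hfr, hR]
      simp only [tDE]
      ring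
    rw [e1, hfr, hxt]
    ring
  rw [key]
  have b1 : ‖(u a - wa) * (omA a b t : ℂ)‖ ≤ ρ := by
    rw [norm_mul, Complex.norm_real, Real.norm_eq_abs]
    exact (mul_le_mul ra (abs_omA_le S.hab ht) (abs_nonneg _) hρ0).trans_eq (mul_one _)
  have b2 : ‖(u b - wb) * (omB a b t : ℂ)‖ ≤ ρ := by
    rw [norm_mul, Complex.norm_real, Real.norm_eq_abs]
    exact (mul_le_mul rb (abs_omB_le S.hab ht) (abs_nonneg _) hρ0).trans_eq (mul_one _)
  have b3 : ‖∑ j ∈ Finset.Icc (-(N:ℤ)) (N:ℤ), R j * (sincF j h x : ℂ)‖ ≤ 3 * ρ * (C1 * √N) := by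
    have h1 : ∀ j ∈ Finset.Icc (-(N:ℤ)) (N:ℤ), ‖R j‖ ≤ 3 * ρ := fun j hj => by
      have c1 := S.psi_Icc (j * h)
      have c2 : ‖(u a - wa) * (omA a b (tDE a b h j) : ℂ)‖ ≤ ρ := by
        rw [norm_mul, Complex.norm_real, Real.norm_eq_abs]
        exact (mul_le_mul ra (abs_omA_le S.hab c1) (abs_nonneg _) hρ0).trans_eq (mul_one _)
      have c3 : ‖(u b - wb) * (omB a b (tDE a b h j) : ℂ)‖ ≤ ρ := by
        rw [norm_mul, Complex.norm_real, Real.norm_eq_abs]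
        exact (mul_le_mul rb (abs_omB_le S.hab c1) (abs_nonneg _) hρ0).trans_eq (mul_one _)
      have c4 := hw j hj
      rw [hR]
      refine (norm_sub_le _ _).trans ?_
      have c5 := norm_sub_le (u (tDE a b h j) - w (tDE a b h j))
        ((u a - wa) * (omA a b (tDE a b h j) : ℂ))
      linarith
    refine (norm_sum_le _ _).trans ?_
    calc _ ≤ ∑ j ∈ Finset.Icc (-(N:ℤ)) (N:ℤ), 3 * ρ * |sincF j h x| := by
          refine Finset.sum_le_sum fun j hj => ?_
          rw [norm_mul, Complex.norm_real, Real.norm_eq_abs]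
          exact mul_le_mul_of_nonneg_right (h1 j hj) (abs_nonneg _)
      _ ≤ 3 * ρ * (C1 * √N) := by
          rw [← Finset.mul_sum]
          exact mul_le_mul_of_nonneg_left (hleb N hN h hh x) (by positivity)
  have e2 : α * deK d / 2 / 2 = α * deK d / 4 := by ring
  have e3 : C * (16 / (α * deK d / 2) / h * dew (α * deK d / 2 / 2) (N * h)) =
      A2 * (1 / h * ω) := by
    rw [e2, hA2, ← hω]; ring
  rw [e3] at hint
  refine (norm_add_le _ _).trans ?_
  refine (add_le_add (norm_add₃_le) b3).trans ?_
  linarith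

end

/-! ### The mesh size `h = log(2dN/α)/N` and the final estimate -/

lemma tendsto_log_mul_nat {q : ℝ} (hq : 0 < q) :
    Tendsto (fun N : ℕ => Real.log (q * N)) atTop atTop :=
  Real.tendsto_log_atTop.comp (tendsto_natCast_atTop_atTop.const_mul_atTop hq)

lemma eventually_log_mul_le {q η : ℝ} (hq : 0 < q) (hη : 0 < η) :
    ∀ᶠ N : ℕ in atTop, Real.log (q * N) ≤ η * √N := by
  have h1 := (isLittleO_log_rpow_atTop (r := 1 / 2) (by norm_num)).bound
    (c := η / √q) (by positivity)
  have h2 := (tendsto_natCast_atTop_atTop.const_mul_atTop hq).eventually h1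
  filter_upwards [h2] with N hN
  rw [← Real.sqrt_eq_rpow, Real.norm_eq_abs, Real.norm_eq_abs, abs_of_nonneg (Real.sqrt_nonneg _),
    Real.sqrt_mul hq.le, ← mul_assoc, div_mul_cancel₀ _ (Real.sqrt_pos.2 hq).ne'] at hN
  exact (le_abs_self _).trans hN

/-- With the DE mesh size, the truncation terms are negligible against `exp(-πd/h)`. -/
lemma eventually_mesh {α d η : ℝ} (hα : 0 < α) (hd : 0 < d) (hdpi : d < Real.pi / 2) (hη : 0 < η) :
    ∃ C > 0, ∀ᶠ N : ℕ in atTop, 0 < hstepDE α d N ∧ 1 / hstepDE α d N ≤ N ∧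
      hstepDE α d N * √N ≤ η ∧
      N * dew (α * deK d / 4) (N * hstepDE α d N) ≤
        C * Real.exp (-(Real.pi * d / hstepDE α d N)) := by
  have hκ := deK_pos hd hdpi
  set c := deK d * d / 4 with hc
  have hc0 : 0 < c := by positivity
  have hq : 0 < 2 * d / α := by positivity
  refine ⟨2 / c, by positivity, ?_⟩
  filter_upwards [eventually_ge_atTop 1, (tendsto_log_mul_nat hq).eventually_ge_atTop 1,
    (tendsto_log_mul_nat hq).eventually_ge_atTop (2 * Real.pi * d / c),
    eventually_log_mul_le hq hη] with N hN1 hl1 hl2 hl3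
  have hN0 : (0:ℝ) < N := by exact_mod_cast hN1
  have e : 2 * d * N / α = 2 * d / α * N := by ring
  have hE : Real.exp (Real.log (2 * d / α * N)) = 2 * d / α * N := Real.exp_log (by positivity)
  rw [hstepDE, e]
  set l := Real.log (2 * d / α * N) with hl
  have hl0 : 0 < l := by linarith
  have e2 : (N:ℝ) * (l / N) = l := by field_simp
  refine ⟨by positivity, ?_, ?_, ?_⟩
  · rw [one_div_div]
    exact div_le_self hN0.le hl1
  · rw [div_mul_eq_mul_div, div_le_iff₀ hN0]
    calc l * √N ≤ η * √N * √N := by gcongr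
      _ = η * N := by rw [mul_assoc, Real.mul_self_sqrt hN0.le]
  · rw [e2, dew]
    have h1 : d / α * N ≤ Real.cosh l := by
      rw [Real.cosh_eq, hE]
      have := Real.exp_pos (-l)
      have e3 : d / α * N = 2 * d / α * N / 2 := by ring
      rw [e3]
      linarith
    have h2 : c * N ≤ α * deK d / 4 * Real.cosh l := by
      calc c * N = α * deK d / 4 * (d / α * N) := by rw [hc]; field_simp
        _ ≤ _ := by gcongr
    have h3 : Real.pi * d / (l / N) ≤ c * N / 2 := by
      rw [div_le_iff₀ hc0] at hl2
      rw [div_div_eq_mul_div, div_le_iff₀ hl0]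
      nlinarith
    have h4 : (N:ℝ) * Real.exp (-(c * N / 2)) ≤ 2 / c := by
      rw [Real.exp_neg, ← div_eq_mul_inv, div_le_div_iff₀ (Real.exp_pos _) hc0]
      have := Real.add_one_le_exp (c * N / 2)
      linarith
    calc (N:ℝ) * Real.exp (-(α * deK d / 4 * Real.cosh l)) ≤ N * Real.exp (-(c * N)) := by gcongr
      _ = N * Real.exp (-(c * N / 2)) * Real.exp (-(c * N / 2)) := by
          rw [mul_assoc, ← Real.exp_add]; ring_nf
      _ ≤ 2 / c * Real.exp (-(Real.pi * d / (l / N))) := by gcongr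

/-- The convergence theorem in terms of `h`. Every term of the estimates above is at most a constant
times `T = exp(-πd/h)`; the nodal error, amplified by `√N`, uses `h √N ≤ 1`. -/
theorem DESetup.convergence {a b α d : ℝ} {k : ℝ → ℝ → ℂ} {g u : ℝ → ℂ} {G : ℂ → ℂ}
    {K : ℂ → ℂ → ℂ} {kb : ℂ → ℂ} {L M : ℝ} (S : DESetup a b α d k g u G K kb L M) :
    ∃ C : ℝ, ∀ᶠ N : ℕ in atTop, IsUnit (1 - VnDE a b (hstepDE α d N) N k) ∧
      ∀ uvec : Fin (2*N+1) → ℂ,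
        Matrix.mulVec (1 - VnDE a b (hstepDE α d N) N k) uvec = gnDE a b (hstepDE α d N) N g →
        ∀ t ∈ Set.Icc a b,
          ‖u t - PNDE a b (hstepDE α d N) N (uNDEf a b (hstepDE α d N) N k g uvec) t‖
            ≤ C * Real.exp (-(Real.pi * d / hstepDE α d N)) := by
  have hκ := deK_pos S.hd S.hdpi
  have hd := S.hd
  obtain ⟨η, hη, Cs, hCs, hstab⟩ := S.stability
  obtain ⟨Cq, hCq, hnod⟩ := S.nodal_error
  obtain ⟨Cp, hCp, hproj⟩ := S.proj_error
  obtain ⟨C2, hC2, hmesh⟩ := eventually_mesh S.hα S.hd S.hdpi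
    (lt_min hη (lt_min one_pos hd) : 0 < min η (min 1 d))
  refine ⟨Cp * (1 + C2 + (Cs * Cq * (1 + C2) + C2)), ?_⟩
  filter_upwards [eventually_ge_atTop 1, hmesh] with N hN hm
  obtain ⟨hh, hhN, hsN, hw⟩ := hm
  set h := hstepDE α d N with hh_def
  have hN0 : (1:ℝ) ≤ N := by exact_mod_cast hN
  have hsq : 1 ≤ √(N:ℝ) := by rwa [Real.one_le_sqrt]
  have hsqN : √(N:ℝ) ≤ N := by
    nlinarith [Real.mul_self_sqrt (zero_le_one.trans hN0)]
  rw [le_min_iff, le_min_iff] at hsN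
  obtain ⟨hs1, hs2, hs3⟩ := hsN
  have hhs : h ≤ h * √N := le_mul_of_one_le_right hh.le hsq
  have hst := hstab N hN h hh (hhs.trans hs2) hs1
  refine ⟨isUnit_of_stable hst, fun uvec huv t ht => ?_⟩
  have hn := hnod N h Cs hh (hhs.trans hs2) (hhs.trans hs3) hCs hst uvec huv
  set T := Real.exp (-(Real.pi * d / h)) with hT
  have hT0 : 0 < T := Real.exp_pos _
  set ω := dew (α * deK d / 4) (N * h) with hω
  have hω0 : 0 < ω := dew_pos _ _
  have hωle : dew (deK d / 2) (N * h) ≤ ω := dew_anti (by nlinarith [S.hα1]) _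
  set e := Cs * (Cq * (h * T + ω)) with he
  have hp := hproj N h e (uNDEf a b h N k g uvec) hN hh (hhs.trans hs2) (hhs.trans hs3) (by
    intro j hj
    rw [Finset.mem_Icc] at hj
    obtain ⟨i, rfl⟩ : ∃ i : Fin (2 * N + 1), zidx N i = j :=
      ⟨⟨(j + N).toNat, by omega⟩, by rw [zidx]; simp; omega⟩
    rw [uNDEf_node S.hab hh huv]
    exact (hn i).trans (by rw [he]; gcongr)) t ht
  refine hp.trans ?_
  rw [mul_assoc Cp]
  have q1 : 1 / h * ω ≤ C2 * T := le_trans (by gcongr) hw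
  have q2 : √N * ω ≤ C2 * T := le_trans (by gcongr) hw
  have q3 : √N * e ≤ Cs * Cq * (1 + C2) * T := by
    calc √N * e = Cs * Cq * (h * √N * T + √N * ω) := by rw [he]; ring
      _ ≤ Cs * Cq * (1 * T + C2 * T) := by gcongr
      _ = _ := by ring
  gcongr
  linarith

/-- convergence of the DE-Sinc-collocation method. -/
theorem DE_Sinc_collocation_convergence
    (a b α d : ℝ) (hab : a < b) (hα : 0 < α) (hα1 : α ≤ 1)
    (hd : 0 < d) (hdpi : d < Real.pi/2)
    (k : ℝ → ℝ → ℂ) (g : ℝ → ℂ) (u : ℝ → ℂ)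
    (hHDE : ∃ (G : ℂ → ℂ) (K : ℂ → ℂ → ℂ) (ka kb : ℂ → ℂ) (L : ℝ),
      DifferentiableOn ℂ G (Dstrip d) ∧
      (∃ M : ℝ, ∀ z ∈ Dstrip d, ‖G z‖ ≤ M) ∧
      (∀ x : ℝ, G (x : ℂ) = g (psiDE a b x)) ∧
      (∃ M : ℝ, ∀ x ∈ Dstrip d, ∀ y ∈ Dstrip d, ‖K x y‖ ≤ M) ∧
      (∀ y ∈ Dstrip d, DifferentiableOn ℂ (fun x => K x y) (Dstrip d)) ∧
      (∀ x ∈ Dstrip d, DifferentiableOn ℂ (fun y => K x y) (Dstrip d)) ∧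
      (∀ x y : ℝ, K (x : ℂ) (y : ℂ) = k (psiDE a b x) (psiDE a b y)) ∧
      (∀ y : ℝ, ka (y : ℂ) = k a (psiDE a b y)) ∧
      (∀ y : ℝ, kb (y : ℂ) = k b (psiDE a b y)) ∧
      (∀ ζ ∈ Dstrip d, ∀ η ∈ Dstrip d,
        ‖G ζ - g a‖ ≤ L * ‖psiDEC a b ζ - (a : ℂ)‖ ^ α ∧
        ‖g b - G ζ‖ ≤ L * ‖(b : ℂ) - psiDEC a b ζ‖ ^ α ∧
        ‖K ζ η - ka η‖ ≤ L * ‖psiDEC a b ζ - (a : ℂ)‖ ^ α ∧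
        ‖kb η - K ζ η‖ ≤ L * ‖(b : ℂ) - psiDEC a b ζ‖ ^ α))
    (hg_cont : ContinuousOn g (Set.Icc a b))
    (hk_cont1 : ∀ s ∈ Set.Icc a b, ContinuousOn (fun t => k t s) (Set.Icc a b))
    (hk_cont2 : ∀ t ∈ Set.Icc a b, ContinuousOn (fun s => k t s) (Set.Icc a b))
    (hu_cont : ContinuousOn u (Set.Icc a b))
    (hu_eq : ∀ t ∈ Set.Icc a b, u t = g t + ∫ s in a..t, k t s * u s) :
    ∃ N₀ : ℕ, 0 < N₀ ∧
      (∀ N : ℕ, N₀ ≤ N → IsUnit (1 - VnDE a b (hstepDE α d N) N k)) ∧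
      ∃ C : ℝ, ∀ N : ℕ, N₀ ≤ N → ∀ uvec : Fin (2*N+1) → ℂ,
        Matrix.mulVec (1 - VnDE a b (hstepDE α d N) N k) uvec = gnDE a b (hstepDE α d N) N g →
        ∀ t ∈ Set.Icc a b,
          ‖u t - PNDE a b (hstepDE α d N) N (uNDEf a b (hstepDE α d N) N k g uvec) t‖
            ≤ C * Real.exp (-(Real.pi * d * N) / Real.log (2*d*N/α)) := by
  obtain ⟨G, K, ka, kb, L, hGd, ⟨M1, hM1⟩, hGr, ⟨M2, hM2⟩, hK1, hK2, hKr, -, hkbr, hH⟩ := hHDE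
  have h0 : (0 : ℂ) ∈ Dstrip d := ofReal_mem_Dstrip hd 0
  have hLL : ∀ x : ℝ, 0 ≤ x → L * x ^ α ≤ |L| * x ^ α := fun x hx =>
    mul_le_mul_of_nonneg_right (le_abs_self L) (Real.rpow_nonneg hx α)
  have S : DESetup a b α d k g u G K kb |L| (max (max M1 M2) 1) :=
    { hab := hab
      hα := hα
      hα1 := hα1
      hd := hd
      hdpi := hdpi
      hM := lt_max_of_lt_right one_pos
      hL := abs_nonneg L
      Gdiff := hGd
      Gbound := fun z hz => (hM1 z hz).trans (le_max_of_le_left (le_max_left _ _))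
      Greal := hGr
      Kbound := fun x hx y hy => (hM2 x hx y hy).trans (le_max_of_le_left (le_max_right _ _))
      Kdiff1 := hK1
      Kdiff2 := hK2
      Kreal := hKr
      kbreal := hkbr
      Ga := fun z hz => (hH z hz 0 h0).1.trans (hLL _ (norm_nonneg _))
      Gb := fun z hz => (hH z hz 0 h0).2.1.trans (hLL _ (norm_nonneg _))
      Kb := fun z hz w hw => (hH z hz w hw).2.2.2.trans (hLL _ (norm_nonneg _))
      kbcont := hk_cont2 b ⟨hab.le, le_rfl⟩
      ucont := hu_cont
      ueq := hu_eq }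
  obtain ⟨C, hC⟩ := S.convergence
  obtain ⟨N₁, hN₁⟩ := eventually_atTop.1 hC
  refine ⟨max N₁ 1, by simp, fun N hN => (hN₁ N (le_of_max_le_left hN)).1, C,
    fun N hN uvec huv t ht => ?_⟩
  have h1 := (hN₁ N (le_of_max_le_left hN)).2 uvec huv t ht
  have e : -(Real.pi * d / hstepDE α d N) = -(Real.pi * d * N) / Real.log (2*d*N/α) := by
    rw [hstepDE, div_div_eq_mul_div, neg_div]
  rwa [e] at h1

end

end SincVolterra
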